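/- arXiv:math/0302017 — 7 statements merged into one kernel-verified Lean document; each statement's English description precedes it below -/
import Mathlib

section
/- Let p be a prime and let R and S be commutative Noetherian local pro-p domains, both of characteristic zero and both of Krull dimension strictly greater than 2. Then for every natural number n and every subgroup G of GL_n(R) there exist a natural number m and an injective group homomorphism from G into GL_m(S). -/
namespace LinTr
open PowerSeries

/-- Evaluation of power series at an element of an ideal for which the target is complete. -/
theorem exists_evalHom {B R : Type*} [CommRing B] [CommRing R] (I : Ideal R) [IsAdicComplete I R]
    (φ : B →+* R) (x : R) (hx : x ∈ I) :
    ∃ ψ : PowerSeries B →+* R, (∀ b, ψ (C b) = φ b) ∧ ψ X = x ∧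
      ∀ n f, ψ f - ∑ i ∈ Finset.range n, φ (coeff i f) * x ^ i ∈ I ^ n := by
  have key : ∀ (n : ℕ) (q : Polynomial B), (∀ d < n, q.coeff d = 0) →
      q.eval₂ φ x ∈ I ^ n := by
    intro n q hq
    obtain ⟨r, rfl⟩ := Polynomial.X_pow_dvd_iff.2 hq
    rw [Polynomial.eval₂_mul, Polynomial.eval₂_X_pow]
    exact Ideal.mul_mem_right _ _ (Ideal.pow_mem_pow hx n)
  have key2 : ∀ (n : ℕ) (q r : Polynomial B), (∀ d < n, q.coeff d = r.coeff d) →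
      Ideal.Quotient.mk (I ^ n) (q.eval₂ φ x) = Ideal.Quotient.mk (I ^ n) (r.eval₂ φ x) := by
    intro n q r h
    rw [Ideal.Quotient.eq, ← Polynomial.eval₂_sub]
    exact key n _ fun d hd => by simp [h d hd]
  let F : (n : ℕ) → PowerSeries B →+* R ⧸ I ^ n := fun n =>
    { toFun := fun f => Ideal.Quotient.mk (I ^ n) ((trunc n f).eval₂ φ x)
      map_one' := by
        rw [key2 n (trunc n 1) 1, Polynomial.eval₂_one, map_one]
        intro d hd
        rw [coeff_trunc, if_pos hd, PowerSeries.coeff_one, Polynomial.coeff_one]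
        
      map_zero' := by simp
      map_add' := fun f g => by
        rw [map_add, Polynomial.eval₂_add, map_add]
      map_mul' := fun f g => by
        rw [← map_mul, ← Polynomial.eval₂_mul]
        apply key2
        intro d hd
        rw [coeff_trunc, if_pos hd, PowerSeries.coeff_mul, Polynomial.coeff_mul]
        refine Finset.sum_congr rfl fun ij hij => ?_
        have := Finset.HasAntidiagonal.mem_antidiagonal.1 hij
        rw [coeff_trunc, if_pos (by omega), coeff_trunc, if_pos (by omega)] }
  have hF : ∀ {m n : ℕ} (hle : m ≤ n),
      (Ideal.Quotient.factorPow I hle).comp (F n) = F m := by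
    intro m n hle
    ext f
    change Ideal.Quotient.mk (I ^ m) ((trunc n f).eval₂ φ x) =
      Ideal.Quotient.mk (I ^ m) ((trunc m f).eval₂ φ x)
    apply key2
    intro d hd
    rw [coeff_trunc, if_pos (by omega), coeff_trunc, if_pos hd]
  have h3 : ∀ n f, IsAdicComplete.liftRingHom I F hF f -
      ∑ i ∈ Finset.range n, φ (coeff i f) * x ^ i ∈ I ^ n := by
    intro n f
    rw [← Ideal.Quotient.eq, IsAdicComplete.mk_liftRingHom]
    change Ideal.Quotient.mk (I ^ n) ((trunc n f).eval₂ φ x) = _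
    rw [eval₂_trunc_eq_sum_range]
  have haus : ∀ a b : R, (∀ n, a - b ∈ I ^ n) → a = b := by
    intro a b h
    rw [IsHausdorff.eq_iff_smodEq (I := I)]
    intro n
    rw [SModEq.sub_mem]
    simpa using h n
  refine ⟨IsAdicComplete.liftRingHom I F hF, fun b => ?_, ?_, h3⟩
  · apply haus
    intro n
    rcases n with _ | n
    · simp
    have := h3 (n+1) (C b)
    rwa [Finset.sum_range_succ', Finset.sum_eq_zero, zero_add, coeff_zero_C, pow_zero, mul_one]
      at this
    intro i _
    simp
  · apply haus
    intro n
    rcases n with _ | n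
    · simp
    have h := h3 (n+2) X
    rw [Finset.sum_eq_single 1] at h
    · rw [coeff_one_X, map_one, one_mul, pow_one] at h
      exact Ideal.pow_le_pow_right (by omega) h
    · intro i _ hi
      simp [coeff_X, hi]
    · simp

theorem haus_eq {R : Type*} [CommRing R] (I : Ideal R) [IsHausdorff I R] {a b : R}
    (h : ∀ n, a - b ∈ I ^ n) : a = b := by
  rw [IsHausdorff.eq_iff_smodEq (I := I)]
  intro n
  rw [SModEq.sub_mem]
  simpa using h n

theorem exists_padicHom (p : ℕ) [Fact p.Prime] {R : Type*} [CommRing R] (I : Ideal R)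
    [IsAdicComplete I R] (hp : (p : R) ∈ I) : Nonempty (ℤ_[p] →+* R) := by
  have hz : ∀ n, ((p ^ n : ℕ) : R ⧸ I ^ n) = 0 := by
    intro n
    have : (((p ^ n : ℕ) : R) : R ⧸ I ^ n) = 0 := by
      rw [Ideal.Quotient.eq_zero_iff_mem]
      push_cast
      exact Ideal.pow_mem_pow hp n
    simpa using this
  let F : (n : ℕ) → ℤ_[p] →+* R ⧸ I ^ n := fun n =>
    (ZMod.castHom (m := ringChar (R ⧸ I ^ n)) (ringChar.dvd (hz n)) (R ⧸ I ^ n)).comp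
      (PadicInt.toZModPow n)
  have hF : ∀ {m n : ℕ} (hle : m ≤ n),
      (Ideal.Quotient.factorPow I hle).comp (F n) = F m := by
    intro m n hle
    have h1 := PadicInt.zmod_cast_comp_toZModPow (p := p) m n hle
    have h2 : (Ideal.Quotient.factorPow I hle).comp
        (ZMod.castHom (m := ringChar (R ⧸ I ^ n)) (ringChar.dvd (hz n)) (R ⧸ I ^ n)) =
        (ZMod.castHom (m := ringChar (R ⧸ I ^ m)) (ringChar.dvd (hz m)) (R ⧸ I ^ m)).comp
        (ZMod.castHom (pow_dvd_pow p hle) (ZMod (p ^ m))) := RingHom.ext_zmod _ _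
    ext a
    have h3 := RingHom.congr_fun h1 a
    have h4 := RingHom.congr_fun h2 (PadicInt.toZModPow n a)
    refine h4.trans ?_
    exact congrArg _ h3
  exact ⟨IsAdicComplete.liftRingHom I F hF⟩
end LinTr

namespace LinTr
open PowerSeries

theorem exists_blowup (D : Type*) [CommRing D] :
    ∃ ψ : PowerSeries (PowerSeries D) →+* PowerSeries (Polynomial D), Function.Injective ψ := by
  obtain ⟨ψ, -, -, h⟩ := exists_evalHom (Ideal.span {(X : PowerSeries (Polynomial D))})
    (PowerSeries.map (Polynomial.C : D →+* Polynomial D)) (X * C (Polynomial.X : Polynomial D))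
    (Ideal.mul_mem_right _ _ (Ideal.mem_span_singleton_self _))
  have key : ∀ F : PowerSeries (PowerSeries D), ∀ a j,
      (coeff (a + j) (ψ F)).coeff j = coeff a (coeff j F) := by
    intro F a j
    have h1 := h (a + j + 1) F
    rw [Ideal.span_singleton_pow, Ideal.mem_span_singleton, X_pow_dvd_iff] at h1
    have h2 := h1 (a + j) (by omega)
    rw [map_sub, sub_eq_zero] at h2
    rw [h2, map_sum, Polynomial.finsetSum_coeff, Finset.sum_eq_single j]
    · rw [mul_pow, mul_left_comm, ← map_pow, coeff_X_pow_mul', if_pos (by omega), coeff_mul_C]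
      simp
    · intro i _ hi
      rw [mul_pow, mul_left_comm, ← map_pow, coeff_X_pow_mul']
      split_ifs
      · rw [coeff_mul_C]
        simp [Polynomial.coeff_X_pow, hi.symm]
      · simp
    · intro hj
      exact absurd (Finset.mem_range.2 (by omega)) hj
  refine ⟨ψ, fun F G hFG => ?_⟩
  ext j a
  rw [← key, ← key, hFG]

theorem exists_transc (D : Type*) [CommRing D] [IsDomain D] :
    ∃ ψ : Polynomial (Polynomial D) →+* PowerSeries D, Function.Injective ψ := by
  classical
  let g : PowerSeries D := PowerSeries.mk fun n => if ∃ k : ℕ, n = (k + 1).factorial then 1 else 0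
  let gk : ℕ → Polynomial D := fun k => trunc ((k + 1).factorial + 1) g
  have hgk : ∀ k, ((X : PowerSeries D) ^ (k + 2).factorial) ∣ ((gk k : PowerSeries D) - g) := by
    intro k
    rw [X_pow_dvd_iff]
    intro m hm
    rw [map_sub, Polynomial.coeff_coe, coeff_trunc]
    split_ifs with h1
    · simp
    · simp only [g, coeff_mk]
      rw [if_neg, sub_zero]
      rintro ⟨l, rfl⟩
      have h2 : (k + 1).factorial < (l + 1).factorial := by omega
      have h3 := lt_of_not_ge fun h => absurd (Nat.factorial_le h) (not_le.2 h2)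
      have h4 : (k + 2).factorial ≤ (l + 1).factorial := Nat.factorial_le (by omega)
      omega
  have hdeg : ∀ k, (gk k).natDegree ≤ (k + 1).factorial := by
    intro k
    exact Nat.lt_succ_iff.1 (natDegree_trunc_lt g _)
  have hinj : Function.Injective gk := by
    have hlt : ∀ k l, k < l → gk k ≠ gk l := by
      intro k l hkl h
      have h1 := congrArg (fun q => Polynomial.coeff q (l + 1).factorial) h
      have h2 : (k + 1).factorial < (l + 1).factorial :=
        (Nat.factorial_lt (by omega)).2 (by omega)
      simp only [gk, coeff_trunc] at h1
      rw [if_neg (by omega), if_pos (by omega)] at h1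
      simp [g] at h1
      exact h1 l rfl
    intro k l h
    by_contra hne
    rcases lt_or_gt_of_ne hne with h' | h'
    · exact hlt _ _ h' h
    · exact hlt _ _ h' h.symm
  refine ⟨Polynomial.eval₂RingHom Polynomial.coeToPowerSeries.ringHom g, ?_⟩
  rw [injective_iff_map_eq_zero]
  intro P hP
  rw [Polynomial.coe_eval₂RingHom] at hP
  obtain ⟨N, hN⟩ : ∃ N, ∀ i ∈ Finset.range (P.natDegree + 1), (P.coeff i).natDegree ≤ N :=
    ⟨_, fun i hi => Finset.le_sup (f := fun i => (P.coeff i).natDegree) hi⟩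
  have hroot : ∀ k, P.natDegree + N ≤ k → P.IsRoot (gk k) := by
    intro k hk
    have hd : (P.eval (gk k)).natDegree < (k + 2).factorial := by
      have : (P.eval (gk k)).natDegree ≤ N + P.natDegree * (k + 1).factorial := by
        rw [Polynomial.eval_eq_sum_range]
        refine Polynomial.natDegree_sum_le_of_forall_le _ _ fun i hi => ?_
        refine Polynomial.natDegree_mul_le.trans (add_le_add (hN i hi) ?_)
        refine Polynomial.natDegree_pow_le.trans ?_
        exact Nat.mul_le_mul (Nat.lt_succ_iff.1 (Finset.mem_range.1 hi)) (hdeg k)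
      refine this.trans_lt ?_
      rw [Nat.factorial_succ (k + 1)]
      have := Nat.factorial_pos (k + 1)
      nlinarith
    have hdvd : ((X : PowerSeries D) ^ (k + 2).factorial) ∣ ((P.eval (gk k) : Polynomial D) : PowerSeries D) := by
      have h1 := Polynomial.sub_dvd_eval_sub (gk k : PowerSeries D) g
        (P.map Polynomial.coeToPowerSeries.ringHom)
      rw [Polynomial.eval_map, Polynomial.eval_map, hP, sub_zero] at h1
      have h2 : Polynomial.eval₂ Polynomial.coeToPowerSeries.ringHom (gk k : PowerSeries D) P =
          ((P.eval (gk k) : Polynomial D) : PowerSeries D) :=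
        Polynomial.eval₂_at_apply (Polynomial.coeToPowerSeries.ringHom (R := D)) (gk k)
      rw [h2] at h1
      exact (hgk k).trans h1
    rw [X_pow_dvd_iff] at hdvd
    change P.eval (gk k) = 0
    ext m
    by_cases hm : m < (k + 2).factorial
    · have := hdvd m hm
      rwa [Polynomial.coeff_coe] at this
    · rw [Polynomial.coeff_eq_zero_of_natDegree_lt (by omega), Polynomial.coeff_zero]
  refine Polynomial.eq_zero_of_infinite_isRoot P ?_
  refine Set.Infinite.mono (s := Set.image gk (Set.Ici (P.natDegree + N))) ?_ ?_
  · rintro _ ⟨k, hk, rfl⟩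
    exact hroot k hk
  · exact (Set.Ici_infinite _).image hinj.injOn

theorem map_inj {A B : Type*} [CommRing A] [CommRing B] (f : A →+* B)
    (hf : Function.Injective f) : Function.Injective (PowerSeries.map f) := by
  intro x y h
  ext n
  apply hf
  simpa using congrArg (coeff n) h

/-- Power series in three variables embed into power series in two variables. -/
theorem exists_three_two (D : Type*) [CommRing D] [IsDomain D] :
    ∃ ψ : PowerSeries (PowerSeries (PowerSeries D)) →+* PowerSeries (PowerSeries D),
      Function.Injective ψ := by
  obtain ⟨f, hf⟩ := exists_blowup D
  obtain ⟨g, hg⟩ := exists_blowup (Polynomial D)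
  obtain ⟨h, hh⟩ := exists_transc D
  exact ⟨(PowerSeries.map h).comp (g.comp (PowerSeries.map f)),
    (map_inj h hh).comp (hg.comp (map_inj f hf))⟩
end LinTr

namespace LinTr
open Polynomial

universe u v w

theorem alg_setup (A : Type u) (R : Type v) [CommRing A] [IsDomain A] [CharZero A] [CommRing R]
    [IsDomain R] [Algebra A R] [FaithfulSMul A R] [Module.Finite A R] :
    ∃ (F U V : A[X]) (δ c : A) (g : R → A[X]), F.Monic ∧ F.natDegree ≠ 0 ∧ δ ≠ 0 ∧ c ≠ 0 ∧
      U * F + V * derivative F = C δ ∧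
      ∀ (N : Type w) [Field N] (ε : A →+* N), Function.Injective ε → ∀ y : N, F.eval₂ ε y = 0 →
        ∃ Ψ : R →+* N, Function.Injective Ψ ∧ (∀ a, Ψ (algebraMap A R a) = ε a) ∧
          ∀ r, ε c * Ψ r = (g r).eval₂ ε y := by
  classical
  let K := FractionRing A
  let L := FractionRing R
  have : FaithfulSMul A L := inferInstance
  let : Algebra K L := FractionRing.liftAlgebra A L
  have : IsScalarTower A K L := FractionRing.isScalarTower_liftAlgebra A L
  have : FiniteDimensional K L := by
    have : IsLocalization (Algebra.algebraMapSubmonoid R (nonZeroDivisors A)) L := by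
      exact Algebra.IsAlgebraic.instIsLocalizationAlgebraMapSubmonoidNonZeroDivisors A R L
    exact Module.Finite.of_isLocalization A R (nonZeroDivisors A)
  have : CharZero K := charZero_of_injective_algebraMap (IsFractionRing.injective A K)
  let pb := Field.powerBasisOfFiniteOfSeparable K L
  set f := minpoly K pb.gen with hf
  have hgenint : IsIntegral K pb.gen := IsIntegral.of_finite K _
  have hfm : f.Monic := minpoly.monic hgenint
  obtain ⟨⟨b, hb⟩, hbf⟩ := IsLocalization.exist_integer_multiples_of_finset (nonZeroDivisors A)
    (Finset.image f.coeff (Finset.range (f.natDegree + 1)))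
  have hb0 : b ≠ 0 := nonZeroDivisors.ne_zero hb
  have hbK : algebraMap A K b ≠ 0 := by
    simpa using (map_ne_zero_iff _ (IsFractionRing.injective A K)).2 hb0
  have hlift : f.scaleRoots (algebraMap A K b) ∈ lifts (algebraMap A K) := by
    rw [lifts_iff_coeff_lifts]
    intro n
    rw [coeff_scaleRoots]
    rcases lt_trichotomy n f.natDegree with hn | hn | hn
    · obtain ⟨a, ha⟩ := hbf (f.coeff n) (Finset.mem_image_of_mem _ (Finset.mem_range.2 (by omega)))
      obtain ⟨k, hk⟩ : ∃ k, f.natDegree - n = k + 1 := ⟨f.natDegree - n - 1, by omega⟩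
      refine ⟨a * b ^ k, ?_⟩
      rw [map_mul, ha, hk, map_pow, pow_succ, Algebra.smul_def]
      ring
    · subst hn
      exact ⟨1, by simp [hfm.coeff_natDegree]⟩
    · exact ⟨0, by simp [coeff_eq_zero_of_natDegree_lt hn]⟩
  obtain ⟨F, hF1, hF2, hF3⟩ := lifts_and_natDegree_eq_and_monic hlift
    ((monic_scaleRoots_iff _).2 hfm)
  set θ : L := algebraMap K L (algebraMap A K b) * pb.gen with hθ
  have hθint : IsIntegral K θ := IsIntegral.of_finite K _
  have hFθ : aeval θ (F.map (algebraMap A K)) = 0 := by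
    rw [hF1]
    exact scaleRoots_aeval_eq_zero (minpoly.aeval K pb.gen)
  have hmin : minpoly K θ = F.map (algebraMap A K) := by
    symm
    apply Polynomial.eq_of_monic_of_dvd_of_natDegree_le (minpoly.monic hθint) (hF3.map _)
      (minpoly.dvd K θ hFθ)
    rw [hF1, natDegree_scaleRoots]
    have h1 : aeval pb.gen ((minpoly K θ).scaleRoots (algebraMap A K b)⁻¹) = 0 := by
      have := scaleRoots_aeval_eq_zero (r := (algebraMap A K b)⁻¹) (minpoly.aeval K θ)
      rwa [hθ, ← mul_assoc, ← map_mul, inv_mul_cancel₀ hbK, map_one, one_mul] at this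
    have h2 := minpoly.dvd K pb.gen h1
    have h3 := natDegree_le_of_dvd h2 ((monic_scaleRoots_iff _).2 (minpoly.monic hθint)).ne_zero
    rwa [natDegree_scaleRoots] at h3
  have hsep : (F.map (algebraMap A K)).Separable := by
    rw [← hmin]
    exact (minpoly.irreducible hθint).separable
  obtain ⟨U', V', hUV⟩ := hsep
  obtain ⟨dU, hdU, hU⟩ := IsLocalization.integerNormalization_spec (nonZeroDivisors A) U'
  obtain ⟨dV, hdV, hV⟩ := IsLocalization.integerNormalization_spec (nonZeroDivisors A) V'
  set U := IsLocalization.integerNormalization (nonZeroDivisors A) U'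
  set V := IsLocalization.integerNormalization (nonZeroDivisors A) V'
  have hden : ∀ r : R, ∃ c : A, c ≠ 0 ∧ ∃ g : A[X],
      algebraMap R L (algebraMap A R c * r) = aeval θ g := by
    intro r
    obtain ⟨h, hh⟩ := pb.exists_eq_aeval' (algebraMap R L r)
    set h' := h.comp (C (algebraMap A K b)⁻¹ * X) with hh'
    obtain ⟨d, hd, hdh⟩ := IsLocalization.integerNormalization_spec (nonZeroDivisors A) h'
    refine ⟨d, nonZeroDivisors.ne_zero hd,
      IsLocalization.integerNormalization (nonZeroDivisors A) h', ?_⟩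
    · have e1 : d • h' = C (algebraMap A K d) * h' := by
        rw [Algebra.smul_def]; rfl
      rw [← aeval_map_algebraMap K, hdh, e1, map_mul (aeval θ), aeval_C, map_mul (algebraMap R L),
        ← IsScalarTower.algebraMap_apply A R L, ← IsScalarTower.algebraMap_apply A K L,
        hh, hh', aeval_comp]
      congr 2
      rw [map_mul (aeval θ), aeval_C, aeval_X, hθ, ← mul_assoc, ← map_mul, inv_mul_cancel₀ hbK,
        map_one, one_mul]
  choose cr hcr hg using hden
  obtain ⟨S, hS⟩ := (Module.Finite.fg_top : (⊤ : Submodule A R).FG)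
  set c := ∏ s ∈ S, cr s with hc
  have hc0 : c ≠ 0 := Finset.prod_ne_zero_iff.2 fun s _ => hcr s
  have hall : ∀ r : R, ∃ g : A[X], algebraMap R L (algebraMap A R c * r) = aeval θ g := by
    intro r
    have hr : r ∈ Submodule.span A (S : Set R) := hS ▸ Submodule.mem_top
    induction hr using Submodule.span_induction with
    | mem x hx =>
      obtain ⟨g, hg⟩ := hg x
      refine ⟨C (∏ s ∈ S.erase x, cr s) * g, ?_⟩
      rw [map_mul (aeval θ), aeval_C, ← hg, hc, ← Finset.prod_erase_mul _ _ hx, map_mul (algebraMap A R),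
        IsScalarTower.algebraMap_apply A R L, ← map_mul (algebraMap R L), mul_assoc]
    | zero => exact ⟨0, by simp⟩
    | add x y _ _ hx hy =>
      obtain ⟨g1, h1⟩ := hx
      obtain ⟨g2, h2⟩ := hy
      exact ⟨g1 + g2, by rw [mul_add, map_add, map_add, h1, h2]⟩
    | smul a x _ hx =>
      obtain ⟨g, h1⟩ := hx
      refine ⟨C a * g, ?_⟩
      rw [map_mul (aeval θ), ← h1, aeval_C, IsScalarTower.algebraMap_apply A R L, ← map_mul (algebraMap R L),
        Algebra.smul_def]
      congr 1
      ring
  choose g hg using hall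
  refine ⟨F, C dV * U, C dU * V, dU * dV, c, g, hF3, ?_, ?_, hc0, ?_, ?_⟩
  · rw [hF2, natDegree_scaleRoots]
    exact (minpoly.natDegree_pos hgenint).ne'
  · exact mul_ne_zero (nonZeroDivisors.ne_zero hdU) (nonZeroDivisors.ne_zero hdV)
  · apply map_injective (algebraMap A K) (IsFractionRing.injective A K)
    rw [Polynomial.map_add, Polynomial.map_mul, Polynomial.map_mul, Polynomial.map_mul,
      Polynomial.map_mul, hU, hV, map_C, map_C, map_C, ← derivative_map, Algebra.smul_def,
      Algebra.smul_def, map_mul, C_mul]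
    have e1 : (algebraMap A K[X]) dU = C (algebraMap A K dU) := rfl
    have e2 : (algebraMap A K[X]) dV = C (algebraMap A K dV) := rfl
    rw [e1, e2]
    linear_combination (C (algebraMap A K dU) * C (algebraMap A K dV)) * hUV
  · intro N _ ε hε y hy
    let : Algebra K N := (IsFractionRing.lift hε : K →+* N).toAlgebra
    have hKN : ∀ a, algebraMap K N (algebraMap A K a) = ε a := fun a =>
      IsFractionRing.lift_algebraMap hε a
    have hKN' : (algebraMap K N).comp (algebraMap A K) = ε := RingHom.ext hKN
    have hεb : ε b ≠ 0 := (map_ne_zero_iff _ hε).2 hb0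
    have hroot : aeval (y / ε b) f = 0 := by
      have h1 := scaleRoots_eval₂_mul (p := f) (algebraMap K N) (y / ε b) (algebraMap A K b)
      rw [hKN, mul_div_cancel₀ _ hεb, ← hF1, eval₂_map, hKN', hy] at h1
      exact (mul_eq_zero.1 h1.symm).resolve_left (pow_ne_zero _ hεb)
    let Φ : L →ₐ[K] N := pb.lift (y / ε b) hroot
    have hΦθ : Φ θ = y := by
      rw [hθ, map_mul, AlgHom.commutes, hKN, pb.lift_gen, mul_div_cancel₀ _ hεb]
    have hΦa : ∀ a, Φ (algebraMap R L (algebraMap A R a)) = ε a := by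
      intro a
      rw [← IsScalarTower.algebraMap_apply, IsScalarTower.algebraMap_apply A K L, AlgHom.commutes,
        hKN]
    refine ⟨Φ.toRingHom.comp (algebraMap R L),
      Φ.toRingHom.injective.comp (IsFractionRing.injective R L), hΦa, fun r => ?_⟩
    have h1 := congrArg Φ (hg r)
    rw [map_mul, map_mul, hΦa] at h1
    refine h1.trans ?_
    rw [← aeval_map_algebraMap K, ← aeval_algHom_apply, hΦθ, aeval_def, eval₂_map, hKN']
end LinTr

namespace LinTr
open PowerSeries

theorem mem_span_C_pow {B : Type*} [CommRing B] (π : B) (n : ℕ) (f : PowerSeries B) :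
    f ∈ (Ideal.span {(C π : PowerSeries B)}) ^ n ↔ ∀ k, coeff k f ∈ (Ideal.span {π}) ^ n := by
  rw [Ideal.span_singleton_pow, Ideal.span_singleton_pow, ← map_pow]
  simp only [Ideal.mem_span_singleton]
  constructor
  · rintro ⟨g, rfl⟩ k
    rw [coeff_C_mul]
    exact dvd_mul_right _ _
  · intro h
    choose g hg using h
    refine ⟨PowerSeries.mk g, ?_⟩
    ext k
    rw [coeff_C_mul, coeff_mk, hg]

theorem adicComplete_C {B : Type*} [CommRing B] (π : B) [IsAdicComplete (Ideal.span {π}) B] :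
    IsAdicComplete (Ideal.span {(C π : PowerSeries B)}) (PowerSeries B) where
  haus' := by
    intro f hf
    ext k
    apply haus_eq (Ideal.span {π})
    intro n
    have := hf n
    rw [SModEq.sub_mem, smul_eq_mul, Ideal.mul_top, mem_span_C_pow] at this
    simpa using this k
  prec' := by
    intro f hf
    have h1 : ∀ k, ∃ L : B, ∀ n, coeff k (f n) ≡ L [SMOD (Ideal.span {π} ^ n • ⊤ : Submodule B B)] := by
      intro k
      apply IsPrecomplete.prec'
      intro m n hmn
      have := hf hmn
      rw [SModEq.sub_mem, smul_eq_mul, Ideal.mul_top] at this ⊢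
      rw [mem_span_C_pow] at this
      simpa using this k
    choose L hL using h1
    refine ⟨PowerSeries.mk L, fun n => ?_⟩
    rw [SModEq.sub_mem, smul_eq_mul, Ideal.mul_top, mem_span_C_pow]
    intro k
    have := hL k n
    rw [SModEq.sub_mem, smul_eq_mul, Ideal.mul_top] at this
    simpa using this

theorem hom_shift {B R : Type*} [CommRing B] [CommRing R] (ψ : PowerSeries B →+* R)
    (f : PowerSeries B) : ψ f = ψ (C (coeff 0 f)) + ψ X * ψ (PowerSeries.mk fun n => coeff (n + 1) f) := by
  conv_lhs => rw [PowerSeries.eq_X_mul_shift_add_const f]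
  rw [map_add, map_mul, add_comm]
  simp

theorem exists_ev {B : Type*} [CommRing B] [IsDomain B] (π : B) (hπ : π ≠ 0)
    [IsAdicComplete (Ideal.span {π}) B] (Δ : PowerSeries B) (hΔ : Δ ≠ 0) :
    ∃ ev0 : PowerSeries B →+* B, ev0 Δ ≠ 0 ∧ (∀ b, ev0 (C b) = b) ∧
      ∀ e : B, e ≠ 0 → π ∣ e → ∃ ev : PowerSeries B →+* PowerSeries B, Function.Injective ev ∧
        ∀ f, ∃ q, ev f = C (ev0 f) + C e * X * q := by
  -- choose the point
  obtain ⟨a, ha0, haπ, haΔ⟩ : ∃ a : B, a ≠ 0 ∧ π ∣ a ∧ ∀ ψ : PowerSeries B →+* B,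
      (∀ b, ψ (C b) = b) → ψ X = a → ψ Δ ≠ 0 := by
    obtain ⟨u, hu⟩ : ∃ u, Δ = X ^ Δ.order.toNat * u := by
      exact X_pow_order_dvd
    have hu0 : coeff 0 u ≠ 0 := by
      have h1 := coeff_order hΔ
      intro h2
      apply h1
      generalize Δ.order.toNat = r at hu
      rw [hu, coeff_X_pow_mul', if_pos le_rfl, Nat.sub_self, h2]
    obtain ⟨j, hj⟩ : ∃ j, coeff 0 u ∉ (Ideal.span {π}) ^ j := by
      by_contra! h
      exact hu0 (haus_eq (Ideal.span {π}) (by simpa using h))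
    have hj2 : ¬ π ^ (j + 1) ∣ coeff 0 u := by
      intro h
      apply hj
      rw [Ideal.span_singleton_pow, Ideal.mem_span_singleton]
      exact (pow_dvd_pow π (Nat.le_succ j)).trans h
    refine ⟨π ^ (j + 1), pow_ne_zero _ hπ, dvd_pow_self _ (by omega), fun ψ h1 h2 h3 => hj2 ?_⟩
    rw [hu, map_mul, map_pow, h2, mul_eq_zero, or_iff_right (pow_ne_zero _ (pow_ne_zero _ hπ)),
      hom_shift, h1, h2] at h3
    exact ⟨-ψ (PowerSeries.mk fun n => coeff (n + 1) u), by linear_combination h3⟩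
  obtain ⟨ev0, hC, hX, -⟩ := exists_evalHom (Ideal.span {π}) (RingHom.id B) a
    (Ideal.mem_span_singleton.2 haπ)
  simp only [RingHom.id_apply] at hC
  refine ⟨ev0, haΔ ev0 hC hX, hC, fun e he0 heπ => ?_⟩
  have := adicComplete_C π
  obtain ⟨ev, hC', hX', -⟩ := exists_evalHom (Ideal.span {(C π : PowerSeries B)})
    (C : B →+* PowerSeries B) (C a + C e * X)
    (Ideal.mem_span_singleton.2 (dvd_add (map_dvd _ haπ) ((map_dvd _ heπ).mul_right _)))
  have hdiv : ∀ f : PowerSeries B, ∃ q, f = C (ev0 f) + (X - C a) * q := by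
    intro f
    refine ⟨PowerSeries.mk fun n => ev0 (PowerSeries.mk fun i => coeff (i + n + 1) f), ?_⟩
    ext n
    rcases n with _ | n
    · have := hom_shift ev0 f
      rw [hC, hX] at this
      rw [sub_mul, map_add, map_sub, coeff_C_mul, coeff_mk, coeff_zero_C, coeff_zero_X_mul]
      simp only [add_zero]
      rw [this]
      ring
    · have := hom_shift ev0 (PowerSeries.mk fun i => coeff (i + n + 1) f)
      rw [hC, hX] at this
      rw [sub_mul, map_add, map_sub, coeff_C_mul, coeff_mk, coeff_C, if_neg (by omega),
        coeff_succ_X_mul, coeff_mk]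
      simp only [coeff_mk, zero_add] at this
      rw [this]
      have e1 : ∀ i, i + 1 + n + 1 = i + (n + 1) + 1 := by intro i; ring
      simp only [e1]
      ring
  have hev : ∀ f q, f = C (ev0 f) + (X - C a) * q → ev f = C (ev0 f) + C e * X * ev q := by
    intro f q h
    conv_lhs => rw [h]
    rw [map_add, map_mul, map_sub, hC', hC', hX']
    ring
  refine ⟨ev, ?_, fun f => ?_⟩
  · have hker : ∀ f, ev f = 0 → ∃ q, ev q = 0 ∧ f = (X - C a) * q := by
      intro f hf
      obtain ⟨q, hq⟩ := hdiv f
      have h1 := hev f q hq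
      rw [hf] at h1
      have h2 : ev0 f = 0 := by
        have := congrArg (coeff 0) h1
        rw [mul_assoc] at this
        simpa using this.symm
      rw [h2] at h1 hq
      rw [map_zero, zero_add] at h1 hq
      refine ⟨q, ?_, hq⟩
      refine (mul_eq_zero.1 h1.symm).resolve_left (mul_ne_zero ?_ X_ne_zero)
      exact (map_ne_zero_iff _ C_injective).2 he0
    have hk : ∀ k n f, ev f = 0 → a ^ k ∣ coeff n f := by
      intro k
      induction k with
      | zero => intro n f _; simp
      | succ k ih =>
        intro n
        induction n with
        | zero =>
          intro f hf
          obtain ⟨q, hq, rfl⟩ := hker f hf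
          rw [sub_mul, map_sub, coeff_C_mul, coeff_zero_X_mul, zero_sub, pow_succ', dvd_neg]
          exact mul_dvd_mul_left _ (ih _ _ hq)
        | succ n ihn =>
          intro f hf
          obtain ⟨q, hq, rfl⟩ := hker f hf
          rw [sub_mul, map_sub, coeff_C_mul, coeff_succ_X_mul]
          refine dvd_sub (ihn _ hq) ?_
          rw [pow_succ']
          exact mul_dvd_mul_left _ (ih _ _ hq)
    rw [injective_iff_map_eq_zero]
    intro f hf
    ext n
    apply haus_eq (Ideal.span {π})
    intro k
    rw [map_zero, sub_zero, Ideal.span_singleton_pow, Ideal.mem_span_singleton]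
    exact (pow_dvd_pow_of_dvd haπ k).trans (hk k n f hf)
  · obtain ⟨q, hq⟩ := hdiv f
    exact ⟨ev q, hev f q hq⟩
end LinTr

namespace LinTr
open Polynomial

/-- Hensel lemma without monicity (Newton iteration as in Mathlib). -/
theorem hensel_root {R : Type*} [CommRing R] (I : Ideal R) [IsAdicComplete I R] (f : R[X]) (a₀ : R)
    (h₁ : f.eval a₀ ∈ I) (h₂ : IsUnit (Ideal.Quotient.mk I (f.derivative.eval a₀))) :
    ∃ a, f.IsRoot a := by
  classical
    let f' := derivative f
    let c : ℕ → R := fun n => Nat.recOn n a₀ fun _ b => b - f.eval b * Ring.inverse (f'.eval b)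
    have hc : ∀ n, c (n + 1) = c n - f.eval (c n) * Ring.inverse (f'.eval (c n)) := by
      intro n
      simp only [c]
    have hc_mod : ∀ n, c n ≡ a₀ [SMOD I] := by
      intro n
      induction n with
      | zero => rfl
      | succ n ih => ?_
      rw [hc, sub_eq_add_neg, ← add_zero a₀]
      refine ih.add ?_
      rw [SModEq.zero, Ideal.neg_mem_iff]
      refine I.mul_mem_right _ ?_
      rw [← SModEq.zero] at h₁ ⊢
      exact (ih.eval f).trans h₁
    have hf'c : ∀ n, IsUnit (f'.eval (c n)) := by
      intro n
      have := isLocalHom_of_le_jacobson_bot I (IsAdicComplete.le_jacobson_bot I)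
      apply IsUnit.of_map (Ideal.Quotient.mk I)
      convert! h₂ using 1
      exact SModEq.def.mp ((hc_mod n).eval _)
    have hfcI : ∀ n, f.eval (c n) ∈ I ^ (n + 1) := by
      intro n
      induction n with
      | zero => simpa only [Nat.rec_zero, zero_add, pow_one] using! h₁
      | succ n ih => ?_
      rw [← taylor_eval_sub (c n), hc, sub_eq_add_neg, sub_eq_add_neg,
        add_neg_cancel_comm]
      rw [eval_eq_sum, sum_over_range' _ _ _ (lt_add_of_pos_right _ zero_lt_two), ←
        Finset.sum_range_add_sum_Ico _ (Nat.le_add_left _ _)]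
      swap
      · intro i
        rw [zero_mul]
      refine Ideal.add_mem _ ?_ ?_
      · rw [← one_add_one_eq_two, Finset.sum_range_succ, Finset.range_one, Finset.sum_singleton,
          taylor_coeff_zero, taylor_coeff_one, pow_zero, pow_one, mul_one, mul_neg,
          mul_left_comm, Ring.mul_inverse_cancel _ (hf'c n), mul_one, add_neg_cancel]
        exact Ideal.zero_mem _
      · refine Submodule.sum_mem _ ?_
        simp only [Finset.mem_Ico]
        rintro i ⟨h2i, _⟩
        have aux : n + 2 ≤ i * (n + 1) := by trans 2 * (n + 1) <;> nlinarith only [h2i]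
        refine Ideal.mul_mem_left _ _ (Ideal.pow_le_pow_right aux ?_)
        rw [pow_mul']
        exact Ideal.pow_mem_pow ((Ideal.neg_mem_iff _).2 <| Ideal.mul_mem_right _ _ ih) _
    have aux : ∀ m n, m ≤ n → c m ≡ c n [SMOD (I ^ m • ⊤ : Ideal R)] := by
      intro m n hmn
      rw [← Ideal.one_eq_top, Ideal.smul_eq_mul, mul_one]
      obtain ⟨k, rfl⟩ := Nat.exists_eq_add_of_le hmn
      clear hmn
      induction k with
      | zero => rw [add_zero]
      | succ k ih => ?_
      rw [← add_assoc, hc, ← add_zero (c m), sub_eq_add_neg]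
      refine ih.add ?_
      symm
      rw [SModEq.zero, Ideal.neg_mem_iff]
      refine Ideal.mul_mem_right _ _ (Ideal.pow_le_pow_right ?_ (hfcI _))
      rw [add_assoc]
      exact le_self_add
    obtain ⟨a, ha⟩ := IsPrecomplete.prec' c (aux _ _)
    refine ⟨a, ?_⟩
    · show f.IsRoot a
      suffices ∀ n, f.eval a ≡ 0 [SMOD (I ^ n • ⊤ : Ideal R)] by exact IsHausdorff.haus' _ this
      intro n
      specialize ha n
      rw [← Ideal.one_eq_top, Ideal.smul_eq_mul, mul_one] at ha ⊢
      refine (ha.symm.eval f).trans ?_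
      rw [SModEq.zero]
      exact Ideal.pow_le_pow_right le_self_add (hfcI _)

theorem newton_root {Q : Type*} [CommRing Q] [IsDomain Q] (I : Ideal Q) [IsAdicComplete I Q]
    (F : Q[X]) (θ δ v i0 i : Q) (hδ : δ ≠ 0) (hi0 : i0 ∈ I) (hi : i ∈ I)
    (h1 : F.eval θ = δ ^ 2 * i0) (h2 : v * F.derivative.eval θ = δ * (1 + i)) :
    ∃ y, F.eval y = 0 := by
  set P := taylor θ F with hP
  set H := P.divX.divX with hH
  have e0 : P.coeff 0 = F.eval θ := taylor_coeff_zero _ _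
  have e1 : P.coeff 1 = F.derivative.eval θ := taylor_coeff_one _ _
  have hev : ∀ t, F.eval (t + θ) = F.eval θ + F.derivative.eval θ * t + t ^ 2 * H.eval t := by
    intro t
    rw [← taylor_eval, ← hP, ← e0, ← e1]
    conv_lhs => rw [← divX_mul_X_add P, ← divX_mul_X_add P.divX]
    simp only [eval_add, eval_mul, eval_X, eval_C, coeff_divX, ← hH]
    ring
  have hu : IsUnit (1 + i) := by
    have h := IsAdicComplete.le_jacobson_bot I hi
    rw [Ideal.mem_jacobson_bot] at h
    simpa [add_comm] using h 1
  have hv : v ≠ 0 := by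
    rintro rfl
    rw [zero_mul] at h2
    exact mul_ne_zero hδ hu.ne_zero h2.symm
  obtain ⟨τ, hτ⟩ := hensel_root I
    (C (v * i0) + C (1 + i) * X + C v * X ^ 2 * (H.comp (C δ * X))) 0 (by
      simp only [eval_add, eval_mul, eval_C, eval_X, eval_pow]
      simpa using I.mul_mem_left _ hi0) (by
      have : (derivative (C (v * i0) + C (1 + i) * X + C v * X ^ 2 * (H.comp (C δ * X)))).eval 0
        = 1 + i := by
        simp [derivative_mul]
      rw [this]
      exact hu.map _)
  refine ⟨δ * τ + θ, ?_⟩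
  have h3 : v * F.eval (δ * τ + θ) = 0 := by
    rw [hev, h1]
    have h4 := hτ.eq_zero
    simp only [eval_add, eval_mul, eval_C, eval_X, eval_pow, eval_comp] at h4
    linear_combination δ ^ 2 * h4 + δ * τ * h2
  exact (mul_eq_zero.1 h3).resolve_left hv
end LinTr

namespace LinTr

/-- `R` embeds into a matrix ring over `T`. -/
def Emb (R T : Type) [CommRing R] [CommRing T] : Prop :=
  ∃ (k : ℕ) (f : R →+* Matrix (Fin k) (Fin k) T), Function.Injective f

/-- Every finite domain extension of `B` embeds into a matrix ring over `B`. -/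
def FinEmb (B : Type) [CommRing B] : Prop :=
  ∀ (R : Type) [CommRing R] [IsDomain R] [Algebra B R] [FaithfulSMul B R] [Module.Finite B R],
    Emb R B

theorem exists_factor {P N R : Type*} [CommRing P] [CommRing N] [CommRing R] (σ : P →+* N)
    (hσ : Function.Injective σ) (Ψ : R →+* N) (h : ∀ r, ∃ x, σ x = Ψ r) :
    ∃ Ψ' : R →+* P, ∀ r, σ (Ψ' r) = Ψ r := by
  choose g hg using h
  exact ⟨{ toFun := g
           map_one' := hσ (by rw [hg, map_one, map_one])
           map_zero' := hσ (by rw [hg, map_zero, map_zero])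
           map_mul' := fun x y => hσ (by rw [hg, map_mul, map_mul, hg, hg])
           map_add' := fun x y => hσ (by rw [hg, map_add, map_add, hg, hg]) }, hg⟩

open PowerSeries in
theorem Emb.powerSeries {R B : Type} [CommRing R] [CommRing B] (h : Emb R B) :
    Emb (PowerSeries R) (PowerSeries B) := by
  obtain ⟨k, f, hf⟩ := h
  refine ⟨k, { toFun := fun x => Matrix.of fun i j => PowerSeries.mk fun n => f (coeff n x) i j
               map_one' := ?_
               map_zero' := ?_
               map_mul' := ?_
               map_add' := ?_ }, ?_⟩
  · ext i j n
    rw [Matrix.of_apply, coeff_mk, coeff_one]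
    by_cases hn : n = 0
    · by_cases hij : i = j
      · simp [hn, hij, Matrix.one_apply]
      · simp [hn, hij, Matrix.one_apply]
    · by_cases hij : i = j
      · simp [hn, hij, Matrix.one_apply, coeff_one]
      · simp [hn, hij, Matrix.one_apply]
  · intro x y
    ext i j n
    simp only [Matrix.of_apply, coeff_mk, coeff_mul, map_sum, map_mul, Matrix.sum_apply,
      Matrix.mul_apply]
    rw [Finset.sum_comm]
  · ext i j n
    simp
  · intro x y
    ext i j n
    simp
  · intro x y hxy
    ext n
    apply hf
    ext i j
    have := congrArg (fun M => coeff n (M i j)) hxy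
    simpa using this

theorem emb_of_inj {R R' B : Type} [CommRing R] [CommRing R'] [CommRing B] (f : R →+* R')
    (hf : Function.Injective f) (h : Emb R' B) : Emb R B := by
  obtain ⟨k, g, hg⟩ := h
  exact ⟨k, g.comp f, hg.comp hf⟩

theorem finEmb_step (B : Type) [CommRing B] [IsDomain B] [CharZero B] (π : B) (hπ : π ≠ 0)
    [IsAdicComplete (Ideal.span {π}) B] (HB : FinEmb B) : FinEmb (PowerSeries B) := by
  intro R _ _ _ _ _
  have : CharZero (PowerSeries B) := charZero_of_injective_ringHom (PowerSeries.C_injective (R := B))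
  obtain ⟨F, U, V, δ, c, g, hFm, hFd, hδ, hc, hUV, hN⟩ := alg_setup.{0, 0, 0} (PowerSeries B) R
  obtain ⟨ev0, h0, hev0C, hev⟩ := exists_ev π hπ (δ * c) (mul_ne_zero hδ hc)
  rw [map_mul] at h0
  set δ0 := ev0 δ with hδ0d
  set c0 := ev0 c with hc0d
  have hδ0 : δ0 ≠ 0 := left_ne_zero_of_mul h0
  have hc0 : c0 ≠ 0 := right_ne_zero_of_mul h0
  obtain ⟨ev, hevinj, hevq⟩ := hev (π * δ0 ^ 2 * c0)
    (mul_ne_zero (mul_ne_zero hπ (pow_ne_zero _ hδ0)) hc0) ⟨δ0 ^ 2 * c0, by ring⟩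
  let Λ := AlgebraicClosure (FractionRing B)
  have hι : Function.Injective (algebraMap B Λ) := by
    rw [IsScalarTower.algebraMap_eq B (FractionRing B) Λ]
    exact (algebraMap (FractionRing B) Λ).injective.comp (IsFractionRing.injective B (FractionRing B))
  -- the root at the point
  obtain ⟨θ0, hθ0⟩ : ∃ θ0 : Λ, F.eval₂ ((algebraMap B Λ).comp ev0) θ0 = 0 := by
    obtain ⟨x, hx⟩ := IsAlgClosed.exists_root (F.map ((algebraMap B Λ).comp ev0)) (by
      rw [Polynomial.degree_eq_natDegree (hFm.map _).ne_zero, hFm.natDegree_map]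
      exact_mod_cast hFd)
    exact ⟨x, by rw [← Polynomial.eval_map]; exact hx⟩
  let R' := Algebra.adjoin B {θ0}
  let t : R' := ⟨θ0, Algebra.subset_adjoin rfl⟩
  have hinjR' : Function.Injective (algebraMap B R') := by
    intro x y hxy
    exact hι (congrArg Subtype.val hxy)
  have ht : F.eval₂ ((algebraMap B R').comp ev0) t = 0 := by
    apply Subtype.val_injective
    have := Polynomial.hom_eval₂ F ((algebraMap B R').comp ev0) R'.val.toRingHom t
    exact this.trans hθ0
  let j : PowerSeries B →+* PowerSeries R' := PowerSeries.map (algebraMap B R')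
  have hjC : ∀ b, j (PowerSeries.C b) = PowerSeries.C (algebraMap B R' b) := fun b => by simp [j]
  have hjX : j PowerSeries.X = PowerSeries.X := by simp [j]
  let je := j.comp ev
  let D : B → PowerSeries R' := fun b => PowerSeries.C (algebraMap B R' b)
  let Z : PowerSeries R' := PowerSeries.X
  have happrox : ∀ G : Polynomial (PowerSeries B), ∃ w : PowerSeries R',
      G.eval₂ je (PowerSeries.C t) = PowerSeries.C (G.eval₂ ((algebraMap B R').comp ev0) t) +
        D π * D δ0 ^ 2 * D c0 * Z * w := by
    intro G
    set J := Ideal.span {D π * D δ0 ^ 2 * D c0 * Z} with hJ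
    have h1 : (Ideal.Quotient.mk J).comp je =
        (Ideal.Quotient.mk J).comp (PowerSeries.C.comp ((algebraMap B R').comp ev0)) := by
      ext f
      obtain ⟨q, hq⟩ := hevq f
      simp only [RingHom.comp_apply, je]
      rw [Ideal.Quotient.eq, hq, hJ, Ideal.mem_span_singleton]
      refine ⟨j q, ?_⟩
      rw [map_add, map_mul, map_mul, hjC, hjC, hjX]
      simp only [map_mul, map_pow, D, Z]
      ring
    have h2 : Ideal.Quotient.mk J (G.eval₂ je (PowerSeries.C t)) =
        Ideal.Quotient.mk J (PowerSeries.C (G.eval₂ ((algebraMap B R').comp ev0) t)) := by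
      rw [Polynomial.hom_eval₂, h1, Polynomial.hom_eval₂, Polynomial.hom_eval₂]
    rw [Ideal.Quotient.eq, hJ, Ideal.mem_span_singleton] at h2
    obtain ⟨w, hw⟩ := h2
    exact ⟨w, by linear_combination hw⟩
  have hDδ : D δ0 ≠ 0 := by
    rw [Ne, map_eq_zero_iff _ PowerSeries.C_injective, map_eq_zero_iff _ hinjR']
    exact hδ0
  obtain ⟨y, hy⟩ : ∃ y : PowerSeries R', F.eval₂ je y = 0 := by
    obtain ⟨w, hw⟩ := happrox F
    rw [ht, map_zero, zero_add] at hw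
    obtain ⟨q, hq⟩ := hevq δ
    have e1 := congrArg (Polynomial.eval₂ je (PowerSeries.C t)) hUV
    rw [Polynomial.eval₂_add, Polynomial.eval₂_mul, Polynomial.eval₂_mul, Polynomial.eval₂_C,
      hw] at e1
    have e2 : je δ = D δ0 + D π * D δ0 ^ 2 * D c0 * Z * j q := by
      simp only [RingHom.comp_apply, je]
      rw [hq, map_add, map_mul, map_mul, hjC, hjC, hjX]
      simp only [map_mul, map_pow, D, Z, hδ0d]
    rw [e2] at e1
    obtain ⟨y, hy⟩ := newton_root (Ideal.span {(PowerSeries.X : PowerSeries R')}) (F.map je)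
      (PowerSeries.C t) (D δ0)
      (V.eval₂ je (PowerSeries.C t)) (D π * D c0 * w * Z)
      ((D π * D δ0 * D c0 * (j q - U.eval₂ je (PowerSeries.C t) * w)) * Z) hDδ
      (Ideal.mul_mem_left _ _ (Ideal.mem_span_singleton_self _))
      (Ideal.mul_mem_left _ _ (Ideal.mem_span_singleton_self _))
      (by rw [Polynomial.eval_map, hw]; ring)
      (by rw [Polynomial.derivative_map, Polynomial.eval_map]; linear_combination e1)
    exact ⟨y, by rw [← Polynomial.eval_map]; exact hy⟩
  let N := FractionRing (PowerSeries Λ)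
  let μ : PowerSeries R' →+* PowerSeries Λ := PowerSeries.map (algebraMap R' Λ)
  let jΛ : PowerSeries B →+* PowerSeries Λ := PowerSeries.map (algebraMap B Λ)
  have hμj : ∀ f, μ (j f) = jΛ f := by
    intro f
    ext n
    simp [μ, j, jΛ]
  have hσ : Function.Injective (algebraMap (PowerSeries Λ) N) := IsFractionRing.injective (PowerSeries Λ) N
  have hjΛ : Function.Injective jΛ := by
    intro x y hxy
    ext n
    apply hι
    simpa [jΛ] using congrArg (PowerSeries.coeff n) hxy
  obtain ⟨Ψ, hΨi, hΨa, hΨc⟩ := hN N ((algebraMap (PowerSeries Λ) N).comp (jΛ.comp ev))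
    (hσ.comp (hjΛ.comp hevinj)) (algebraMap (PowerSeries Λ) N (μ y)) (by
      have h1 : (algebraMap (PowerSeries Λ) N).comp (jΛ.comp ev) = (algebraMap (PowerSeries Λ) N).comp (μ.comp je) := by
        ext f
        simp only [RingHom.comp_apply, je, hμj]
      rw [h1, ← RingHom.comp_apply, ← RingHom.comp_assoc, ← Polynomial.hom_eval₂, hy, map_zero])
  -- the image has bounded denominators
  have hden : ∀ r, ∃ z : PowerSeries R', algebraMap (PowerSeries Λ) N (jΛ (PowerSeries.C c0)) * Ψ r = algebraMap (PowerSeries Λ) N (μ z) := by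
    intro r
    obtain ⟨q, hq⟩ := hevq c
    have hw : IsUnit (1 + PowerSeries.C (π * δ0 ^ 2) * (PowerSeries.X * q)) := by
      rw [PowerSeries.isUnit_iff_constantCoeff]
      simp
    obtain ⟨w, hw⟩ := hw
    have hcw : ev c * ((w⁻¹ : (PowerSeries B)ˣ) : PowerSeries B) = PowerSeries.C c0 := by
      rw [Units.mul_inv_eq_iff_eq_mul, hw, hq, map_mul (PowerSeries.C) (π * δ0 ^ 2) c0]
      ring
    refine ⟨j ((w⁻¹ : (PowerSeries B)ˣ) : PowerSeries B) * (g r).eval₂ je y, ?_⟩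
    have h2 := hΨc r
    have h1 : (algebraMap (PowerSeries Λ) N).comp (jΛ.comp ev) =
        (algebraMap (PowerSeries Λ) N).comp (μ.comp je) := by
      ext f
      simp only [RingHom.comp_apply, je, hμj]
    rw [h1, ← RingHom.comp_apply, ← RingHom.comp_assoc, ← Polynomial.hom_eval₂, RingHom.comp_assoc,
      ← h1] at h2
    rw [← hcw, map_mul jΛ, map_mul μ, map_mul, map_mul, hμj]
    simp only [RingHom.comp_apply] at h2
    rw [← h2]
    ring
  have hc0Λ : algebraMap B Λ c0 ≠ 0 := (map_ne_zero_iff _ hι).2 hc0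
  obtain ⟨Ψ', hΨ'⟩ := exists_factor (algebraMap (PowerSeries Λ) N) hσ Ψ (by
    intro r
    obtain ⟨z, hz⟩ := hden r
    refine ⟨PowerSeries.C (algebraMap B Λ c0)⁻¹ * μ z, ?_⟩
    rw [map_mul, ← hz, ← mul_assoc, ← map_mul]
    have : (PowerSeries.C (algebraMap B Λ c0)⁻¹ : PowerSeries Λ) * jΛ (PowerSeries.C c0) = 1 := by
      simp only [jΛ, PowerSeries.map_C]
      rw [← map_mul, inv_mul_cancel₀ hc0Λ, map_one]
    rw [this, map_one, one_mul])
  have hΨ'i : Function.Injective Ψ' := by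
    intro x y hxy
    apply hΨi
    rw [← hΨ', ← hΨ', hxy]
  have hΨ'a : ∀ a, Ψ' (algebraMap _ R a) = jΛ (ev a) := by
    intro a
    apply hσ
    rw [hΨ', hΨa]
    rfl
  have hcoeff : ∀ r n, algebraMap B Λ c0 * PowerSeries.coeff n (Ψ' r) ∈ R' := by
    intro r n
    obtain ⟨z, hz⟩ := hden r
    rw [← hΨ', ← map_mul] at hz
    have h1 := congrArg (PowerSeries.coeff n) (hσ hz)
    simp only [jΛ, PowerSeries.map_C, PowerSeries.coeff_C_mul] at h1
    rw [h1]
    simp only [μ, PowerSeries.coeff_map]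
    exact (PowerSeries.coeff n z).2
  let Ψ0 : R →+* Λ := (PowerSeries.constantCoeff (R := Λ)).comp Ψ'
  have hΨ0a : ∀ a, Ψ0 (algebraMap _ R a) = algebraMap B Λ (ev0 a) := by
    intro a
    obtain ⟨q, hq⟩ := hevq a
    simp only [Ψ0, RingHom.comp_apply, hΨ'a, hq, jΛ]
    simp
  have hΨ0int : ∀ r, IsIntegral B (Ψ0 r) := by
    intro r
    obtain ⟨p, hp, hpr⟩ := Algebra.IsIntegral.isIntegral (R := PowerSeries B) r
    refine ⟨p.map ev0, hp.map _, ?_⟩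
    have h1 := congrArg Ψ0 hpr
    rw [Polynomial.hom_eval₂, map_zero] at h1
    rw [Polynomial.eval₂_map, ← h1]
    congr 1
    ext a
    exact (hΨ0a a).symm
  obtain ⟨S, hS⟩ := (Module.Finite.fg_top : (⊤ : Submodule (PowerSeries B) R).FG)
  have hθint : IsIntegral B θ0 := by
    refine ⟨F.map ev0, hFm.map _, ?_⟩
    rw [Polynomial.eval₂_map]
    exact hθ0
  let R'' := Algebra.adjoin B (insert θ0 (Set.image Ψ0 S))
  have hRle : R' ≤ R'' := Algebra.adjoin_mono (by simp)
  have hΨ0mem : ∀ r, Ψ0 r ∈ R'' := by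
    intro r
    have hr : r ∈ Submodule.span (PowerSeries B) (S : Set R) := hS ▸ Submodule.mem_top
    induction hr using Submodule.span_induction with
    | mem x hx => exact Algebra.subset_adjoin (Or.inr ⟨x, hx, rfl⟩)
    | zero => rw [map_zero]; exact zero_mem _
    | add x y _ _ hx hy => rw [map_add]; exact add_mem hx hy
    | smul a x _ hx =>
      rw [Algebra.smul_def, map_mul, hΨ0a]
      exact mul_mem (R''.algebraMap_mem _) hx
  have : Module.Finite B R'' := by
    refine (Module.Finite.iff_fg (N := Subalgebra.toSubmodule R'')).2 ?_
    refine fg_adjoin_of_finite ((S.finite_toSet.image _).insert _) ?_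
    rintro x (rfl | ⟨r, -, rfl⟩)
    · exact hθint
    · exact hΨ0int r
  have : FaithfulSMul B R'' := by
    rw [faithfulSMul_iff_algebraMap_injective]
    intro x y hxy
    exact hι (congrArg Subtype.val hxy)
  obtain ⟨Θ, hΘ⟩ := exists_factor (PowerSeries.map (algebraMap R'' Λ))
    (by
      intro x y hxy
      ext n
      simpa using congrArg (PowerSeries.coeff n) hxy)
    ((PowerSeries.rescale (algebraMap B Λ c0)).comp Ψ') (by
      intro r
      have h1 : ∀ n, algebraMap B Λ c0 ^ n * PowerSeries.coeff n (Ψ' r) ∈ R'' := by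
        intro n
        rcases n with _ | n
        · have h2 : PowerSeries.constantCoeff (Ψ' r) ∈ R'' := hΨ0mem r
          simpa using h2
        · rw [pow_succ, mul_assoc]
          exact mul_mem (pow_mem (R''.algebraMap_mem _) _) (hRle (hcoeff r _))
      refine ⟨PowerSeries.mk fun n => ⟨_, h1 n⟩, ?_⟩
      ext n
      simp only [PowerSeries.coeff_map, PowerSeries.coeff_mk, RingHom.comp_apply,
        PowerSeries.coeff_rescale]
      rfl)
  refine emb_of_inj Θ ?_ (HB R'').powerSeries
  intro x y hxy
  apply hΨ'i
  have h1 := congrArg (PowerSeries.map (algebraMap R'' Λ)) hxy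
  rw [hΘ, hΘ] at h1
  ext n
  have h2 := congrArg (PowerSeries.coeff n) h1
  simp only [RingHom.comp_apply, PowerSeries.coeff_rescale] at h2
  exact mul_left_cancel₀ (pow_ne_zero _ hc0Λ) h2
end LinTr

namespace LinTr

theorem dim_le_of_integral {A R : Type*} [CommRing A] [CommRing R] [Algebra A R]
    [Algebra.IsIntegral A R] : ringKrullDim R ≤ ringKrullDim A := by
  refine Order.krullDim_le_of_strictMono (fun P : PrimeSpectrum R => PrimeSpectrum.comap (algebraMap A R) P) ?_
  intro P Q hPQ
  exact Ideal.IsIntegral.comap_lt_comap hPQ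

theorem finite_of_quot {B R : Type*} [CommRing B] [CommRing R] [Algebra B R] (I : Ideal B)
    [IsAdicComplete I B] [IsHausdorff I R] (h : Module.Finite B (R ⧸ (I • ⊤ : Submodule B R))) :
    Module.Finite B R := by
  obtain ⟨k, f, hf⟩ := Module.Finite.exists_fin' B (R ⧸ (I • ⊤ : Submodule B R))
  obtain ⟨g, hg⟩ := Module.projective_lifting_property (Submodule.mkQ (I • ⊤ : Submodule B R)) f
    (Submodule.mkQ_surjective _)
  have hmem : ∀ n (y : Fin k → B), y ∈ (I ^ n • ⊤ : Submodule B (Fin k → B)) ↔ ∀ i, y i ∈ I ^ n := by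
    intro n y
    constructor
    · intro hy i
      refine Submodule.smul_induction_on hy ?_ ?_
      · intro r hr z _
        exact Ideal.mul_mem_right _ _ hr
      · intro a b ha hb
        exact add_mem ha hb
    · intro hy
      rw [pi_eq_sum_univ' y]
      exact Submodule.sum_mem _ fun i _ => Submodule.smul_mem_smul (hy i) trivial
  have : IsPrecomplete I (Fin k → B) := by
    constructor
    intro s hs
    have h1 : ∀ i, ∃ L : B, ∀ n, s n i ≡ L [SMOD (I ^ n • ⊤ : Submodule B B)] := by
      intro i
      apply IsPrecomplete.prec'
      intro m n hmn
      have := hs hmn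
      rw [SModEq.sub_mem] at this ⊢
      rw [hmem] at this
      simpa using this i
    choose L hL using h1
    refine ⟨L, fun n => ?_⟩
    rw [SModEq.sub_mem, hmem]
    intro i
    have := hL i n
    rw [SModEq.sub_mem] at this
    simpa using this
  have h2 := surjective_of_mkQ_comp_surjective (I := I) (f := g) (by rw [hg]; exact hf)
  exact Module.Finite.of_surjective g h2

/-- The iterated power series rings over the `p`-adic integers. -/
noncomputable def T (p : ℕ) [Fact p.Prime] : ℕ → CommRingCat.{0}
  | 0 => CommRingCat.of ℤ_[p]
  | n + 1 => CommRingCat.of (PowerSeries (T p n))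

theorem finEmb_padic (p : ℕ) [Fact p.Prime] : FinEmb ℤ_[p] := by
  intro R _ _ _ _ _
  have : Module.IsTorsionFree ℤ_[p] R := inferInstance
  have : Module.Free ℤ_[p] R := Module.free_of_finite_type_torsion_free'
  let b := Module.finBasis ℤ_[p] R
  exact ⟨_, (Algebra.leftMulMatrix b).toRingHom, Algebra.leftMulMatrix_injective b⟩

structure TProps (p d : ℕ) (B : Type) [CommRing B] : Prop where
  dom : IsDomain B
  char : CharZero B
  noeth : IsNoetherianRing B
  loc : IsLocalRing B
  compl : IsAdicComplete (Ideal.span {(p : B)}) B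
  dim : ringKrullDim B = (d + 1 : ℕ)
  fin : FinEmb B

theorem tprops_zero (p : ℕ) [Fact p.Prime] : TProps p 0 ℤ_[p] where
  dom := inferInstance
  char := inferInstance
  noeth := inferInstance
  loc := inferInstance
  compl := by
    rw [← PadicInt.maximalIdeal_eq_span_p]
    infer_instance
  dim := by
    rw [IsDiscreteValuationRing.ringKrullDim_eq_one]
    rfl
  fin := finEmb_padic p

theorem tprops_succ (p d : ℕ) [Fact p.Prime] (B : Type) [CommRing B] (h : TProps p d B) :
    TProps p (d + 1) (PowerSeries B) := by
  obtain ⟨h1, h2, h3, h4, h5, h6, h7⟩ := h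
  have : CharZero (PowerSeries B) := charZero_of_injective_ringHom (PowerSeries.C_injective (R := B))
  refine ⟨inferInstance, this, inferInstance, inferInstance, ?_, ?_, ?_⟩
  · have := adicComplete_C (p : B)
    rwa [map_natCast] at this
  · have hX : (PowerSeries.X : PowerSeries B) ∈ IsLocalRing.maximalIdeal (PowerSeries B) := by
      rw [IsLocalRing.mem_maximalIdeal, mem_nonunits_iff, PowerSeries.isUnit_iff_constantCoeff]
      simp
    rw [← ringKrullDim_quotient_span_singleton_succ_eq_ringKrullDim_of_mem_nonZeroDivisors
      (mem_nonZeroDivisors_of_ne_zero PowerSeries.X_ne_zero) hX]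
    have e : (PowerSeries B ⧸ Ideal.span {(PowerSeries.X : PowerSeries B)}) ≃+* B := by
      refine (Ideal.quotEquivOfEq ?_).trans (RingHom.quotientKerEquivOfSurjective
        (f := PowerSeries.constantCoeff (R := B)) PowerSeries.constantCoeff_surj)
      ext f
      rw [Ideal.mem_span_singleton, PowerSeries.X_dvd_iff, RingHom.mem_ker]
    rw [ringKrullDim_eq_of_ringEquiv e, h6]
    push_cast
    rfl
  · exact finEmb_step B (p : B) (by exact_mod_cast (Fact.out : p.Prime).ne_zero) h7

theorem tprops (p : ℕ) [Fact p.Prime] (d : ℕ) : TProps p d (T p d) := by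
  induction d with
  | zero => exact tprops_zero p
  | succ d ih => exact tprops_succ p d (T p d) ih

/-- The induction principle for homomorphisms being finite. -/
theorem finite_padic (p : ℕ) [Fact p.Prime] (R : Type) [CommRing R] [IsNoetherianRing R]
    [IsLocalRing R] (φ : ℤ_[p] →+* R)
    (h1 : (IsLocalRing.maximalIdeal ℤ_[p]).map φ ≤ IsLocalRing.maximalIdeal R)
    (h2 : Finite (R ⧸ (IsLocalRing.maximalIdeal ℤ_[p]).map φ)) : φ.Finite := by
  algebraize [φ]
  have := IsHausdorff.of_map (M := R) h1
  refine finite_of_quot (IsLocalRing.maximalIdeal ℤ_[p]) ?_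
  have h3 : Finite (R ⧸ ((IsLocalRing.maximalIdeal ℤ_[p]) • ⊤ : Submodule ℤ_[p] R)) := by
    refine Finite.of_surjective (α := R ⧸ (IsLocalRing.maximalIdeal ℤ_[p]).map φ)
      (Quotient.map' id ?_) ?_
    · intro x y hxy
      rw [Submodule.quotientRel_def] at hxy ⊢
      rw [Ideal.smul_top_eq_map]
      exact hxy
    · rintro ⟨x⟩
      exact ⟨Ideal.Quotient.mk _ x, rfl⟩
  exact Module.Finite.of_finite

theorem finite_step (B R : Type) [CommRing B] [IsLocalRing B]
    (ih : ∀ (R : Type) [CommRing R] [IsNoetherianRing R] [IsLocalRing R] (φ : B →+* R),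
      (IsLocalRing.maximalIdeal B).map φ ≤ IsLocalRing.maximalIdeal R →
      Finite (R ⧸ (IsLocalRing.maximalIdeal B).map φ) → φ.Finite)
    [CommRing R] [IsNoetherianRing R]
    [IsLocalRing R] (φ : PowerSeries B →+* R)
    (h1 : (IsLocalRing.maximalIdeal (PowerSeries B)).map φ ≤ IsLocalRing.maximalIdeal R)
    (h2 : Finite (R ⧸ (IsLocalRing.maximalIdeal (PowerSeries B)).map φ)) : φ.Finite := by
  set I := Ideal.span {(PowerSeries.X : PowerSeries B)} with hI
  have hXm : (PowerSeries.X : PowerSeries B) ∈ IsLocalRing.maximalIdeal (PowerSeries B) := by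
    rw [IsLocalRing.mem_maximalIdeal, mem_nonunits_iff, PowerSeries.isUnit_iff_constantCoeff]
    simp
  have hCm : ∀ b ∈ IsLocalRing.maximalIdeal B,
      PowerSeries.C b ∈ IsLocalRing.maximalIdeal (PowerSeries B) := by
    intro b hb
    rw [IsLocalRing.mem_maximalIdeal, mem_nonunits_iff, PowerSeries.isUnit_iff_constantCoeff]
    simpa using hb
  have hIm : I ≤ IsLocalRing.maximalIdeal (PowerSeries B) := by
    rw [hI, Ideal.span_singleton_le_iff_mem]
    exact hXm
  have hle : I.map φ ≤ IsLocalRing.maximalIdeal R := (Ideal.map_mono hIm).trans h1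
  have hne : I.map φ ≠ ⊤ := fun h => (IsLocalRing.maximalIdeal.isMaximal R).ne_top (top_le_iff.1 (h ▸ hle))
  have : Nontrivial (R ⧸ I.map φ) := Ideal.Quotient.nontrivial_iff.2 hne
  have : IsLocalRing (R ⧸ I.map φ) :=
    IsLocalRing.of_surjective' (Ideal.Quotient.mk (I.map φ)) Ideal.Quotient.mk_surjective
  let φ' : B →+* R ⧸ I.map φ := (Ideal.Quotient.mk _).comp (φ.comp PowerSeries.C)
  have hmax : (IsLocalRing.maximalIdeal B).map φ' ≤ IsLocalRing.maximalIdeal (R ⧸ I.map φ) := by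
    rw [Ideal.map_le_iff_le_comap]
    intro b hb
    have h3 : φ (PowerSeries.C b) ∈ IsLocalRing.maximalIdeal R :=
      h1 (Ideal.mem_map_of_mem _ (hCm b hb))
    rw [Ideal.mem_comap, IsLocalRing.mem_maximalIdeal, mem_nonunits_iff]
    intro hu
    have := IsLocalRing.of_surjective' (Ideal.Quotient.mk (I.map φ)) Ideal.Quotient.mk_surjective
    have hloc : IsLocalHom (Ideal.Quotient.mk (I.map φ)) :=
      IsLocalHom.of_surjective _ Ideal.Quotient.mk_surjective
    exact h3 (IsUnit.of_map (Ideal.Quotient.mk (I.map φ)) _ hu)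
  have hfin : φ'.Finite := by
    refine ih _ φ' hmax ?_
    let π2 := (Ideal.Quotient.mk ((IsLocalRing.maximalIdeal B).map φ')).comp
      (Ideal.Quotient.mk (I.map φ))
    have hπ2 : ∀ x ∈ (IsLocalRing.maximalIdeal (PowerSeries B)).map φ, π2 x = 0 := by
      intro x hx
      have : (IsLocalRing.maximalIdeal (PowerSeries B)).map φ ≤ RingHom.ker π2 := by
        rw [Ideal.map_le_iff_le_comap]
        intro f hf
        rw [Ideal.mem_comap, RingHom.mem_ker]
        have e := hom_shift (π2.comp φ) f
        simp only [RingHom.comp_apply] at e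
        rw [e]
        have e1 : π2 (φ PowerSeries.X) = 0 := by
          have : Ideal.Quotient.mk (I.map φ) (φ PowerSeries.X) = 0 :=
            Ideal.Quotient.eq_zero_iff_mem.2 (Ideal.mem_map_of_mem _ (Ideal.mem_span_singleton_self _))
          simp only [π2, RingHom.comp_apply, this, map_zero]
        have e2 : π2 (φ (PowerSeries.C (PowerSeries.coeff 0 f))) = 0 := by
          simp only [π2, RingHom.comp_apply]
          rw [Ideal.Quotient.eq_zero_iff_mem]
          refine Ideal.mem_map_of_mem φ' ?_
          rw [IsLocalRing.mem_maximalIdeal, mem_nonunits_iff, PowerSeries.isUnit_iff_constantCoeff] at hf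
          simpa using hf
        rw [e1, e2, zero_mul, add_zero]
      exact this hx
    refine Finite.of_surjective (Ideal.Quotient.lift _ π2 hπ2) ?_
    apply Ideal.Quotient.lift_surjective_of_surjective
    exact Ideal.Quotient.mk_surjective.comp Ideal.Quotient.mk_surjective
  algebraize [φ]
  have := IsHausdorff.of_map (M := R) (I := I) hle
  refine finite_of_quot I ?_
  have hf2 : ((Ideal.Quotient.mk (I.map φ)).comp φ).Finite :=
    RingHom.Finite.of_comp_finite (f := PowerSeries.C) hfin
  have hf3 : Module.Finite (PowerSeries B) (R ⧸ I.map (algebraMap (PowerSeries B) R)) := by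
    have e : (Ideal.Quotient.mk (I.map φ)).comp φ =
        algebraMap (PowerSeries B) (R ⧸ I.map (algebraMap (PowerSeries B) R)) := rfl
    rw [e] at hf2
    exact RingHom.finite_algebraMap.1 hf2
  rw [Ideal.smul_top_eq_map]
  exact Module.Finite.equiv (Submodule.Quotient.restrictScalarsEquiv (PowerSeries B)
    (I.map (algebraMap (PowerSeries B) R))).symm
end LinTr

namespace LinTr

instance instLocalT (p d : ℕ) [Fact p.Prime] : IsLocalRing (T p d) := (tprops p d).loc

theorem finite_T (p : ℕ) [Fact p.Prime] (d : ℕ) : ∀ (R : Type) [CommRing R] [IsNoetherianRing R]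
    [IsLocalRing R] (φ : T p d →+* R),
    (IsLocalRing.maximalIdeal (T p d)).map φ ≤ IsLocalRing.maximalIdeal R →
    Finite (R ⧸ (IsLocalRing.maximalIdeal (T p d)).map φ) → φ.Finite := by
  induction d with
  | zero => intro R _ _ _ φ h1 h2; exact finite_padic p R φ h1 h2
  | succ d ih => intro R _ _ _ φ h1 h2; exact finite_step (T p d) R ih φ h1 h2

theorem exists_hom_step (B R : Type) [CommRing B] [IsLocalRing B] [CommRing R] [IsLocalRing R]
    [IsAdicComplete (IsLocalRing.maximalIdeal R) R] (φ : B →+* R)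
    (h1 : (IsLocalRing.maximalIdeal B).map φ ≤ IsLocalRing.maximalIdeal R)
    (x : R) (hx : x ∈ IsLocalRing.maximalIdeal R) :
    ∃ ψ : PowerSeries B →+* R,
      (IsLocalRing.maximalIdeal (PowerSeries B)).map ψ ≤ IsLocalRing.maximalIdeal R ∧
      (IsLocalRing.maximalIdeal B).map φ ≤ (IsLocalRing.maximalIdeal (PowerSeries B)).map ψ ∧
      x ∈ (IsLocalRing.maximalIdeal (PowerSeries B)).map ψ := by
  obtain ⟨ψ, hC, hX, -⟩ := exists_evalHom _ φ x hx
  refine ⟨ψ, ?_, ?_, ?_⟩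
  · rw [Ideal.map_le_iff_le_comap]
    intro f hf
    rw [Ideal.mem_comap, hom_shift, hC, hX]
    refine add_mem (h1 (Ideal.mem_map_of_mem _ ?_)) (Ideal.mul_mem_right _ _ hx)
    rw [IsLocalRing.mem_maximalIdeal, mem_nonunits_iff, PowerSeries.isUnit_iff_constantCoeff] at hf
    simpa using hf
  · rw [Ideal.map_le_iff_le_comap]
    intro b hb
    rw [Ideal.mem_comap, ← hC]
    apply Ideal.mem_map_of_mem
    rw [IsLocalRing.mem_maximalIdeal, mem_nonunits_iff, PowerSeries.isUnit_iff_constantCoeff]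
    simpa using hb
  · have : (PowerSeries.X : PowerSeries B) ∈ IsLocalRing.maximalIdeal (PowerSeries B) := by
      rw [IsLocalRing.mem_maximalIdeal, mem_nonunits_iff, PowerSeries.isUnit_iff_constantCoeff]
      simp
    rw [← hX]
    exact Ideal.mem_map_of_mem _ this

theorem exists_hom (p : ℕ) [Fact p.Prime] (R : Type) [CommRing R] [IsLocalRing R]
    [IsAdicComplete (IsLocalRing.maximalIdeal R) R] (hp : (p : R) ∈ IsLocalRing.maximalIdeal R)
    (l : List R) (hl : ∀ x ∈ l, x ∈ IsLocalRing.maximalIdeal R) :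
    ∃ φ : T p l.length →+* R,
      (IsLocalRing.maximalIdeal (T p l.length)).map φ ≤ IsLocalRing.maximalIdeal R ∧
      (p : R) ∈ (IsLocalRing.maximalIdeal (T p l.length)).map φ ∧
      ∀ x ∈ l, x ∈ (IsLocalRing.maximalIdeal (T p l.length)).map φ := by
  induction l with
  | nil =>
    obtain ⟨φ⟩ := exists_padicHom p _ hp
    have e : (IsLocalRing.maximalIdeal ℤ_[p]).map φ = Ideal.span {(p : R)} := by
      rw [PadicInt.maximalIdeal_eq_span_p, Ideal.map_span]
      simp
    refine ⟨φ, ?_, ?_, by simp⟩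
    · refine e.le.trans ?_
      rwa [Ideal.span_singleton_le_iff_mem]
    · exact e.ge (Ideal.mem_span_singleton_self _)
  | cons x l ih =>
    obtain ⟨φ, h1, h2, h3⟩ := ih fun y hy => hl y (List.mem_cons_of_mem _ hy)
    obtain ⟨ψ, g1, g2, g3⟩ := exists_hom_step (T p l.length) R φ h1 x (hl x List.mem_cons_self)
    refine ⟨ψ, g1, g2 h2, ?_⟩
    intro y hy
    rcases List.mem_cons.1 hy with rfl | hy
    · exact g3
    · exact g2 (h3 y hy)

theorem cohen (p : ℕ) [Fact p.Prime] (R : Type) [CommRing R] [IsDomain R] [IsNoetherianRing R]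
    [IsLocalRing R] [IsAdicComplete (IsLocalRing.maximalIdeal R) R]
    [Finite (IsLocalRing.ResidueField R)] [CharP (IsLocalRing.ResidueField R) p] [CharZero R]
    (hR : 2 < ringKrullDim R) :
    ∃ d, 2 ≤ d ∧ ∃ φ : T p d →+* R, φ.Finite ∧ Function.Injective φ := by
  have hp : (p : R) ∈ IsLocalRing.maximalIdeal R := by
    rw [← IsLocalRing.residue_eq_zero_iff, map_natCast, CharP.cast_eq_zero]
  have hp0 : (p : R) ≠ 0 := by exact_mod_cast (Fact.out : p.Prime).ne_zero
  set P := Ideal.span {(p : R)} with hP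
  have hPle : P ≤ IsLocalRing.maximalIdeal R := by rwa [hP, Ideal.span_singleton_le_iff_mem]
  have : Nontrivial (R ⧸ P) := Ideal.Quotient.nontrivial_iff.2 fun h =>
    (IsLocalRing.maximalIdeal.isMaximal R).ne_top (top_le_iff.1 (h ▸ hPle))
  have : IsLocalRing (R ⧸ P) :=
    IsLocalRing.of_surjective' (Ideal.Quotient.mk P) Ideal.Quotient.mk_surjective
  have hloc : IsLocalHom (Ideal.Quotient.mk P) :=
    IsLocalHom.of_surjective _ Ideal.Quotient.mk_surjective
  have hdim : ringKrullDim (R ⧸ P) + 1 = ringKrullDim R :=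
    ringKrullDim_quotient_span_singleton_succ_eq_ringKrullDim_of_mem_nonZeroDivisors
      (mem_nonZeroDivisors_of_ne_zero hp0) hp
  obtain ⟨s, hs, hcard⟩ := Ideal.exists_finset_card_eq_height_of_isNoetherianRing
    (IsLocalRing.maximalIdeal (R ⧸ P))
  have hdim2 : ringKrullDim R = ((s.card + 1 : ℕ) : WithBot ℕ∞) := by
    rw [← hdim, ← IsLocalRing.maximalIdeal_height_eq_ringKrullDim, ← hcard]
    push_cast
    rfl
  set lift := Function.surjInv (Ideal.Quotient.mk_surjective (I := P)) with hlift
  have hmk : ∀ x, Ideal.Quotient.mk P (lift x) = x := Function.surjInv_eq _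
  set l := s.toList.map lift with hl
  have hlen : l.length = s.card := by simp [hl]
  have hlm : ∀ x ∈ l, x ∈ IsLocalRing.maximalIdeal R := by
    intro x hx
    rw [hl, List.mem_map] at hx
    obtain ⟨y, hy, rfl⟩ := hx
    have hy2 : y ∈ IsLocalRing.maximalIdeal (R ⧸ P) :=
      hs.1.2 (Ideal.subset_span (Finset.mem_toList.1 hy))
    intro hu
    apply hy2
    rw [← hmk y]
    exact hu.map _
  obtain ⟨φ, h1, h2, h3⟩ := exists_hom p R hp l hlm
  set K := (IsLocalRing.maximalIdeal (T p l.length)).map φ with hK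
  have hPK : P ≤ K := by rwa [hP, Ideal.span_singleton_le_iff_mem]
  have hrad : IsLocalRing.maximalIdeal (R ⧸ P) ≤ (Ideal.span (s : Set (R ⧸ P))).radical := by
    rw [Ideal.radical_eq_sInf]
    refine le_sInf ?_
    rintro J ⟨hJ1, hJ2⟩
    exact hs.2 ⟨hJ2, hJ1⟩ (IsLocalRing.le_maximalIdeal hJ2.ne_top)
  obtain ⟨n, hn⟩ := Ideal.exists_pow_le_of_le_radical_of_fg hrad (IsNoetherian.noetherian _)
  have hmn : IsLocalRing.maximalIdeal R ^ n ≤ K := by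
    intro x hx
    rw [← Ideal.comap_map_mk hPK, Ideal.mem_comap]
    have e1 : (IsLocalRing.maximalIdeal R).map (Ideal.Quotient.mk P) ≤
        IsLocalRing.maximalIdeal (R ⧸ P) := by
      rw [Ideal.map_le_iff_le_comap]
      intro y hy hu
      exact hy (IsUnit.of_map (Ideal.Quotient.mk P) _ hu)
    have e2 := Ideal.mem_map_of_mem (Ideal.Quotient.mk P) hx
    rw [Ideal.map_pow] at e2
    have e3 := hn (Ideal.pow_right_mono e1 n e2)
    refine (Ideal.span_le.2 ?_) e3
    intro y hy
    rw [← hmk y]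
    apply Ideal.mem_map_of_mem
    apply h3
    rw [hl, List.mem_map]
    exact ⟨y, Finset.mem_toList.2 hy, rfl⟩
  have hf1 : Finite (R ⧸ IsLocalRing.maximalIdeal R) :=
    inferInstanceAs (Finite (IsLocalRing.ResidueField R))
  have hf2 : Finite (R ⧸ IsLocalRing.maximalIdeal R ^ n) :=
    Ideal.finite_quotient_pow (IsNoetherian.noetherian _) n
  have hf3 : Finite (R ⧸ K) := Finite.of_surjective _ (Ideal.Quotient.factor_surjective hmn)
  have hfin := finite_T p _ R φ h1 hf3
  refine ⟨l.length, ?_, φ, hfin, ?_⟩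
  · rw [hdim2] at hR
    have : 2 < s.card + 1 := by exact_mod_cast hR
    omega
  · rw [injective_iff_map_eq_zero]
    intro f hf
    by_contra hf0
    have := (tprops p l.length).dom
    have hT := (tprops p l.length).dim
    have hle := ringKrullDim_quotient_succ_le_of_nonZeroDivisor (mem_nonZeroDivisors_of_ne_zero hf0)
    let φ' : (T p l.length ⧸ Ideal.span {f}) →+* R := Ideal.Quotient.lift _ φ (by
      intro a ha
      obtain ⟨b, rfl⟩ := Ideal.mem_span_singleton.1 ha
      rw [map_mul, hf, zero_mul])
    have hφ' : φ'.Finite := by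
      refine RingHom.Finite.of_comp_finite (f := Ideal.Quotient.mk _) ?_
      exact hfin
    algebraize [φ']
    have h4 : ringKrullDim R ≤ ringKrullDim (T p l.length ⧸ Ideal.span {f}) := dim_le_of_integral
    rw [hT] at hle
    have h5 := (add_le_add_left h4 1).trans hle
    rw [hdim2, hlen] at h5
    have h6 : s.card + 1 + 1 ≤ s.card + 1 := by exact_mod_cast h5
    omega

theorem T_down (p : ℕ) [Fact p.Prime] (d : ℕ) :
    ∃ f : T p (d + 2) →+* T p 2, Function.Injective f := by
  have key : ∀ d, ∃ f : T p (d + 3) →+* T p (d + 2), Function.Injective f := by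
    intro d
    have := (tprops p d).dom
    exact exists_three_two (T p d)
  induction d with
  | zero => exact ⟨RingHom.id _, fun _ _ h => h⟩
  | succ d ih =>
    obtain ⟨f, hf⟩ := ih
    obtain ⟨g, hg⟩ := key d
    exact ⟨f.comp g, hf.comp hg⟩

theorem T_up (p : ℕ) [Fact p.Prime] (d : ℕ) :
    ∃ f : T p 2 →+* T p (d + 2), Function.Injective f := by
  induction d with
  | zero => exact ⟨RingHom.id _, fun _ _ h => h⟩
  | succ d ih =>
    obtain ⟨f, hf⟩ := ih
    exact ⟨(PowerSeries.C (R := T p (d + 2))).comp f, PowerSeries.C_injective.comp hf⟩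

theorem gl_of_emb (R S : Type) [CommRing R] [CommRing S] (h : Emb R S) (n : ℕ) :
    ∃ (m : ℕ) (f : Matrix.GeneralLinearGroup (Fin n) R →* Matrix.GeneralLinearGroup (Fin m) S),
      Function.Injective f := by
  obtain ⟨k, f, hf⟩ := h
  let e := (Matrix.compRingEquiv (Fin n) (Fin k) S).trans
    (Matrix.reindexRingEquiv S (finProdFinEquiv (m := n) (n := k)))
  let F : Matrix (Fin n) (Fin n) R →+* Matrix (Fin (n * k)) (Fin (n * k)) S :=
    (e : _ →+* _).comp (RingHom.mapMatrix f)
  have hF : Function.Injective F := by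
    intro x y hxy
    have h1 : f.mapMatrix x = f.mapMatrix y := e.injective hxy
    exact Matrix.map_injective hf h1
  exact ⟨n * k, Units.map F.toMonoidHom, Units.map_injective hF⟩

theorem emb_main (p : ℕ) [Fact p.Prime] (R : Type) [CommRing R] [IsDomain R] [IsNoetherianRing R]
    [IsLocalRing R] [IsAdicComplete (IsLocalRing.maximalIdeal R) R]
    [Finite (IsLocalRing.ResidueField R)] [CharP (IsLocalRing.ResidueField R) p] [CharZero R]
    (S : Type) [CommRing S] [IsDomain S] [IsNoetherianRing S]
    [IsLocalRing S] [IsAdicComplete (IsLocalRing.maximalIdeal S) S]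
    [Finite (IsLocalRing.ResidueField S)] [CharP (IsLocalRing.ResidueField S) p] [CharZero S]
    (hR : 2 < ringKrullDim R) (hS : 2 < ringKrullDim S) : Emb R S := by
  obtain ⟨d, hd, φ, hφ, hφi⟩ := cohen p R hR
  obtain ⟨d', hd', ψ, -, hψi⟩ := cohen p S hS
  obtain ⟨a, rfl⟩ := Nat.exists_eq_add_of_le' hd
  obtain ⟨b, rfl⟩ := Nat.exists_eq_add_of_le' hd'
  obtain ⟨f, hf⟩ := T_down p a
  obtain ⟨g, hg⟩ := T_up p b
  algebraize [φ]
  have : FaithfulSMul (T p (a + 2)) R := (faithfulSMul_iff_algebraMap_injective _ _).2 hφi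
  obtain ⟨k, F, hF⟩ := (tprops p (a + 2)).fin R
  refine ⟨k, (RingHom.mapMatrix (ψ.comp (g.comp f))).comp F, ?_⟩
  exact (Matrix.map_injective (hψi.comp (hg.comp hf))).comp hF

end LinTr


/-- Let `R`, `S` be commutative Noetherian local pro-`p` domains of
characteristic zero and Krull dimension `> 2`. Then every subgroup of `GL_n(R)` embeds
into `GL_m(S)` for some `m`. -/
theorem linear_transfer_char_zero_dim_gt_two (p : ℕ) [Fact p.Prime]
    (R : Type) [CommRing R] [IsDomain R] [IsNoetherianRing R] [IsLocalRing R]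
    [IsAdicComplete (IsLocalRing.maximalIdeal R) R]
    [Finite (IsLocalRing.ResidueField R)] [CharP (IsLocalRing.ResidueField R) p]
    [CharZero R]
    (S : Type) [CommRing S] [IsDomain S] [IsNoetherianRing S] [IsLocalRing S]
    [IsAdicComplete (IsLocalRing.maximalIdeal S) S]
    [Finite (IsLocalRing.ResidueField S)] [CharP (IsLocalRing.ResidueField S) p]
    [CharZero S]
    (hR : 2 < ringKrullDim R) (hS : 2 < ringKrullDim S)
    (n : ℕ) (G : Subgroup (Matrix.GeneralLinearGroup (Fin n) R)) :
    ∃ (m : ℕ) (f : G →* Matrix.GeneralLinearGroup (Fin m) S),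
      Function.Injective f := by
  obtain ⟨m, f, hf⟩ := LinTr.gl_of_emb R S (LinTr.emb_main p R S hR hS) n
  exact ⟨m, f.comp G.subtype, hf.comp G.subtype_injective⟩
end

section
/- Let p be a prime and let R and S be commutative Noetherian local pro-p domains of characteristic zero such that the Krull dimension of R is at most 2 and the Krull dimension of S is greater than or equal to the Krull dimension of R. Then for every natural number n and every subgroup G of GL_n(R) there exist a natural number m and an injective group homomorphism from G into GL_m(S). -/
/-- An injective ring hom `R → Mat_d(S)` gives embeddings of linear groups. -/
theorem glEmbed {R S : Type} [CommRing R] [CommRing S] (d : ℕ)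
    (f : R →+* Matrix (Fin d) (Fin d) S) (hf : Function.Injective f) (n : ℕ)
    (G : Subgroup (Matrix.GeneralLinearGroup (Fin n) R)) :
    ∃ (m : ℕ) (f : G →* Matrix.GeneralLinearGroup (Fin m) S),
      Function.Injective f := by
  let e : Fin n × Fin d ≃ Fin (n * d) := finProdFinEquiv
  let g : Matrix (Fin n) (Fin n) R →* Matrix (Fin (n * d)) (Fin (n * d)) S :=
    ((Matrix.reindexRingEquiv S e).toRingHom.comp
      ((Matrix.compRingEquiv (Fin n) (Fin d) S).toRingHom.comp f.mapMatrix)).toMonoidHom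
  have hg : Function.Injective g := by
    have h1 : Function.Injective (f.mapMatrix : Matrix (Fin n) (Fin n) R →+* _) :=
      Matrix.map_injective hf
    exact (Matrix.reindexRingEquiv S e).injective.comp
      ((Matrix.compRingEquiv (Fin n) (Fin d) S).injective.comp h1)
  exact ⟨n * d, (Units.map g).comp G.subtype, (Units.map_injective hg).comp Subtype.val_injective⟩

/-- Complete Nakayama for a principal ideal. -/
theorem finite_of_principal {B M : Type*} [CommRing B] [AddCommGroup M] [Module B M] (a : B)
    [IsPrecomplete (Ideal.span {a}) B] [IsHausdorff (Ideal.span {a}) M]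
    [hfin : Module.Finite B (M ⧸ (Ideal.span {a} • ⊤ : Submodule B M))] : Module.Finite B M := by
  obtain ⟨k, g, hg⟩ := Module.Finite.exists_fin' B (M ⧸ (Ideal.span {a} • ⊤ : Submodule B M))
  obtain ⟨f, hf⟩ := Module.projective_lifting_property
    (Submodule.mkQ (Ideal.span {a} • ⊤ : Submodule B M)) g (Submodule.mkQ_surjective _)
  have key : ∀ (N : Type _) [AddCommGroup N] [Module B N] (n : ℕ) (x y : N),
      x ≡ y [SMOD (Ideal.span {a} ^ n • ⊤ : Submodule B N)] ↔ ∃ z : N, x - y = a ^ n • z := by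
    intro N _ _ n x y
    rw [SModEq.sub_mem, Ideal.span_singleton_pow, Submodule.ideal_span_singleton_smul,
      Submodule.mem_smul_pointwise_iff_exists]
    simp [eq_comm]
  have : IsPrecomplete (Ideal.span {a}) (Fin k → B) := by
    refine ⟨fun F hF => ?_⟩
    have h1 : ∀ i, ∃ L : B, ∀ n, F n i ≡ L [SMOD (Ideal.span {a} ^ n • ⊤ : Submodule B B)] := by
      intro i
      refine IsPrecomplete.prec' (fun n => F n i) ?_
      intro m n hmn
      obtain ⟨z, hz⟩ := (key _ _ _ _).1 (hF hmn)
      exact (key _ _ _ _).2 ⟨z i, congrFun hz i⟩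
    choose L hL using h1
    refine ⟨L, fun n => (key _ _ _ _).2 ?_⟩
    have h2 := fun i => (key _ _ _ _).1 (hL i n)
    choose z hz using h2
    exact ⟨z, funext hz⟩
  have hs : Function.Surjective f := by
    apply surjective_of_mkQ_comp_surjective (I := Ideal.span {a})
    rw [hf]; exact hg
  exact Module.Finite.of_surjective f hs

theorem powerSeries_precomplete (B : Type*) [CommRing B] :
    IsPrecomplete (Ideal.span {(PowerSeries.X : PowerSeries B)}) (PowerSeries B) := by
  refine ⟨fun F hF => ?_⟩
  simp only [SModEq.sub_mem, smul_eq_mul, Ideal.mul_top, Ideal.span_singleton_pow,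
    Ideal.mem_span_singleton, PowerSeries.X_pow_dvd_iff, map_sub, sub_eq_zero] at hF ⊢
  refine ⟨PowerSeries.mk fun i => PowerSeries.coeff i (F (i + 1)), fun n m hm => ?_⟩
  rw [PowerSeries.coeff_mk]
  exact (hF (show m + 1 ≤ n by omega) m (by omega)).symm

/-- Evaluation of power series at elements of the maximal ideal. -/
theorem exists_eval {B R : Type*} [CommRing B] [CommRing R] (I : Ideal R) [IsAdicComplete I R]
    (φ : B →+* R) (r : R) (hr : r ∈ I) :
    ∃ ψ : PowerSeries B →+* R, ∀ f : Polynomial B, ψ (f : PowerSeries B) = f.eval₂ φ r := by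
  let : WithIdeal R := ⟨I⟩
  have h := (IsAdic.isAdicComplete_iff (R := R) (I := I) rfl).1 inferInstance
  have := h.1
  have := h.2
  let : UniformSpace B := ⊥
  have : DiscreteUniformity B := ⟨rfl⟩
  have hc : Continuous φ := continuous_of_discreteTopology
  have ha : PowerSeries.HasEval r := WithIdeal.isTopologicallyNilpotent_of_mem hr
  have : IsTopologicalRing B := inferInstance
  have : IsUniformAddGroup B := inferInstance
  refine ⟨PowerSeries.eval₂Hom hc ha, fun f => ?_⟩
  rw [PowerSeries.coe_eval₂Hom, PowerSeries.eval₂_coe]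

/-- The structure map `ℤ_p → R`. -/
theorem exists_padic (p : ℕ) [Fact p.Prime] {R : Type*} [CommRing R] (I : Ideal R)
    [IsAdicComplete I R] (hp : (p : R) ∈ I) : Nonempty (ℤ_[p] →+* R) := by
  have hd : ∀ n, ringChar (R ⧸ I ^ n) ∣ p ^ n := by
    intro n
    rw [← ringChar.spec]
    have : Ideal.Quotient.mk (I ^ n) ((p : R) ^ n) = 0 :=
      Ideal.Quotient.eq_zero_iff_mem.2 (Ideal.pow_mem_pow hp n)
    simpa using this
  refine ⟨IsAdicComplete.liftRingHom I
    (fun n => (ZMod.castHom (hd n) (R ⧸ I ^ n)).comp (PadicInt.toZModPow n)) ?_⟩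
  intro m n hle
  rw [← PadicInt.zmod_cast_comp_toZModPow m n hle, ← RingHom.comp_assoc, ← RingHom.comp_assoc]
  congr 1
  exact RingHom.ext_zmod _ _

theorem lift_range {B N K : Type*} [CommRing B] [AddCommGroup N] [Module B N] [AddCommGroup K]
    [Module B K] (h : N →ₗ[B] K) (i : B →ₗ[B] K) (hi : Function.Injective i)
    (hr : ∀ x, h x ∈ LinearMap.range i) : ∃ g : N →ₗ[B] B, ∀ x, i (g x) = h x := by
  refine ⟨(LinearEquiv.ofInjective i hi).symm.toLinearMap ∘ₗ h.codRestrict _ hr, fun x => ?_⟩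
  have := LinearEquiv.apply_symm_apply (LinearEquiv.ofInjective i hi) (h.codRestrict _ hr x)
  exact congrArg Subtype.val this

/-- A dual of a f.g. module over a `2`-dimensional regular ring is free. -/
theorem dual_free {B N : Type*} [CommRing B] [IsDomain B] [IsNoetherianRing B]
    [AddCommGroup N] [Module B N] [Module.Finite B N] (a : B) (ha0 : a ≠ 0)
    (ha : a ∈ (⊥ : Ideal B).jacobson) [IsDomain (B ⧸ Ideal.span {a})]
    [IsPrincipalIdealRing (B ⧸ Ideal.span {a})] : Module.Free B (Module.Dual B N) := by
  have hinj : Function.Injective (LinearMap.mulLeft B a) := fun x y h => mul_left_cancel₀ ha0 h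
  have hprime : (Ideal.span {a}).IsPrime :=
    (Ideal.Quotient.isDomain_iff_prime _).1 inferInstance
  have reg : IsSMulRegular (Module.Dual B N) a := by
    intro f g h
    ext x
    exact mul_left_cancel₀ ha0 (LinearMap.congr_fun h x)
  have hfin : Module.Finite B (Module.Dual B N) := inferInstance
  have : Module.FinitePresentation B (Module.Dual B N) :=
    Module.finitePresentation_of_finite B _
  rw [← Module.free_quotSMulTop_iff_free B _ ha reg]
  have h1 : Module.Finite (B ⧸ Ideal.span {a}) (QuotSMulTop a (Module.Dual B N)) :=
    Module.Finite.of_restrictScalars_finite B _ _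
  have h2 : Module.IsTorsionFree (B ⧸ Ideal.span {a}) (QuotSMulTop a (Module.Dual B N)) := by
    rw [Module.isTorsionFree_iff_smul_eq_zero]
    intro c m hcm
    obtain ⟨c, rfl⟩ := Ideal.Quotient.mk_surjective c
    obtain ⟨m, rfl⟩ := Submodule.Quotient.mk_surjective _ m
    by_cases hc : c ∈ Ideal.span {a}
    · left; exact Ideal.Quotient.eq_zero_iff_mem.2 hc
    right
    have h3 : (Submodule.Quotient.mk (c • m) : QuotSMulTop a (Module.Dual B N)) = 0 := hcm
    rw [Submodule.Quotient.mk_eq_zero, Submodule.mem_smul_pointwise_iff_exists] at h3 ⊢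
    obtain ⟨g, -, hg⟩ := h3
    obtain ⟨g', hg'⟩ := lift_range m (LinearMap.mulLeft B a) hinj (by
      intro x
      have h4 : a * g x = c * m x := LinearMap.congr_fun hg x
      have h5 : c * m x ∈ Ideal.span {a} := by
        rw [← h4]; exact Ideal.mul_mem_right _ _ (Ideal.mem_span_singleton_self a)
      rcases hprime.mem_or_mem h5 with h | h
      · exact absurd h hc
      · obtain ⟨y, hy⟩ := Ideal.mem_span_singleton.1 h
        exact ⟨y, hy.symm⟩)
    exact ⟨g', trivial, LinearMap.ext hg'⟩
  infer_instance

theorem exists_functional {B R : Type*} [CommRing B] [IsDomain B] [CommRing R] [IsDomain R]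
    [Algebra B R] [Module.Finite B R] (hinj : Function.Injective (algebraMap B R)) :
    ∃ f : Module.Dual B R, f 1 ≠ 0 := by
  have : FaithfulSMul B R := (faithfulSMul_iff_algebraMap_injective B R).2 hinj
  let K := FractionRing B
  let L := FractionRing R
  let : Algebra K L := FractionRing.liftAlgebra B L
  have : IsScalarTower B K L := FractionRing.isScalarTower_liftAlgebra B L
  obtain ⟨g, hg⟩ := Module.Projective.exists_dual_ne_zero K (x := (1 : L)) one_ne_zero
  let h : R →ₗ[B] K := (g.restrictScalars B) ∘ₗ (IsScalarTower.toAlgHom B R L).toLinearMap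
  obtain ⟨s, hs⟩ := Module.Finite.fg_top (R := B) (M := R)
  classical
  obtain ⟨b, hb⟩ := IsLocalization.exist_integer_multiples_of_finset (nonZeroDivisors B)
    (s.image h)
  have hall : ∀ x, ((b : B) • h) x ∈ LinearMap.range (Algebra.linearMap B K) := by
    intro x
    have hx : x ∈ Submodule.span B (s : Set R) := by rw [hs]; trivial
    induction hx using Submodule.span_induction with
    | mem x hx => exact hb (h x) (Finset.mem_image_of_mem _ hx)
    | zero => rw [map_zero]; exact Submodule.zero_mem _
    | add x y _ _ h1 h2 => rw [map_add]; exact Submodule.add_mem _ h1 h2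
    | smul c x _ h1 => rw [map_smul]; exact Submodule.smul_mem _ _ h1
  obtain ⟨f, hf⟩ := lift_range ((b : B) • h) (Algebra.linearMap B K)
    (IsFractionRing.injective B K) hall
  refine ⟨f, fun h0 => ?_⟩
  have h1 := hf 1
  rw [h0, map_zero] at h1
  have h2 : (b : B) • h 1 = 0 := h1.symm
  have h3 : h 1 = g 1 := by simp [h]
  rw [h3, Algebra.smul_def] at h2
  rcases mul_eq_zero.1 h2 with h4 | h4
  · have : (b : B) = 0 := by
      apply IsFractionRing.injective B K; rw [h4, map_zero]
    exact nonZeroDivisors.ne_zero b.2 this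
  · exact hg h4

theorem matrix_embed {B R S : Type*} [CommRing B] [IsDomain B] [IsNoetherianRing B]
    [CommRing R] [IsDomain R] [CommRing S]
    [Algebra B R] [Module.Finite B R] (hinj : Function.Injective (algebraMap B R))
    [Module.Free B (Module.Dual B R)] (ψ : B →+* S) (hψ : Function.Injective ψ) :
    ∃ (d : ℕ) (f : R →+* Matrix (Fin d) (Fin d) S), Function.Injective f := by
  let ρ : R →+* Module.End B (Module.Dual B R) :=
    { toFun := fun r => (LinearMap.mulLeft B r).dualMap
      map_one' := by ext; simp
      map_zero' := by ext; simp
      map_mul' := fun x y => by ext f z; simp [mul_left_comm]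
      map_add' := fun x y => by ext f z; simp [add_mul] }
  have hρ : Function.Injective ρ := by
    rw [injective_iff_map_eq_zero]
    intro r hr
    by_contra hr0
    obtain ⟨f, hf⟩ := exists_functional (B := B) (R := R) hinj
    have hint : IsIntegral B r := Algebra.IsIntegral.isIntegral r
    have : FaithfulSMul B R := (faithfulSMul_iff_algebraMap_injective B R).2 hinj
    have hI : Ideal.comap (algebraMap B R) (Ideal.span {r}) ≠ ⊥ :=
      Ideal.comap_ne_bot_of_integral_mem hr0 (Ideal.mem_span_singleton_self r) hint
    obtain ⟨b, hb, hb0⟩ := Submodule.exists_mem_ne_zero_of_ne_bot hI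
    obtain ⟨x, hx⟩ := Ideal.mem_span_singleton.1 (Ideal.mem_comap.1 hb)
    have h1 : f (r * x) = 0 := LinearMap.congr_fun (LinearMap.congr_fun hr f) x
    rw [← hx, Algebra.algebraMap_eq_smul_one, map_smul, smul_eq_mul] at h1
    exact (mul_ne_zero hb0 hf) h1
  let b := Module.finBasis B (Module.Dual B R)
  refine ⟨_, (ψ.mapMatrix).comp ((LinearMap.toMatrixAlgEquiv b).toRingEquiv.toRingHom.comp ρ), ?_⟩
  exact (Matrix.map_injective hψ).comp ((LinearMap.toMatrixAlgEquiv b).injective.comp hρ)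

theorem padic_inj (p : ℕ) [Fact p.Prime] {T : Type*} [CommRing T] [IsDomain T] [CharZero T]
    (φ : ℤ_[p] →+* T) : Function.Injective φ := by
  have h0 : φ (p : ℤ_[p]) ≠ 0 := by
    rw [map_natCast]; exact_mod_cast (Fact.out : p.Prime).ne_zero
  rw [injective_iff_map_eq_zero]
  intro x hx
  by_contra hx0
  rw [PadicInt.unitCoeff_spec hx0, map_mul, map_pow] at hx
  rcases mul_eq_zero.1 hx with h | h
  · exact ((PadicInt.unitCoeff hx0).isUnit.map φ).ne_zero h
  · exact pow_ne_zero _ h0 h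

theorem eval_inj (p : ℕ) [Fact p.Prime] {T : Type*} [CommRing T] [IsDomain T] [CharZero T]
    (φ : ℤ_[p] →+* T) (ψ : PowerSeries ℤ_[p] →+* T) (s : T)
    (hψ : ∀ f : Polynomial ℤ_[p], ψ (f : PowerSeries ℤ_[p]) = f.eval₂ φ s)
    (P : Ideal T) [P.IsPrime] (hpP : (p : T) ∈ P) (hs : s ∉ P) : Function.Injective ψ := by
  have hp0 : (p : T) ≠ 0 := by exact_mod_cast (Fact.out : p.Prime).ne_zero
  have hφP : ∀ x ∈ IsLocalRing.maximalIdeal ℤ_[p], φ x ∈ P := by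
    intro x hx
    rw [PadicInt.maximalIdeal_eq_span_p] at hx
    obtain ⟨y, rfl⟩ := Ideal.mem_span_singleton.1 hx
    rw [map_mul, map_natCast]
    exact P.mul_mem_right _ hpP
  have hW : ∀ g, ψ g = 0 → g.map (IsLocalRing.residue ℤ_[p]) = 0 := by
    intro g hg
    by_contra hne
    obtain ⟨f, h, H⟩ := PowerSeries.exists_isWeierstrassFactorization hne
    rw [H.eq_mul, map_mul, hψ] at hg
    rcases mul_eq_zero.1 hg with h1 | h1
    · rw [Polynomial.eval₂_eq_sum_range, Finset.sum_range_succ] at h1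
      have hm : f.coeff f.natDegree = 1 := H.isDistinguishedAt.monic
      rw [hm, map_one, one_mul] at h1
      have h2 : s ^ f.natDegree ∈ P := by
        rw [eq_neg_of_add_eq_zero_right h1]
        refine P.neg_mem (P.sum_mem fun i hi => P.mul_mem_right _ (hφP _ ?_))
        exact H.isDistinguishedAt.mem (Finset.mem_range.1 hi)
      exact hs (Ideal.IsPrime.mem_of_pow_mem inferInstance _ h2)
    · exact (H.isUnit.map ψ).ne_zero h1
  have hdiv : ∀ n : ℕ, ∀ g, ψ g = 0 → ∀ i, (p : ℤ_[p]) ^ n ∣ PowerSeries.coeff i g := by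
    intro n
    induction n with
    | zero => intro g _ i; simp
    | succ n ih =>
      intro g hg i
      have h1 : ∀ i, ∃ y, PowerSeries.coeff i g = (p : ℤ_[p]) * y := by
        intro i
        have := congrArg (PowerSeries.coeff i) (hW g hg)
        rw [PowerSeries.coeff_map, map_zero, IsLocalRing.residue_eq_zero_iff,
          PadicInt.maximalIdeal_eq_span_p] at this
        exact Ideal.mem_span_singleton.1 this
      choose y hy using h1
      have h2 : g = PowerSeries.C (p : ℤ_[p]) * PowerSeries.mk y := by
        ext i; rw [PowerSeries.coeff_C_mul, PowerSeries.coeff_mk, hy]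
      have h3 : ψ (PowerSeries.mk y) = 0 := by
        rw [h2, map_mul, map_natCast, map_natCast] at hg
        exact (mul_eq_zero.1 hg).resolve_left hp0
      have h4 := ih _ h3 i
      rw [PowerSeries.coeff_mk] at h4
      rw [hy, pow_succ']
      exact mul_dvd_mul_left _ h4
  rw [injective_iff_map_eq_zero]
  intro g hg
  ext i
  rw [map_zero]
  apply IsHausdorff.haus (I := IsLocalRing.maximalIdeal ℤ_[p]) inferInstance
  intro n
  rw [SModEq.zero, smul_eq_mul, Ideal.mul_top, PadicInt.maximalIdeal_eq_span_p,
    Ideal.span_singleton_pow, Ideal.mem_span_singleton]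
  exact hdiv n g hg i

theorem hausdorff_of_local {B R M : Type*} [CommRing B] [CommRing R] [IsNoetherianRing R]
    [IsLocalRing R] [Algebra B R] [AddCommGroup M] [Module R M] [Module B M] [IsScalarTower B R M]
    [Module.Finite R M] (a : B) (ha : algebraMap B R a ∈ IsLocalRing.maximalIdeal R) :
    IsHausdorff (Ideal.span {a}) M := by
  refine ⟨fun x hx => ?_⟩
  have h := Ideal.iInf_pow_smul_eq_bot_of_isLocalRing (M := M) (IsLocalRing.maximalIdeal R)
    (Ideal.IsPrime.ne_top inferInstance)
  rw [← Submodule.mem_bot R, ← h, Submodule.mem_iInf]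
  intro n
  have h1 := hx n
  rw [SModEq.zero, Ideal.span_singleton_pow, Submodule.ideal_span_singleton_smul,
      Submodule.mem_smul_pointwise_iff_exists] at h1
  obtain ⟨y, -, rfl⟩ := h1
  have h2 : a ^ n • y = (algebraMap B R a) ^ n • y := by
    rw [← map_pow, algebraMap_smul]
  rw [h2]
  exact Submodule.smul_mem_smul (Ideal.pow_mem_pow ha n) trivial

theorem finite_padic (p : ℕ) [Fact p.Prime] {R : Type*} [CommRing R] [IsNoetherianRing R]
    [IsLocalRing R] [Finite (IsLocalRing.ResidueField R)] [Algebra ℤ_[p] R]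
    (hp : (p : R) ∈ IsLocalRing.maximalIdeal R) (J : Ideal R) (k : ℕ)
    (hk : IsLocalRing.maximalIdeal R ^ k ≤ J ⊔ Ideal.span {(p : R)}) :
    Module.Finite ℤ_[p] (R ⧸ J) := by
  have : IsPrecomplete (Ideal.span {(p : ℤ_[p])}) ℤ_[p] := by
    rw [← PadicInt.maximalIdeal_eq_span_p]; infer_instance
  have : IsHausdorff (Ideal.span {(p : ℤ_[p])}) (R ⧸ J) :=
    hausdorff_of_local (R := R) _ (by rwa [map_natCast])
  have : Finite (R ⧸ IsLocalRing.maximalIdeal R) := ‹Finite (IsLocalRing.ResidueField R)›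
  have : Finite (R ⧸ IsLocalRing.maximalIdeal R ^ k) :=
    Ideal.finite_quotient_pow (IsNoetherian.noetherian _) k
  let Q : Submodule ℤ_[p] (R ⧸ J) := Ideal.span {(p : ℤ_[p])} • ⊤
  let f : R →+ (R ⧸ J) ⧸ Q := Q.mkQ.toAddMonoidHom.comp (Ideal.Quotient.mk J).toAddMonoidHom
  have hf : Function.Surjective f := Q.mkQ_surjective.comp Ideal.Quotient.mk_surjective
  have hker : ∀ x ∈ IsLocalRing.maximalIdeal R ^ k, f x = 0 := by
    intro x hx
    obtain ⟨j, hj, c, hc, rfl⟩ := Submodule.mem_sup.1 (hk hx)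
    obtain ⟨y, rfl⟩ := Ideal.mem_span_singleton.1 hc
    change Q.mkQ (Ideal.Quotient.mk J (j + p * y)) = 0
    rw [map_add, Ideal.Quotient.eq_zero_iff_mem.2 hj, zero_add, Submodule.mkQ_apply,
      Submodule.Quotient.mk_eq_zero, map_mul, map_natCast]
    have : (p : R ⧸ J) * Ideal.Quotient.mk J y = (p : ℤ_[p]) • Ideal.Quotient.mk J y := by
      rw [Algebra.smul_def, map_natCast]
    rw [this]
    exact Submodule.smul_mem_smul (Ideal.mem_span_singleton_self _) trivial
  have hfin : Finite ((R ⧸ J) ⧸ Q) := by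
    let f' : (R ⧸ IsLocalRing.maximalIdeal R ^ k) →+ (R ⧸ J) ⧸ Q :=
      QuotientAddGroup.lift _ f hker
    refine Finite.of_surjective f' ?_
    intro y
    obtain ⟨x, rfl⟩ := hf y
    exact ⟨Ideal.Quotient.mk _ x, rfl⟩
  have : Module.Finite ℤ_[p] ((R ⧸ J) ⧸ Q) := inferInstance
  exact finite_of_principal (p : ℤ_[p])

theorem finite_powerSeries (p : ℕ) [Fact p.Prime] {R : Type*} [CommRing R] [IsNoetherianRing R]
    [IsLocalRing R] [Finite (IsLocalRing.ResidueField R)] [Algebra ℤ_[p] R]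
    [Algebra (PowerSeries ℤ_[p]) R] [IsScalarTower ℤ_[p] (PowerSeries ℤ_[p]) R]
    (hp : (p : R) ∈ IsLocalRing.maximalIdeal R) (r : R) (hr : r ∈ IsLocalRing.maximalIdeal R)
    (hX : algebraMap (PowerSeries ℤ_[p]) R PowerSeries.X = r) (k : ℕ)
    (hk : IsLocalRing.maximalIdeal R ^ k ≤ Ideal.span {r} ⊔ Ideal.span {(p : R)}) :
    Module.Finite (PowerSeries ℤ_[p]) R := by
  have h1 := finite_padic p hp (Ideal.span {r}) k hk
  have h2 : Module.Finite (PowerSeries ℤ_[p]) (R ⧸ Ideal.span {r}) :=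
    Module.Finite.of_restrictScalars_finite ℤ_[p] _ _
  have h3 := powerSeries_precomplete ℤ_[p]
  have h4 : IsHausdorff (Ideal.span {(PowerSeries.X : PowerSeries ℤ_[p])}) R :=
    hausdorff_of_local (R := R) _ (by rwa [hX])
  have h5 : Module.Finite (PowerSeries ℤ_[p])
      (R ⧸ (Ideal.span {(PowerSeries.X : PowerSeries ℤ_[p])} • ⊤ :
        Submodule (PowerSeries ℤ_[p]) R)) := by
    rw [Ideal.smul_top_eq_map, Ideal.map_span, Set.image_singleton, hX]
    exact Module.Finite.equiv
      (Submodule.Quotient.restrictScalarsEquiv (PowerSeries ℤ_[p]) (Ideal.span {r})).symm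
  exact finite_of_principal (PowerSeries.X : PowerSeries ℤ_[p])

theorem dual_free_powerSeries (p : ℕ) [Fact p.Prime] (N : Type*) [AddCommGroup N]
    [Module (PowerSeries ℤ_[p]) N] [Module.Finite (PowerSeries ℤ_[p]) N] :
    Module.Free (PowerSeries ℤ_[p]) (Module.Dual (PowerSeries ℤ_[p]) N) := by
  have hk : RingHom.ker (PowerSeries.constantCoeff (R := ℤ_[p])) = Ideal.span {PowerSeries.X} := by
    ext f
    rw [RingHom.mem_ker, Ideal.mem_span_singleton, PowerSeries.X_dvd_iff]
  have hs : Function.Surjective (PowerSeries.constantCoeff (R := ℤ_[p])) :=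
    fun c => ⟨PowerSeries.C c, by simp⟩
  let e : (PowerSeries ℤ_[p] ⧸ Ideal.span {(PowerSeries.X : PowerSeries ℤ_[p])}) ≃+* ℤ_[p] :=
    (Ideal.quotEquivOfEq hk.symm).trans (RingHom.quotientKerEquivOfSurjective hs)
  have : IsDomain (PowerSeries ℤ_[p] ⧸ Ideal.span {(PowerSeries.X : PowerSeries ℤ_[p])}) :=
    e.toMulEquiv.isDomain _
  have : IsPrincipalIdealRing
      (PowerSeries ℤ_[p] ⧸ Ideal.span {(PowerSeries.X : PowerSeries ℤ_[p])}) :=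
    IsPrincipalIdealRing.of_surjective e.symm.toRingHom e.symm.surjective
  refine dual_free (PowerSeries.X : PowerSeries ℤ_[p]) PowerSeries.X_ne_zero ?_
  rw [IsLocalRing.jacobson_eq_maximalIdeal _ bot_ne_top, IsLocalRing.mem_maximalIdeal,
    mem_nonunits_iff, PowerSeries.isUnit_iff_constantCoeff]
  simp

/-- If every prime containing `J` is the maximal ideal, then `J` contains a power of it. -/
theorem pow_le_of_primes {R : Type*} [CommRing R] [IsNoetherianRing R] [IsLocalRing R]
    (J : Ideal R) (h : ∀ Q : Ideal R, Q.IsPrime → J ≤ Q → Q = IsLocalRing.maximalIdeal R) :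
    ∃ k, IsLocalRing.maximalIdeal R ^ k ≤ J := by
  have h1 : IsLocalRing.maximalIdeal R ≤ J.radical := by
    rw [Ideal.radical_eq_sInf]
    refine le_sInf fun Q hQ => ?_
    rw [h Q hQ.2 hQ.1]
  obtain ⟨k, hk⟩ := Ideal.exists_radical_pow_le_of_fg J (IsNoetherian.noetherian _)
  exact ⟨k, (Ideal.pow_right_mono h1 k).trans hk⟩

theorem p_mem (p : ℕ) {R : Type*} [CommRing R] [IsLocalRing R]
    [CharP (IsLocalRing.ResidueField R) p] : (p : R) ∈ IsLocalRing.maximalIdeal R := by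
  rw [← IsLocalRing.residue_eq_zero_iff, map_natCast, CharP.cast_eq_zero]

theorem strictMono_height {R : Type*} [CommRing R] {P Q : Ideal R} [P.IsPrime] [Q.IsPrime]
    (h : P < Q) (n : ℕ) (hn : (n : ℕ∞) ≤ P.height) : ((n + 1 : ℕ) : ℕ∞) ≤ Q.height := by
  have := Ideal.height_add_one_le_of_lt_of_isPrime h
  push_cast
  exact (add_le_add_left hn 1).trans this

theorem matrix_embed_main (p : ℕ) [Fact p.Prime]
    (R : Type) [CommRing R] [IsDomain R] [IsNoetherianRing R] [IsLocalRing R]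
    [IsAdicComplete (IsLocalRing.maximalIdeal R) R]
    [Finite (IsLocalRing.ResidueField R)] [CharP (IsLocalRing.ResidueField R) p]
    [CharZero R]
    (S : Type) [CommRing S] [IsDomain S] [IsNoetherianRing S] [IsLocalRing S]
    [IsAdicComplete (IsLocalRing.maximalIdeal S) S]
    [CharP (IsLocalRing.ResidueField S) p]
    [CharZero S]
    (hR : ringKrullDim R ≤ 2) (hRS : ringKrullDim R ≤ ringKrullDim S) :
    ∃ (d : ℕ) (f : R →+* Matrix (Fin d) (Fin d) S), Function.Injective f := by
  have hpR : (p : R) ∈ IsLocalRing.maximalIdeal R := p_mem p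
  have hpS : (p : S) ∈ IsLocalRing.maximalIdeal S := p_mem p
  have hp0 : (p : R) ≠ 0 := by exact_mod_cast (Fact.out : p.Prime).ne_zero
  obtain ⟨φR⟩ := exists_padic p (IsLocalRing.maximalIdeal R) hpR
  obtain ⟨φS⟩ := exists_padic p (IsLocalRing.maximalIdeal S) hpS
  let : Algebra ℤ_[p] R := φR.toAlgebra
  by_cases hcase : ∀ Q : Ideal R, Q.IsPrime → Ideal.span {(p : R)} ≤ Q →
      Q = IsLocalRing.maximalIdeal R
  · -- dimension one
    obtain ⟨k, hk⟩ := pow_le_of_primes _ hcase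
    have h1 : Module.Finite ℤ_[p] (R ⧸ (⊥ : Ideal R)) :=
      finite_padic p hpR ⊥ k (by rwa [bot_sup_eq])
    have h2 : Module.Finite ℤ_[p] R :=
      Module.Finite.equiv ((AlgEquiv.quotientBot ℤ_[p] R).toLinearEquiv)
    exact matrix_embed (B := ℤ_[p]) (padic_inj p φR) φS (padic_inj p φS)
  · -- dimension two
    push Not at hcase
    obtain ⟨P, hP, hpP, hPm⟩ := hcase
    have hbot : ∀ Q : Ideal R, Q.IsPrime → (p : R) ∈ Q → (⊥ : Ideal R) < Q := by
      intro Q _ h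
      exact bot_lt_iff_ne_bot.2 fun h0 => hp0 (by rwa [h0, Ideal.mem_bot] at h)
    have hpP' : (p : R) ∈ P := hpP (Ideal.mem_span_singleton_self _)
    have hPlt : P < IsLocalRing.maximalIdeal R :=
      lt_of_le_of_ne (IsLocalRing.le_maximalIdeal hP.ne_top) hPm
    have hm2 : ((2 : ℕ) : ℕ∞) ≤ (IsLocalRing.maximalIdeal R).height :=
      strictMono_height hPlt 1 (strictMono_height (hbot P hP hpP') 0 (by simp))
    have hm3 : ¬ ((3 : ℕ) : ℕ∞) ≤ (IsLocalRing.maximalIdeal R).height := by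
      intro h
      rw [← IsLocalRing.maximalIdeal_height_eq_ringKrullDim] at hR
      have h2 : (IsLocalRing.maximalIdeal R).height ≤ 2 := WithBot.coe_le_coe.1 hR
      have := h.trans h2
      revert this
      decide
    -- choose `r`
    have hr : ∃ r ∈ IsLocalRing.maximalIdeal R, ∀ Q ∈ (Ideal.span {(p : R)}).minimalPrimes,
        r ∉ Q := by
      by_contra hcon
      push Not at hcon
      have hsub : (IsLocalRing.maximalIdeal R : Set R) ⊆
          ⋃ Q ∈ (Ideal.span {(p : R)}).minimalPrimes, (Q : Set R) := by
        intro x hx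
        obtain ⟨Q, hQ, hxQ⟩ := hcon x hx
        exact Set.mem_biUnion hQ hxQ
      obtain ⟨Q, hQ, hle⟩ := (Ideal.subset_union_prime_finite
        (Ideal.finite_minimalPrimes_of_isNoetherianRing R _) (f := id) 0 0
        (fun _ h _ _ => h.isPrime)).1 hsub
      have hQm : Q = IsLocalRing.maximalIdeal R :=
        le_antisymm (IsLocalRing.le_maximalIdeal hQ.isPrime.ne_top) hle
      have := hQ.2 ⟨hP, hpP⟩ (by rw [hQm]; exact hPlt.le)
      rw [hQm] at this
      exact absurd (this) (not_le_of_gt hPlt)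
    obtain ⟨r, hrm, hr⟩ := hr
    obtain ⟨P₀, hP₀, -⟩ := Ideal.exists_minimalPrimes_le hpP
    obtain ⟨k, hk⟩ := pow_le_of_primes (Ideal.span {r} ⊔ Ideal.span {(p : R)}) (by
      intro Q hQ hle
      by_contra hQm
      obtain ⟨P₁, hP₁, hPQ⟩ := Ideal.exists_minimalPrimes_le (le_sup_right.trans hle)
      have hrQ : r ∈ Q := hle (Ideal.mem_sup_left (Ideal.mem_span_singleton_self _))
      have := hP₁.isPrime
      have hlt : P₁ < Q := lt_of_le_of_ne hPQ fun h => hr P₁ hP₁ (h ▸ hrQ)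
      have hQlt : Q < IsLocalRing.maximalIdeal R :=
        lt_of_le_of_ne (IsLocalRing.le_maximalIdeal hQ.ne_top) hQm
      exact hm3 (strictMono_height hQlt 2 (strictMono_height hlt 1 (strictMono_height
        (hbot P₁ hP₁.isPrime (hP₁.1.2 (Ideal.mem_span_singleton_self _))) 0 (by simp)))))
    obtain ⟨ψR, hψR⟩ := exists_eval (IsLocalRing.maximalIdeal R) φR r hrm
    have := hP₀.isPrime
    have hinjR := eval_inj p φR ψR r hψR P₀ (hP₀.1.2 (Ideal.mem_span_singleton_self _)) (hr P₀ hP₀)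
    -- choose `s`
    have hs : ∃ P' : Ideal S, P'.IsPrime ∧ (p : S) ∈ P' ∧ P' ≠ IsLocalRing.maximalIdeal S := by
      by_contra hcon
      push Not at hcon
      have hmin : IsLocalRing.maximalIdeal S ∈ (Ideal.span {(p : S)}).minimalPrimes := by
        refine ⟨⟨inferInstance, by rwa [Ideal.span_singleton_le_iff_mem]⟩, fun Q hQ _ => ?_⟩
        rw [hcon Q hQ.1 (hQ.2 (Ideal.mem_span_singleton_self _))]
      have h1 := Ideal.height_le_one_of_isPrincipal_of_mem_minimalPrimes _ _ hmin
      rw [← IsLocalRing.maximalIdeal_height_eq_ringKrullDim,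
        ← IsLocalRing.maximalIdeal_height_eq_ringKrullDim] at hRS
      have h2 := (hm2.trans (by exact_mod_cast hRS)).trans h1
      revert h2
      decide
    obtain ⟨P', hP', hpP'S, hPm'⟩ := hs
    have hlt : P' < IsLocalRing.maximalIdeal S :=
      lt_of_le_of_ne (IsLocalRing.le_maximalIdeal hP'.ne_top) hPm'
    obtain ⟨s, hsm, hs⟩ := SetLike.exists_of_lt hlt
    obtain ⟨ψS, hψS⟩ := exists_eval (IsLocalRing.maximalIdeal S) φS s hsm
    have hinjS := eval_inj p φS ψS s hψS P' hpP'S hs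
    let : Algebra (PowerSeries ℤ_[p]) R := ψR.toAlgebra
    have : IsScalarTower ℤ_[p] (PowerSeries ℤ_[p]) R := by
      refine IsScalarTower.of_algebraMap_eq fun c => ?_
      have h1 := hψR (Polynomial.C c)
      rw [Polynomial.eval₂_C, Polynomial.coe_C] at h1
      exact h1.symm
    have hX : algebraMap (PowerSeries ℤ_[p]) R PowerSeries.X = r := by
      have h1 := hψR Polynomial.X
      rw [Polynomial.eval₂_X, Polynomial.coe_X] at h1
      exact h1
    have := finite_powerSeries p hpR r hrm hX k hk
    have := dual_free_powerSeries p R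
    exact matrix_embed (B := PowerSeries ℤ_[p]) hinjR ψS hinjS


/-- Let `R`, `S` be commutative Noetherian local pro-`p` domains of
characteristic zero with `Krull dim R ≤ 2` and `Krull dim S ≥ Krull dim R`. Then every
subgroup of `GL_n(R)` embeds into `GL_m(S)` for some `m`. -/
theorem linear_transfer_char_zero_dim_le_two (p : ℕ) [Fact p.Prime]
    (R : Type) [CommRing R] [IsDomain R] [IsNoetherianRing R] [IsLocalRing R]
    [IsAdicComplete (IsLocalRing.maximalIdeal R) R]
    [Finite (IsLocalRing.ResidueField R)] [CharP (IsLocalRing.ResidueField R) p]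
    [CharZero R]
    (S : Type) [CommRing S] [IsDomain S] [IsNoetherianRing S] [IsLocalRing S]
    [IsAdicComplete (IsLocalRing.maximalIdeal S) S]
    [Finite (IsLocalRing.ResidueField S)] [CharP (IsLocalRing.ResidueField S) p]
    [CharZero S]
    (hR : ringKrullDim R ≤ 2) (hRS : ringKrullDim R ≤ ringKrullDim S)
    (n : ℕ) (G : Subgroup (Matrix.GeneralLinearGroup (Fin n) R)) :
    ∃ (m : ℕ) (f : G →* Matrix.GeneralLinearGroup (Fin m) S),
      Function.Injective f := by
  obtain ⟨d, f, hf⟩ := matrix_embed_main p R S hR hRS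
  exact glEmbed d f hf n G
end

section
/- Let p be a prime and let R and S be commutative Noetherian local pro-p domains, both of characteristic p, such that the Krull dimension of R is at least 2 and the Krull dimension of S is strictly greater than 1. Then for every natural number n and every subgroup G of GL_n(R) there exist a natural number m and an injective group homomorphism from G into GL_m(S). -/
section LTP
open IsLocalRing

theorem ltp_precomplete_pi {A : Type*} [CommRing A] (I : Ideal A) [IsPrecomplete I A] (l : ℕ) :
    IsPrecomplete I (Fin l → A) := by
  have key : ∀ (n : ℕ) (v : Fin l → A), v ∈ (I ^ n • ⊤ : Submodule A (Fin l → A)) ↔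
      ∀ i, v i ∈ I ^ n := by
    intro n v
    constructor
    · intro h i
      have := Submodule.smul_top_le_comap_smul_top (I ^ n) (LinearMap.proj (R := A) (φ := fun _ : Fin l => A) i) h
      simpa using this
    · intro h
      rw [pi_eq_sum_univ v]
      exact Submodule.sum_mem _ fun i _ => Submodule.smul_mem_smul (h i) trivial
  constructor
  intro f hf
  have h1 : ∀ i, ∃ L : A, ∀ n, f n i ≡ L [SMOD (I ^ n • ⊤ : Submodule A A)] := by
    intro i
    apply IsPrecomplete.prec' (I := I) (fun n => f n i)
    intro m n hmn
    have := hf hmn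
    rw [SModEq.sub_mem, key] at this
    rw [SModEq.sub_mem]
    simpa using this i
  choose L hL using h1
  refine ⟨L, fun n => ?_⟩
  rw [SModEq.sub_mem, key]
  intro i
  have := hL i n
  rw [SModEq.sub_mem] at this
  simpa using this

theorem ltp_finite_of_quot {A M : Type*} [CommRing A] [AddCommGroup M] [Module A M]
    (I : Ideal A) [IsPrecomplete I A] [IsHausdorff I M]
    (h : Finite (M ⧸ (I • ⊤ : Submodule A M))) : Module.Finite A M := by
  obtain ⟨l, ⟨e⟩⟩ := Finite.exists_equiv_fin (M ⧸ (I • ⊤ : Submodule A M))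
  have hs := Submodule.mkQ_surjective (I • ⊤ : Submodule A M)
  choose g hg using fun i => hs (e.symm i)
  have := ltp_precomplete_pi I l
  have hsurj : Function.Surjective (Fintype.linearCombination A g) := by
    apply surjective_of_mkQ_comp_surjective (I := I)
    intro y
    refine ⟨Pi.single (e y) 1, ?_⟩
    simp [Fintype.linearCombination_apply_single]
    have := hg (e y)
    simpa using this
  exact Module.Finite.of_surjective _ hsurj

theorem ltp_dim (k : Type*) [Field k] (n : ℕ) : ringKrullDim (MvPowerSeries (Fin n) k) = n := by
  induction n with
  | zero =>
    rw [ringKrullDim_eq_of_ringEquiv (MvPowerSeries.isEmptyEquiv (Fin 0) k).toRingEquiv]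
    simp
  | succ n ih =>
    rw [ringKrullDim_eq_of_ringEquiv (MvPowerSeries.finSuccEquiv k n).toRingEquiv]
    have : IsDomain (MvPowerSeries (Fin n) k) := NoZeroDivisors.to_isDomain _
    have : IsLocalRing (PowerSeries (MvPowerSeries (Fin n) k)) := inferInstance
    rw [← ringKrullDim_quotient_span_singleton_succ_eq_ringKrullDim (x := PowerSeries.X)]
    · have e : (PowerSeries (MvPowerSeries (Fin n) k) ⧸ Ideal.span {(PowerSeries.X : PowerSeries (MvPowerSeries (Fin n) k))}) ≃+* MvPowerSeries (Fin n) k := by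
        refine (Ideal.quotEquivOfEq ?_).trans (RingHom.quotientKerEquivOfSurjective (f := PowerSeries.constantCoeff (R := MvPowerSeries (Fin n) k)) PowerSeries.constantCoeff_surj)
        ext a
        rw [Ideal.mem_span_singleton, PowerSeries.X_dvd_iff, RingHom.mem_ker]
      rw [ringKrullDim_eq_of_ringEquiv e, ih]
      simp
    · exact fun a b h => mul_left_cancel₀ PowerSeries.X_ne_zero h
    · exact (mem_maximalIdeal _).2 PowerSeries.X_prime.not_isUnit

theorem ltp_dim_le {A B : Type*} [CommRing A] [CommRing B] (f : A →+* B) (hf : f.IsIntegral) :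
    ringKrullDim B ≤ ringKrullDim A := by
  algebraize [f]
  refine Order.krullDim_le_of_strictMono (PrimeSpectrum.comap f) ?_
  intro P Q h
  exact Ideal.IsIntegral.comap_lt_comap (I := P.asIdeal) (J := Q.asIdeal) h

theorem ltp_inj {A B : Type*} [CommRing A] [IsDomain A] [CommRing B] (f : A →+* B) (hf : f.IsIntegral)
    (d : ℕ) (hA : ringKrullDim A = d) (hB : ringKrullDim B = d) : Function.Injective f := by
  rw [injective_iff_map_eq_zero]
  intro a ha
  by_contra h
  have h1 := ringKrullDim_quotient_succ_le_of_nonZeroDivisor (mem_nonZeroDivisors_of_ne_zero h)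
  let g : A ⧸ Ideal.span {a} →+* B := Ideal.Quotient.lift _ f (by
    intro b hb
    rw [Ideal.mem_span_singleton] at hb
    obtain ⟨c, rfl⟩ := hb
    simp [ha])
  have h2 : g.IsIntegral := by
    have : f = g.comp (Ideal.Quotient.mk _) := by ext; simp [g]
    rw [this] at hf
    exact hf.tower_top 
  have h3 := ltp_dim_le g h2
  rw [hA] at h1
  rw [hB] at h3
  have := (add_le_add_left h3 1).trans h1
  norm_cast at this
  omega

theorem ltp_eval (p : ℕ) [Fact p.Prime]
    (R : Type*) [CommRing R] [IsLocalRing R]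
    [IsAdicComplete (IsLocalRing.maximalIdeal R) R] [CharP R p] (d : ℕ) (x : Fin d → R)
    (hx : ∀ i, x i ∈ maximalIdeal R) :
    ∃ φ : MvPowerSeries (Fin d) (ZMod p) →+* R, ∀ i, φ (MvPowerSeries.X i) = x i := by
  letI : WithIdeal R := ⟨maximalIdeal R⟩
  letI : UniformSpace (ZMod p) := ⊥
  have hadic : IsAdic (maximalIdeal R) := rfl
  have hc := hadic.isAdicComplete_iff.1 inferInstance
  have := hc.1
  have := hc.2
  have : DiscreteTopology (ZMod p) := ⟨rfl⟩
  have : IsUniformAddGroup (ZMod p) := inferInstance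
  have h1 : Continuous (ZMod.castHom (dvd_refl p) R) := continuous_of_discreteTopology
  have h2 : MvPowerSeries.HasEval x :=
    ⟨fun i => WithIdeal.isTopologicallyNilpotent_of_mem (hx i), by simp [Filter.cofinite_eq_bot]⟩
  refine ⟨MvPowerSeries.eval₂Hom h1 h2, fun i => ?_⟩
  rw [MvPowerSeries.coe_eval₂Hom]
  simp

theorem ltp_structure (p : ℕ) [Fact p.Prime]
    (R : Type*) [CommRing R] [IsNoetherianRing R] [IsLocalRing R]
    [IsAdicComplete (IsLocalRing.maximalIdeal R) R]
    [Finite (IsLocalRing.ResidueField R)] [CharP R p] :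
    ∃ (d : ℕ) (φ : MvPowerSeries (Fin d) (ZMod p) →+* R), ringKrullDim R = d ∧
      Function.Injective φ ∧ φ.Finite := by
  obtain ⟨s, hs, hc⟩ := (maximalIdeal R).exists_finset_card_eq_height_of_isNoetherianRing
  have hdim : ringKrullDim R = s.card := by
    rw [← IsLocalRing.maximalIdeal_height_eq_ringKrullDim, ← hc]; rfl
  obtain ⟨N, hN⟩ : ∃ N, maximalIdeal R ^ N ≤ Ideal.span (s : Set R) := by
    apply Ideal.exists_pow_le_of_le_radical_of_fg _ (IsNoetherian.noetherian _)
    rw [Ideal.radical_eq_sInf]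
    refine le_sInf ?_
    rintro J ⟨hJ, hJp⟩
    exact hs.2 ⟨hJp, hJ⟩ (le_maximalIdeal hJp.ne_top)
  have hsm : ∀ a ∈ s, a ∈ maximalIdeal R := fun a ha => hs.1.2 (Ideal.subset_span ha)
  have hfin : Finite (R ⧸ Ideal.span (s : Set R)) := by
    have : Finite (R ⧸ maximalIdeal R) := ‹Finite (ResidueField R)›
    have := Ideal.finite_quotient_pow (IsNoetherian.noetherian (maximalIdeal R)) N
    exact Finite.of_surjective _ (Ideal.Quotient.factor_surjective hN)
  obtain ⟨φ, hφ⟩ := ltp_eval p R s.card (fun i => (s.equivFin.symm i : R))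
    (fun i => hsm _ (s.equivFin.symm i).2)
  have hφfin : φ.Finite := by
    algebraize [φ]
    let I : Ideal (MvPowerSeries (Fin s.card) (ZMod p)) := Ideal.span (Set.range MvPowerSeries.X)
    have hmap : I.map (algebraMap _ R) = Ideal.span (s : Set R) := by
      rw [Ideal.map_span, ← Set.range_comp]
      congr 1
      ext r
      simp only [Set.mem_range, Function.comp]
      constructor
      · rintro ⟨i, rfl⟩
        change φ _ ∈ _
        rw [hφ]
        exact (s.equivFin.symm i).2
      · intro hr
        refine ⟨s.equivFin ⟨r, hr⟩, ?_⟩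
        change φ _ = _
        rw [hφ]
        simp
    have h1 : IsHausdorff I R := by
      rw [← IsHausdorff.map_algebraMap_iff (S := R), hmap]
      apply IsHausdorff.of_isLocalRing
      intro h
      have := hs.1.2
      rw [h] at this
      exact (maximalIdeal.isMaximal R).ne_top (top_le_iff.1 this)
    refine ltp_finite_of_quot I ?_
    rw [Ideal.smul_top_eq_map]
    change Finite (R ⧸ I.map (algebraMap _ R))
    rw [hmap]; exact hfin
  have : IsDomain (MvPowerSeries (Fin s.card) (ZMod p)) := NoZeroDivisors.to_isDomain _
  refine ⟨s.card, φ, hdim, ?_, hφfin⟩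
  exact ltp_inj φ hφfin.to_isIntegral s.card (ltp_dim _ _) hdim

theorem ltp_algIndep (p : ℕ) [Fact p.Prime] (d : ℕ) :
    ∃ f : Fin d → PowerSeries (ZMod p), AlgebraicIndependent (ZMod p) f := by
  obtain ⟨s, hs⟩ := exists_isTranscendenceBasis (ZMod p) (PowerSeries (ZMod p))
  by_cases hfin : s.Finite
  · exfalso
    have halg := hs.isAlgebraic
    have hr : Set.range ((↑) : s → PowerSeries (ZMod p)) = s := Subtype.range_coe
    rw [hr] at halg
    have h1 := Algebra.IsAlgebraic.cardinalMk_le_max (Algebra.adjoin (ZMod p) s) (PowerSeries (ZMod p))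
    have h2 : Countable (Algebra.adjoin (ZMod p) s) := by
      have : Countable s := hfin.countable
      rw [Algebra.adjoin_eq_range]
      have : Countable (MvPolynomial s (ZMod p)) := by
        rw [← Cardinal.mk_le_aleph0_iff]
        refine MvPolynomial.cardinalMk_le_max.trans ?_
        simp
      exact (Set.countable_range (MvPolynomial.aeval (R := ZMod p) ((↑) : s → PowerSeries (ZMod p)))).to_subtype
    rw [max_eq_right (Cardinal.mk_le_aleph0_iff.2 h2)] at h1
    have h3 : Cardinal.mk (PowerSeries (ZMod p)) = Cardinal.mk (ℕ → ZMod p) :=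
      Cardinal.mk_congr
        ⟨fun f n => PowerSeries.coeff n f, PowerSeries.mk, fun f => by ext; simp, fun f => by ext; simp⟩
    rw [h3, Cardinal.mk_le_aleph0_iff] at h1
    have : Uncountable (ℕ → ZMod p) := by
      rw [← Cardinal.aleph0_lt_mk_iff]
      refine lt_of_lt_of_le (Cardinal.cantor _) ?_
      simp only [Cardinal.mk_pi, Cardinal.prod_const, Cardinal.lift_id, Cardinal.mk_nat]
      exact Cardinal.power_le_power_right (by
        rw [Cardinal.two_le_iff]; exact ⟨0, 1, zero_ne_one⟩)
    exact not_countable h1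
  · have : Infinite s := Set.infinite_coe_iff.2 hfin
    exact ⟨fun i => (Infinite.natEmbedding s i : s), hs.1.comp _
      (fun i j h => Fin.ext ((Infinite.natEmbedding s).injective h))⟩

theorem ltp_subst {k B : Type*} [Field k] [CommRing B] [Algebra k B] (d : ℕ) (f : Fin d → B)
    (hf : AlgebraicIndependent k f) :
    ∃ φ : MvPowerSeries (Fin d) k →+* PowerSeries B, Function.Injective φ := by
  let a : Fin d → MvPowerSeries Unit B := fun i => PowerSeries.C (f i) * PowerSeries.X
  have ha : MvPowerSeries.HasSubst a := by
    apply MvPowerSeries.hasSubst_of_constantCoeff_zero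
    intro i
    change PowerSeries.constantCoeff (PowerSeries.C (f i) * PowerSeries.X) = 0
    simp
  refine ⟨(MvPowerSeries.substAlgHom (R := k) ha).toRingHom, ?_⟩
  rw [injective_iff_map_eq_zero]
  intro F hF
  replace hF : MvPowerSeries.subst a F = 0 := by
    rw [← MvPowerSeries.coe_substAlgHom ha]; exact hF
  have hprod : ∀ e : Fin d →₀ ℕ, (e.prod fun s m => a s ^ m) =
      (PowerSeries.C (e.prod fun s m => f s ^ m) * PowerSeries.X ^ e.degree : PowerSeries B) := by
    intro e
    simp only [a, mul_pow, Finsupp.prod_mul]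
    congr 1
    · simp [Finsupp.prod, map_prod, map_pow]
    · simp [Finsupp.prod, Finset.prod_pow_eq_pow_sum, Finsupp.degree_apply]
  ext e
  let n := e.degree
  have h0 := congrArg (MvPowerSeries.coeff (Finsupp.single () n)) hF
  rw [MvPowerSeries.coeff_subst ha] at h0
  let T : Finset (Fin d →₀ ℕ) := Finset.finsuppAntidiag Finset.univ n
  have hT : ∀ e', e' ∈ T ↔ e'.degree = n := by
    intro e'
    simp [T, Finset.mem_finsuppAntidiag, Finsupp.degree_eq_sum]
  have hcoeff : ∀ e' : Fin d →₀ ℕ, MvPowerSeries.coeff (Finsupp.single () n) (e'.prod fun s m => a s ^ m) =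
      if e'.degree = n then (e'.prod fun s m => f s ^ m) else 0 := by
    intro e'
    rw [hprod]
    change PowerSeries.coeff n _ = _
    rw [PowerSeries.coeff_C_mul, PowerSeries.coeff_X_pow]
    simp [eq_comm]
  let P : MvPolynomial (Fin d) k := ∑ e' ∈ T, MvPolynomial.monomial e' (MvPowerSeries.coeff e' F)
  have hP : MvPolynomial.aeval f P = 0 := by
    simp only [hcoeff] at h0
    rw [finsum_eq_sum_of_support_subset (s := T)] at h0
    · simp only [P, map_sum, MvPolynomial.aeval_monomial]
      refine Eq.trans (Finset.sum_congr rfl ?_) h0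
      intro e' he'
      rw [if_pos ((hT e').1 he'), Algebra.smul_def]
    · intro e' he'
      rw [Finset.mem_coe, hT]
      by_contra h
      simp [h] at he'
  have hP0 : P = 0 := by
    rw [algebraicIndependent_iff] at hf
    exact hf P hP
  have := congrArg (MvPolynomial.coeff e) hP0
  simp only [P, MvPolynomial.coeff_sum, MvPolynomial.coeff_monomial] at this
  rw [Finset.sum_ite_eq' , if_pos ((hT e).2 rfl)] at this
  simpa using this

theorem ltp_into (k : Type*) [Field k] (e : ℕ) (he : 2 ≤ e) :
    ∃ φ : PowerSeries (PowerSeries k) →+* MvPowerSeries (Fin e) k, Function.Injective φ := by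
  obtain ⟨e, rfl⟩ := Nat.exists_eq_add_of_le' he
  have hmap : ∀ {A B : Type _} [CommRing A] [CommRing B] (f : A →+* B), Function.Injective f →
      Function.Injective (PowerSeries.map f) := by
    intro A B _ _ f hf x y h
    ext n
    apply hf
    simpa using congrArg (PowerSeries.coeff n) h
  let ψ : PowerSeries k →+* MvPowerSeries (Fin (e + 1)) k :=
    ((MvPowerSeries.finSuccEquiv k e).symm.toRingEquiv.toRingHom).comp (PowerSeries.map MvPowerSeries.C)
  have hψ : Function.Injective ψ :=
    (MvPowerSeries.finSuccEquiv k e).symm.injective.comp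
      (hmap _ MvPowerSeries.C_injective)
  exact ⟨((MvPowerSeries.finSuccEquiv k (e + 1)).symm.toRingEquiv.toRingHom).comp (PowerSeries.map ψ),
    (MvPowerSeries.finSuccEquiv k (e + 1)).symm.injective.comp (hmap _ hψ)⟩

theorem ltp_free {K N : Type*} [CommRing K] [IsDomain K] [IsPrincipalIdealRing K] [IsLocalRing K]
    [AddCommGroup N] [Module (PowerSeries K) N] (l : ℕ)
    (ev : N →ₗ[PowerSeries K] (Fin l → PowerSeries K)) (hev : Function.Injective ev)
    (hsat : ∀ n, (∀ i, PowerSeries.X ∣ ev n i) → ∃ n', n = (PowerSeries.X : PowerSeries K) • n') :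
    Module.Free (PowerSeries K) N ∧ Module.Finite (PowerSeries K) N := by
  have hfin : Module.Finite (PowerSeries K) N := Module.Finite.of_injective ev hev
  refine ⟨?_, hfin⟩
  let ρ : N →+ (Fin l → K) :=
    { toFun := fun n i => PowerSeries.constantCoeff (ev n i)
      map_zero' := by ext; simp
      map_add' := by intros; ext; simp }
  have hρ : ∀ (c : PowerSeries K) n, ρ (c • n) = PowerSeries.constantCoeff c • ρ n := by
    intro c n; ext i; simp [ρ]
  have hρ0 : ∀ n, ρ n = 0 → ∃ n', n = (PowerSeries.X : PowerSeries K) • n' := by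
    intro n hn
    apply hsat
    intro i
    rw [PowerSeries.X_dvd_iff]
    exact congrFun hn i
  have htor : ∀ n : N, (PowerSeries.X : PowerSeries K) • n = 0 → n = 0 := by
    intro n hn
    apply hev
    have := congrArg ev hn
    rw [map_smul, map_zero] at this
    rw [map_zero]
    ext1 i
    have := congrFun this i
    simpa [PowerSeries.X_ne_zero] using this
  let Q : Submodule K (Fin l → K) :=
    { carrier := Set.range ρ
      zero_mem' := ⟨0, map_zero _⟩
      add_mem' := by rintro _ _ ⟨a, rfl⟩ ⟨b, rfl⟩; exact ⟨a + b, map_add _ _ _⟩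
      smul_mem' := by
        rintro c _ ⟨a, rfl⟩
        exact ⟨PowerSeries.C c • a, by rw [hρ]; simp⟩ }
  let b := Module.finBasis K Q
  choose g hg using fun j => (b j).2
  have hind : LinearIndependent (PowerSeries K) g := by
    rw [Fintype.linearIndependent_iff]
    have key : ∀ t : ℕ, ∀ c : Fin (Module.finrank K Q) → PowerSeries K, ∑ j, c j • g j = 0 →
        ∀ j, PowerSeries.X ^ t ∣ c j := by
      intro t
      induction t with
      | zero => intro c _ j; simp
      | succ t ih =>
        intro c hc j
        have h1 : ∀ j, PowerSeries.constantCoeff (c j) = 0 := by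
          have h2 := congrArg ρ hc
          simp only [map_sum, hρ, hg, map_zero] at h2
          have h3 : ∑ j, PowerSeries.constantCoeff (c j) • b j = 0 := by
            apply Subtype.ext
            simpa using h2
          exact Fintype.linearIndependent_iff.1 b.linearIndependent _ h3
        choose c' hc' using fun j => PowerSeries.X_dvd_iff.2 (h1 j)
        have h4 : ∑ j, c' j • g j = 0 := by
          apply htor
          rw [Finset.smul_sum, ← hc]
          refine Finset.sum_congr rfl fun j _ => ?_
          rw [smul_smul, ← hc']
        rw [hc', pow_succ']
        exact mul_dvd_mul_left _ (ih c' h4 j)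
    intro c hc j
    ext m
    have := key (m + 1) c hc j
    rw [PowerSeries.X_pow_dvd_iff] at this
    simpa using this m (Nat.lt_succ_self m)
  have hspan : (⊤ : Submodule (PowerSeries K) N) ≤ Submodule.span _ (Set.range g) := by
    apply Submodule.le_of_le_smul_of_le_jacobson_bot (I := Ideal.span {(PowerSeries.X : PowerSeries K)})
      hfin.fg_top
    · rw [jacobson_eq_maximalIdeal _ bot_ne_top, Ideal.span_singleton_le_iff_mem]
      exact (mem_maximalIdeal _).2 PowerSeries.X_prime.not_isUnit
    · intro n _
      let q : Q := ⟨ρ n, n, rfl⟩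
      have h1 : ρ (n - ∑ j, PowerSeries.C (b.repr q j) • g j) = 0 := by
        rw [map_sub, map_sum]
        simp only [hρ, hg, PowerSeries.constantCoeff_C]
        have := congrArg Subtype.val (b.sum_repr q)
        simp only [Submodule.coe_sum, Submodule.coe_smul] at this
        rw [this, sub_self]
      obtain ⟨n', hn'⟩ := hρ0 _ h1
      rw [← sub_add_cancel n (∑ j, PowerSeries.C (b.repr q j) • g j), hn', add_comm]
      refine Submodule.add_mem_sup ?_ ?_
      · exact Submodule.sum_mem _ fun j _ => Submodule.smul_mem _ _ (Submodule.subset_span ⟨j, rfl⟩)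
      · exact Submodule.smul_mem_smul (Ideal.mem_span_singleton_self _) trivial
  exact Module.Free.of_basis (Module.Basis.mk hind hspan)

theorem ltp_functional {A R : Type*} [CommRing A] [IsDomain A] [CommRing R] [IsDomain R] [Algebra A R]
    [FaithfulSMul A R] [Module.Finite A R] : ∃ h : R →ₗ[A] A, h 1 ≠ 0 := by
  let K := FractionRing A
  let L := FractionRing R
  have : FaithfulSMul A L := FaithfulSMul.trans A R L
  let _ : Algebra K L := FractionRing.liftAlgebra A L
  have : IsScalarTower A K L := FractionRing.isScalarTower_liftAlgebra A L
  obtain ⟨ℓ, hℓ⟩ : ∃ ℓ : Module.Dual K L, ℓ 1 ≠ 0 := by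
    by_contra! h
    exact one_ne_zero ((Module.forall_dual_apply_eq_zero_iff K (1 : L)).1 h)
  let f : R →ₗ[A] K := (ℓ.restrictScalars A).comp (IsScalarTower.toAlgHom A R L).toLinearMap
  obtain ⟨s, hs⟩ := Module.Finite.fg_top (R := A) (M := R)
  classical
  obtain ⟨c, hc⟩ := IsLocalization.exist_integer_multiples_of_finset (nonZeroDivisors A) (s.image f)
  have hr : ∀ r, ((c : A) • f) r ∈ LinearMap.range (Algebra.linearMap A K) := by
    intro r
    have : r ∈ Submodule.span A (s : Set R) := by rw [hs]; trivial
    induction this using Submodule.span_induction with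
    | mem x hx =>
      obtain ⟨a, ha⟩ := hc (f x) (Finset.mem_image_of_mem f hx)
      exact ⟨a, ha⟩
    | zero => simp
    | add x y _ _ hx hy => rw [map_add]; exact Submodule.add_mem _ hx hy
    | smul a x _ hx => rw [map_smul]; exact Submodule.smul_mem _ _ hx
  have hinj : Function.Injective (Algebra.linearMap A K) := IsFractionRing.injective A K
  let e := LinearEquiv.ofInjective (Algebra.linearMap A K) hinj
  refine ⟨e.symm.toLinearMap.comp (LinearMap.codRestrict _ ((c : A) • f) hr), ?_⟩
  intro h
  have h2 : LinearMap.codRestrict _ ((c : A) • f) hr 1 = 0 := by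
    apply e.symm.injective
    rw [map_zero]; exact h
  have h3 := congrArg Subtype.val h2
  simp only [LinearMap.codRestrict_apply, LinearMap.smul_apply] at h3
  have h4 : (c : A) • f 1 = 0 := h3
  rw [Algebra.smul_def, mul_eq_zero] at h4
  rcases h4 with h4 | h4
  · rw [IsFractionRing.to_map_eq_zero_iff] at h4
    exact nonZeroDivisors.ne_zero c.2 h4
  · apply hℓ
    simpa [f] using h4

theorem ltp_embed {A R K : Type*} [CommRing A] [IsDomain A] [CommRing R] [IsDomain R] [Algebra A R]
    [FaithfulSMul A R] [Module.Finite A R]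
    [CommRing K] [IsDomain K] [IsPrincipalIdealRing K] [IsLocalRing K]
    (φ : A →+* PowerSeries K) (hφ : Function.Injective φ) :
    ∃ (m : ℕ) (ψ : R →+* Matrix (Fin m) (Fin m) (PowerSeries K)), Function.Injective ψ := by
  let B := PowerSeries K
  let _ : Algebra A B := φ.toAlgebra
  let N := R →ₗ[A] B
  obtain ⟨l, g, hg⟩ := Module.Finite.exists_fin (R := A) (M := R)
  let ev : N →ₗ[B] (Fin l → B) :=
    { toFun := fun h i => h (g i)
      map_add' := by intros; rfl
      map_smul' := by intros; rfl }
  have hev : Function.Injective ev := by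
    intro h h' hh
    apply LinearMap.ext_on_range hg
    intro i
    exact congrFun hh i
  have hX : (PowerSeries.X : B) ≠ 0 := PowerSeries.X_ne_zero
  have hsat : ∀ n, (∀ i, PowerSeries.X ∣ ev n i) → ∃ n', n = (PowerSeries.X : PowerSeries K) • n' := by
    intro h hh
    have h1 : ∀ r, (PowerSeries.X : B) ∣ h r := by
      intro r
      have : r ∈ Submodule.span A (Set.range g) := by rw [hg]; trivial
      induction this using Submodule.span_induction with
      | mem x hx => obtain ⟨i, rfl⟩ := hx; exact hh i
      | zero => simp
      | add x y _ _ hx hy => rw [map_add]; exact dvd_add hx hy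
      | smul a x _ hx => rw [map_smul, Algebra.smul_def]; exact Dvd.dvd.mul_left hx _
    choose k hk using h1
    refine ⟨{ toFun := k, map_add' := ?_, map_smul' := ?_ }, ?_⟩
    · intro x y
      apply mul_left_cancel₀ hX
      rw [mul_add, ← hk, ← hk, ← hk, map_add]
    · intro a x
      apply mul_left_cancel₀ hX
      rw [RingHom.id_apply, mul_smul_comm, ← hk, ← hk, map_smul]
    · ext1 x
      exact hk x
  obtain ⟨hfree, hfin⟩ := ltp_free l ev hev hsat
  let θ : R →+* Module.End B N :=
    { toFun := fun r =>
        { toFun := fun h => h.comp (LinearMap.mulLeft A r)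
          map_add' := by intros; rfl
          map_smul' := by intros; rfl }
      map_one' := by ext h x; simp
      map_mul' := by
        intro r s
        ext1 h
        apply LinearMap.ext
        intro x
        change h (r * s * x) = h (s * (r * x))
        congr 1; ring
      map_zero' := by
        ext1 h
        apply LinearMap.ext
        intro x
        change h (0 * x) = 0
        simp
      map_add' := by
        intro r s
        ext1 h
        apply LinearMap.ext
        intro x
        change h ((r + s) * x) = h (r * x) + h (s * x)
        rw [add_mul, map_add] }
  have hθ : Function.Injective θ := by
    rw [injective_iff_map_eq_zero]
    intro r hr
    by_contra hr0
    obtain ⟨h0, h01⟩ := ltp_functional (A := A) (R := R)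
    let h : N := (Algebra.linearMap A B).comp h0
    have halg : IsAlgebraic A r := Algebra.IsAlgebraic.isAlgebraic r
    obtain ⟨a, ha, y, hy⟩ := halg.exists_nonzero_dvd (mem_nonZeroDivisors_of_ne_zero hr0)
    have h1 : h (r * y) = 0 := by
      change θ r h y = 0
      rw [hr]; rfl
    rw [← hy, Algebra.algebraMap_eq_smul_one, map_smul] at h1
    have h2 : φ a * φ (h0 1) = 0 := h1
    rw [← map_mul, map_eq_zero_iff φ hφ, mul_eq_zero] at h2
    exact h2.elim ha h01
  let b := Module.finBasis B N
  refine ⟨Module.finrank B N, (LinearMap.toMatrixAlgEquiv b).toRingEquiv.toRingHom.comp θ, ?_⟩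
  exact (LinearMap.toMatrixAlgEquiv b).injective.comp hθ
theorem ltp_final {R S : Type} [CommRing R] [CommRing S] (m : ℕ)
    (χ : R →+* Matrix (Fin m) (Fin m) S) (hχ : Function.Injective χ)
    (n : ℕ) (G : Subgroup (Matrix.GeneralLinearGroup (Fin n) R)) :
    ∃ (m : ℕ) (f : G →* Matrix.GeneralLinearGroup (Fin m) S),
      Function.Injective f := by
  let F : Matrix (Fin n) (Fin n) R →+* Matrix (Fin (n * m)) (Fin (n * m)) S :=
    ((Matrix.reindexAlgEquiv ℤ S (finProdFinEquiv (m := n) (n := m))).toRingEquiv.toRingHom.comp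
      (Matrix.compRingEquiv (Fin n) (Fin m) S).toRingHom).comp χ.mapMatrix
  have hF : Function.Injective F := by
    have h1 : Function.Injective (RingHom.mapMatrix (m := Fin n) χ) := Matrix.map_injective hχ
    have h2 := (Matrix.compRingEquiv (Fin n) (Fin m) S).injective
    have h3 := (Matrix.reindexAlgEquiv ℤ S (finProdFinEquiv (m := n) (n := m))).injective
    intro x y hxy
    exact h1 (h2 (h3 hxy))
  exact ⟨n * m, (Units.map F.toMonoidHom).comp G.subtype,
    (Units.map_injective (f := F.toMonoidHom) hF).comp Subtype.val_injective⟩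

end LTP


/-- Let `R`, `S` be commutative Noetherian local pro-`p` domains of
characteristic `p` with `Krull dim R ≥ 2` and `Krull dim S > 1`. Then every subgroup of
`GL_n(R)` embeds into `GL_m(S)` for some `m`. -/
theorem linear_transfer_char_p (p : ℕ) [Fact p.Prime]
    (R : Type) [CommRing R] [IsDomain R] [IsNoetherianRing R] [IsLocalRing R]
    [IsAdicComplete (IsLocalRing.maximalIdeal R) R]
    [Finite (IsLocalRing.ResidueField R)] [CharP (IsLocalRing.ResidueField R) p]
    [CharP R p]
    (S : Type) [CommRing S] [IsDomain S] [IsNoetherianRing S] [IsLocalRing S]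
    [IsAdicComplete (IsLocalRing.maximalIdeal S) S]
    [Finite (IsLocalRing.ResidueField S)] [CharP (IsLocalRing.ResidueField S) p]
    [CharP S p]
    (hR : 2 ≤ ringKrullDim R) (hS : 1 < ringKrullDim S)
    (n : ℕ) (G : Subgroup (Matrix.GeneralLinearGroup (Fin n) R)) :
    ∃ (m : ℕ) (f : G →* Matrix.GeneralLinearGroup (Fin m) S),
      Function.Injective f := by
  obtain ⟨d, φR, -, hRi, hRf⟩ := ltp_structure p R
  obtain ⟨e, φS, hSd, hSi, -⟩ := ltp_structure p S
  have he : 2 ≤ e := by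
    rw [hSd] at hS
    have : 1 < e := by exact_mod_cast hS
    omega
  haveI : IsDomain (MvPowerSeries (Fin d) (ZMod p)) := NoZeroDivisors.to_isDomain _
  letI : Algebra (MvPowerSeries (Fin d) (ZMod p)) R := φR.toAlgebra
  haveI : FaithfulSMul (MvPowerSeries (Fin d) (ZMod p)) R :=
    (faithfulSMul_iff_algebraMap_injective _ R).2 hRi
  haveI : Module.Finite (MvPowerSeries (Fin d) (ZMod p)) R := hRf
  obtain ⟨f, hf⟩ := ltp_algIndep p d
  obtain ⟨θ, hθ⟩ := ltp_subst d f hf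
  obtain ⟨m, ψ, hψ⟩ := ltp_embed (R := R) θ hθ
  obtain ⟨η, hη⟩ := ltp_into (ZMod p) e he
  refine ltp_final m ((φS.comp η).mapMatrix.comp ψ) ?_ n G
  exact (Matrix.map_injective (hSi.comp hη)).comp hψ
end

section
/- Let p be a prime and set 𝐩 = p if p is odd and 𝐩 = 4 if p = 2. Let D be a (possibly noncommutative) ring that is an algebra over the ring ℤ_p of p-adic integers and is torsion-free as a ℤ_p-module. Then for every a ∈ D with a ∈ 𝐩D and every n ≥ 1 there exists b ∈ 𝐩D with n! · b = aⁿ (and b is unique since D is torsion-free); moreover, for every k there exists N such that for all n ≥ N, every b ∈ D with n! · b = aⁿ satisfies b ∈ p^k D. (In other words, aⁿ/n! lies in 𝐩D and aⁿ/n! → 0 in the p-adic filtration topology.) -/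
/-- `𝐩 = p` for odd `p` and `𝐩 = 4` for `p = 2`. -/
def padicBound (p : ℕ) : ℕ := if p = 2 then 4 else p

theorem factorial_dvd_aux (p : ℕ) [hp : Fact p.Prime] (n m s : ℕ)
    (h : padicValNat p n.factorial + m ≤ s) :
    ∃ c : PadicInt p, (n.factorial : PadicInt p) * ((p : PadicInt p) ^ m * c) =
      (p : PadicInt p) ^ s := by
  obtain ⟨u, hu⟩ := pow_padicValNat_dvd (p := p) (n := n.factorial)
  have hcop : ¬ p ∣ u := by
    intro hd
    obtain ⟨t, rfl⟩ := hd
    apply pow_succ_padicValNat_not_dvd (p := p) (Nat.factorial_ne_zero n)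
    exact ⟨t, by rw [pow_succ, mul_assoc]; exact hu⟩
  have hunit : IsUnit (u : PadicInt p) := by
    rw [PadicInt.isUnit_iff, PadicInt.norm_natCast_eq_one_iff]
    exact (Nat.Prime.coprime_iff_not_dvd hp.out).2 hcop
  obtain ⟨w, hw⟩ := hunit.exists_right_inv
  obtain ⟨r, rfl⟩ := Nat.exists_eq_add_of_le h
  refine ⟨(p : PadicInt p) ^ r * w, ?_⟩
  have hu' : (n.factorial : PadicInt p) =
      (p : PadicInt p) ^ padicValNat p n.factorial * u := by exact_mod_cast hu
  rw [hu', pow_add, pow_add]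
  linear_combination ((p : PadicInt p) ^ padicValNat p n.factorial * (p : PadicInt p) ^ m *
    (p : PadicInt p) ^ r) * hw

theorem pow_div_aux (p : ℕ) [Fact p.Prime] (D : Type) [Ring D] [Algebra (PadicInt p) D]
    (y : D) (e n m : ℕ) (h : padicValNat p n.factorial + m ≤ e * n) :
    ∃ z : D, n.factorial • (p ^ m • z) = (p ^ e • y) ^ n := by
  obtain ⟨c, hc⟩ := factorial_dvd_aux p n m (e * n) h
  refine ⟨c • y ^ n, ?_⟩
  rw [smul_pow, ← pow_mul]
  rw [← Nat.cast_smul_eq_nsmul (PadicInt p) n.factorial, ← Nat.cast_smul_eq_nsmul (PadicInt p),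
    ← Nat.cast_smul_eq_nsmul (PadicInt p), smul_smul, smul_smul]
  push_cast
  rw [← hc, mul_assoc]

/-- Let `D` be a torsion-free `ℤ_p`-algebra and `a ∈ 𝐩D`. Then for every
`n ≥ 1` the element `aⁿ/n!` exists in `𝐩D` (i.e. there is `b ∈ 𝐩D` with `n!·b = aⁿ`), and
`aⁿ/n! → 0` in the `p`-adic filtration topology. -/
theorem pow_div_factorial_mem_and_tendsto_zero (p : ℕ) [Fact p.Prime] (D : Type)
    [Ring D] [Algebra (PadicInt p) D]
    (hTF : ∀ c : PadicInt p, c ≠ 0 → Function.Injective fun x : D => c • x)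
    (a : D) (ha : ∃ y : D, a = padicBound p • y) :
    (∀ n : ℕ, 1 ≤ n → ∃ b : D,
        (∃ y : D, b = padicBound p • y) ∧ n.factorial • b = a ^ n) ∧
      (∀ k : ℕ, ∃ N : ℕ, ∀ n : ℕ, N ≤ n → ∀ b : D,
        n.factorial • b = a ^ n → ∃ y : D, b = p ^ k • y) := by
  have hp : p.Prime := Fact.out
  obtain ⟨y, rfl⟩ := ha
  obtain ⟨e, he, h1, h2⟩ : ∃ e : ℕ, padicBound p = p ^ e ∧
      (∀ n, 1 ≤ n → padicValNat p n.factorial + e ≤ e * n) ∧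
      (∀ k n, 2 * k + 1 ≤ n → padicValNat p n.factorial + k ≤ e * n) := by
    have key := fun n (hn : n ≠ 0) => sub_one_mul_padicValNat_factorial_lt_of_ne_zero p hn
    by_cases h : p = 2
    · subst h
      refine ⟨2, by simp [padicBound], fun n hn => ?_, fun k n hn => ?_⟩
      · have := key n (by omega)
        omega
      · have := key n (by omega)
        omega
    · have h3 : 2 ≤ p - 1 := by have := hp.two_le; omega
      have key2 : ∀ n, n ≠ 0 → 2 * padicValNat p n.factorial < n := fun n hn =>
        lt_of_le_of_lt (Nat.mul_le_mul_right _ h3) (key n hn)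
      refine ⟨1, by simp [padicBound, h], fun n hn => ?_, fun k n hn => ?_⟩
      · have := key2 n (by omega)
        omega
      · have := key2 n (by omega)
        omega
  rw [he]
  refine ⟨fun n hn => ?_, fun k => ⟨2 * k + 1, fun n hn b hb => ?_⟩⟩
  · obtain ⟨z, hz⟩ := pow_div_aux p D y e n e (h1 n hn)
    exact ⟨_, ⟨z, rfl⟩, hz⟩
  · obtain ⟨z, hz⟩ := pow_div_aux p D y e n k (h2 k n hn)
    refine ⟨z, hTF (n.factorial : PadicInt p) (by exact_mod_cast n.factorial_ne_zero) ?_⟩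
    simp only [Nat.cast_smul_eq_nsmul]
    rw [hb, hz]
end

section
/- Let p be a prime and set 𝐩 = p if p is odd and 𝐩 = 4 if p = 2. Let D be a (possibly noncommutative) ring that is an algebra over the ring ℤ_p of p-adic integers, torsion-free as a ℤ_p-module, and Hausdorff and complete with respect to the p-adic filtration p^i D. Let a ∈ 𝐩D, let u : ℕ → D satisfy i! · u_i = aⁱ for all i ≥ 0, and let x ∈ D be the p-adic limit of the partial sums u₀ + u₁ + ⋯ + u_n (i.e. for every k there is N such that x − (u₀ + ⋯ + u_n) ∈ p^k D for all n ≥ N); so x = e^a and x − 1 ∈ 𝐩D. Let c : ℕ → D satisfy i · c_i = (−1)^{i+1} (x − 1)ⁱ for all i ≥ 1. Then a is the p-adic limit of the partial sums c₁ + ⋯ + c_n, i.e. for every k there is N such that a − (c₁ + ⋯ + c_n) ∈ p^k D for all n ≥ N. (In other words, log(e^a) = a.) -/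
/-- The subgroup `p^k D`. -/
def pSub (p : ℕ) (D : Type) [Ring D] (k : ℕ) : AddSubgroup D :=
  (nsmulAddMonoidHom (α := D) (p ^ k)).range

section Helpers
variable {p : ℕ} {D : Type} [Ring D]

theorem mem_pSub {k : ℕ} {w : D} : w ∈ pSub p D k ↔ ∃ y : D, w = p ^ k • y := by
  constructor
  · rintro ⟨y, hy⟩
    exact ⟨y, hy.symm⟩
  · rintro ⟨y, hy⟩
    exact ⟨y, hy.symm⟩

theorem pSub_mul_left {k : ℕ} {w : D} (z : D) (h : w ∈ pSub p D k) : z * w ∈ pSub p D k := by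
  rw [mem_pSub] at *
  obtain ⟨y, rfl⟩ := h
  exact ⟨z * y, by rw [mul_smul_comm]⟩

theorem pSub_mul_right {k : ℕ} {w : D} (z : D) (h : w ∈ pSub p D k) : w * z ∈ pSub p D k := by
  rw [mem_pSub] at *
  obtain ⟨y, rfl⟩ := h
  exact ⟨y * z, by rw [smul_mul_assoc]⟩

theorem pSub_anti {k l : ℕ} (hkl : k ≤ l) {w : D} (h : w ∈ pSub p D l) : w ∈ pSub p D k := by
  rw [mem_pSub] at *
  obtain ⟨y, rfl⟩ := h
  refine ⟨p ^ (l - k) • y, ?_⟩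
  rw [smul_smul, ← pow_add]
  congr 2
  omega

theorem pSub_cop {k m : ℕ} (hm : Nat.Coprime m p) {w : D} (h : m • w ∈ pSub p D k) :
    w ∈ pSub p D k := by
  have hc : Nat.Coprime m (p ^ k) := hm.pow_right k
  have hb := Nat.gcd_eq_gcd_ab m (p ^ k)
  rw [hc.gcd_eq_one] at hb
  have : w = Nat.gcdA m (p ^ k) • (m • w) + p ^ k • (Nat.gcdB m (p ^ k) • w) := by
    rw [← natCast_zsmul w m, ← natCast_zsmul _ (p ^ k), smul_smul, smul_smul, ← add_smul]
    rw [mul_comm (Nat.gcdA _ _), ← hb]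
    simp
  rw [this]
  exact add_mem (zsmul_mem h _) (mem_pSub.2 ⟨_, rfl⟩)

theorem pSub_key [hp : Fact p.Prime]
    (hT : ∀ m : ℕ, m ≠ 0 → ∀ v w : D, m • v = m • w → v = w)
    {m t k : ℕ} (hm : m ≠ 0) {w : D} (h : m • w ∈ pSub p D t)
    (hv : padicValNat p m + k ≤ t) : w ∈ pSub p D k := by
  obtain ⟨m', hm', hmm⟩ : ∃ m', Nat.Coprime m' p ∧ m = p ^ padicValNat p m * m' := by
    obtain ⟨m', h'⟩ := pow_padicValNat_dvd (p := p) (n := m)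
    refine ⟨m', ?_, h'⟩
    rw [Nat.coprime_comm, hp.out.coprime_iff_not_dvd]
    rintro ⟨q, rfl⟩
    apply pow_succ_padicValNat_not_dvd (p := p) hm
    exact ⟨q, by rw [pow_succ, mul_assoc]; exact h'⟩
  apply pSub_cop hm'
  obtain ⟨y, hy⟩ := mem_pSub.1 h
  rw [mem_pSub]
  refine ⟨p ^ (t - padicValNat p m - k) • y, ?_⟩
  apply hT (p ^ padicValNat p m) (pow_ne_zero _ hp.out.ne_zero)
  rw [smul_smul, ← hmm, hy, smul_smul, smul_smul, ← pow_add, ← pow_add]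
  congr 2
  omega

/-- The partial sums below `n` of `N^i u_i` converge to `x^N`. -/
theorem pow_lim
    (hT : ∀ m : ℕ, m ≠ 0 → ∀ v w : D, m • v = m • w → v = w)
    (a : D) (u : ℕ → D) (hu : ∀ i : ℕ, i.factorial • u i = a ^ i) (x : D)
    (hx : ∀ k : ℕ, ∃ N : ℕ, ∀ n : ℕ, N ≤ n →
      x - (∑ i ∈ Finset.range n, u i) ∈ pSub p D k)
    (hu0 : ∀ k : ℕ, ∃ M : ℕ, ∀ i, M ≤ i → u i ∈ pSub p D k) (N : ℕ) :
    ∀ k : ℕ, ∃ B : ℕ, ∀ n : ℕ, B ≤ n →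
      x ^ N - (∑ i ∈ Finset.range n, N ^ i • u i) ∈ pSub p D k := by
  have hmul : ∀ i j : ℕ, u i * u j = (i + j).choose i • u (i + j) := by
    intro i j
    apply hT (i.factorial * j.factorial) (by positivity)
    rw [smul_smul]
    have : i.factorial * j.factorial * (i + j).choose i = (i + j).factorial := by
      rw [← Nat.add_choose_mul_factorial_mul_factorial i j, Nat.choose_symm_add]; ring
    rw [this, hu, ← smul_mul_smul_comm, hu, hu, pow_add]
  have hconv : ∀ N m : ℕ, ∑ k ∈ Finset.range (m + 1), (N ^ k • u k) * u (m - k)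
      = (N + 1) ^ m • u m := by
    intro N m
    rw [add_pow, Finset.sum_smul]
    refine Finset.sum_congr rfl fun k hk => ?_
    have hk' : k + (m - k) = m := by
      have := Finset.mem_range.1 hk
      omega
    rw [smul_mul_assoc, hmul, hk', smul_smul, one_pow, mul_one]
    simp
  induction N with
  | zero =>
    intro k
    refine ⟨1, fun n hn => ?_⟩
    obtain ⟨n, rfl⟩ : ∃ l, n = l + 1 := ⟨n - 1, by omega⟩
    have h0 : u 0 = 1 := by simpa using hu 0
    rw [Finset.sum_range_succ']
    simp [h0]
  | succ N ih =>
    intro k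
    obtain ⟨B, hB⟩ := ih k
    obtain ⟨C, hC⟩ := hx k
    obtain ⟨M, hM⟩ := hu0 k
    refine ⟨B + C + 2 * M, fun n hn => ?_⟩
    have h1 := hB n (by omega)
    have h2 := hC n (by omega)
    set A := ∑ i ∈ Finset.range n, N ^ i • u i with hA
    set E := ∑ i ∈ Finset.range n, u i with hE
    have h3 : A * E - ∑ m ∈ Finset.range n, (N + 1) ^ m • u m ∈ pSub p D k := by
      have e1 : ∑ m ∈ Finset.range n, (N + 1) ^ m • u m =
          ∑ m ∈ Finset.range n, ∑ j ∈ Finset.range (n - m), (N ^ m • u m) * u j := by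
        rw [← Finset.sum_range_diag_flip n (fun i j => (N ^ i • u i) * u j)]
        exact Finset.sum_congr rfl fun m _ => (hconv N m).symm
      rw [e1, hA, Finset.sum_mul, ← Finset.sum_sub_distrib]
      refine sum_mem fun m hm => ?_
      by_cases hmM : M ≤ m
      · refine sub_mem (pSub_mul_right _ (nsmul_mem (hM m hmM) _)) ?_
        exact sum_mem fun j _ => pSub_mul_right _ (nsmul_mem (hM m hmM) _)
      · rw [← Finset.mul_sum, ← mul_sub]
        apply pSub_mul_left
        rw [hE, ← Finset.sum_range_add_sum_Ico _ (Nat.sub_le n m), add_sub_cancel_left]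
        refine sum_mem fun j hj => hM j ?_
        have := Finset.mem_Ico.1 hj
        omega
    have : x ^ (N + 1) - ∑ m ∈ Finset.range n, (N + 1) ^ m • u m =
        (x ^ N - A) * x + A * (x - E)
          + (A * E - ∑ m ∈ Finset.range n, (N + 1) ^ m • u m) := by
      rw [pow_succ]; noncomm_ring
    rw [this]
    exact add_mem (add_mem (pSub_mul_right _ h1) (pSub_mul_left _ h2)) h3

theorem choose_cong (N j : ℕ) :
    ((N + 1 : ℕ) : ℤ) ∣ (j.factorial : ℤ) * ((N.choose j : ℤ) - (-1) ^ j) := by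
  induction j with
  | zero => simp
  | succ j ih =>
    obtain ⟨q, hq⟩ := ih
    have h1 := Nat.add_one_mul_choose_eq N j
    have h2 := Nat.choose_succ_succ N j
    simp only [Nat.succ_eq_add_one] at h1 h2
    rw [h2] at h1
    have h1' : ((N + 1 : ℕ) : ℤ) * (N.choose j) =
      ((N.choose j : ℤ) + N.choose (j + 1)) * (j + 1) := by exact_mod_cast h1
    rw [Nat.factorial_succ]
    refine ⟨j.factorial * (N.choose j) - (j + 1) * q, ?_⟩
    push_cast at *
    rw [pow_succ]
    linear_combination -(j.factorial : ℤ) * h1' - ((j : ℤ) + 1) * hq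

end Helpers

/-- `log (e^a) = a`. Let `D` be a torsion-free `ℤ_p`-algebra, complete
and Hausdorff for the `p`-adic filtration `p^i D`. Let `a ∈ 𝐩D`, let `u i = aⁱ/i!`, and let
`x = e^a` be the `p`-adic limit of the partial sums `u₀ + ⋯ + u_n`; then `x − 1 ∈ 𝐩D`.
If `c i = (−1)^{i+1}(x−1)ⁱ/i` for `i ≥ 1`, then `a` is the `p`-adic limit of the partial
sums `c₁ + ⋯ + c_n`. -/
theorem log_exp_eq (p : ℕ) [Fact p.Prime] (D : Type) [Ring D] [Algebra (PadicInt p) D]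
    (hTF : ∀ c : PadicInt p, c ≠ 0 → Function.Injective fun x : D => c • x)
    [IsAdicComplete (Ideal.span {(p : PadicInt p)}) D]
    (a : D) (ha : ∃ y : D, a = padicBound p • y)
    (u : ℕ → D) (hu : ∀ i : ℕ, i.factorial • u i = a ^ i)
    (x : D)
    (hx : ∀ k : ℕ, ∃ N : ℕ, ∀ n : ℕ, N ≤ n →
      ∃ y : D, x - (∑ i ∈ Finset.range (n + 1), u i) = p ^ k • y)
    (c : ℕ → D)
    (hc : ∀ i : ℕ, 1 ≤ i → i • c i = (-1 : ℤ) ^ (i + 1) • (x - 1) ^ i) :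
    (∃ y : D, x - 1 = padicBound p • y) ∧
      ∀ k : ℕ, ∃ N : ℕ, ∀ n : ℕ, N ≤ n →
        ∃ y : D, a - (∑ i ∈ Finset.Icc 1 n, c i) = p ^ k • y := by
  have hp : p.Prime := Fact.out
  have hp2 := hp.two_le
  have hT : ∀ m : ℕ, m ≠ 0 → ∀ v w : D, m • v = m • w → v = w := by
    intro m hm v w h
    apply hTF (m : PadicInt p) (by exact_mod_cast hm)
    simpa [Nat.cast_smul_eq_nsmul] using h
  obtain ⟨b, hb1, hb, hbv⟩ : ∃ b : ℕ, 1 ≤ b ∧ padicBound p = p ^ b ∧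
      ∀ i, 1 ≤ i → padicValNat p i.factorial + (b + (i - 1) / 2) ≤ b * i := by
    have hlt := fun i (hi : 1 ≤ i) =>
      sub_one_mul_padicValNat_factorial_lt_of_ne_zero p (n := i) (by omega)
    by_cases h2 : p = 2
    · refine ⟨2, by omega, by simp [padicBound, h2], fun i hi => ?_⟩
      have := hlt i hi
      have h3 : p - 1 = 1 := by omega
      rw [h3] at this
      omega
    · refine ⟨1, le_rfl, by simp [padicBound, h2], fun i hi => ?_⟩
      have := hlt i hi
      have h3 : 2 * padicValNat p i.factorial ≤ (p - 1) * padicValNat p i.factorial :=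
        Nat.mul_le_mul_right _ (by omega)
      omega
  rw [hb] at ha ⊢
  obtain ⟨y, hy⟩ := ha
  have hui : ∀ i, 1 ≤ i → u i ∈ pSub p D (b + (i - 1) / 2) := by
    intro i hi
    refine pSub_key hT (Nat.factorial_ne_zero i) (t := b * i) ?_ (hbv i hi)
    rw [hu, mem_pSub]
    exact ⟨y ^ i, by rw [hy, smul_pow, pow_mul]⟩
  have hu0 : ∀ k : ℕ, ∃ M : ℕ, ∀ i, M ≤ i → u i ∈ pSub p D k := by
    intro k
    exact ⟨2 * k + 1, fun i hi => pSub_anti (by omega) (hui i (by omega))⟩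
  have hx' : ∀ k : ℕ, ∃ N : ℕ, ∀ n : ℕ, N ≤ n →
      x - (∑ i ∈ Finset.range n, u i) ∈ pSub p D k := by
    intro k
    obtain ⟨N, hN⟩ := hx k
    refine ⟨N + 1, fun n hn => mem_pSub.2 ?_⟩
    have := hN (n - 1) (by omega)
    rwa [Nat.sub_add_cancel (by omega)] at this
  have hu00 : u 0 = 1 := by simpa using hu 0
  have hu1 : u 1 = a := by simpa using hu 1
  have hx1 : x - 1 ∈ pSub p D b := by
    obtain ⟨N, hN⟩ := hx' b
    have h1 := hN (N + 1) (by omega)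
    rw [Finset.sum_range_succ', hu00] at h1
    have h2 : ∑ i ∈ Finset.range N, u (i + 1) ∈ pSub p D b :=
      sum_mem fun i _ => pSub_anti (by omega) (hui (i + 1) (by omega))
    have := add_mem h1 h2
    convert this using 1
    abel
  refine ⟨mem_pSub.1 hx1, ?_⟩
  have hci : ∀ i, 1 ≤ i → c i ∈ pSub p D (i / 2) := by
    intro i hi
    refine pSub_key hT (show i ≠ 0 by omega) (t := i) ?_ ?_
    · rw [hc i hi]
      apply zsmul_mem
      obtain ⟨z, hz⟩ := mem_pSub.1 (pSub_anti hb1 hx1)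
      rw [mem_pSub]
      exact ⟨z ^ i, by rw [hz, smul_pow, pow_one]⟩
    · have h1 : p ^ padicValNat p i ≤ i := Nat.le_of_dvd (by omega) pow_padicValNat_dvd
      have h2 : 2 ^ padicValNat p i ≤ p ^ padicValNat p i := Nat.pow_le_pow_left hp2 _
      have h3 : 2 * padicValNat p i ≤ 2 ^ padicValNat p i := by
        generalize padicValNat p i = v
        cases v with
        | zero => simp
        | succ v =>
          have := Nat.lt_two_pow_self (n := v)
          rw [pow_succ]
          omega
      omega
  -- the key approximation
  have happ : ∀ n : ℕ, a - ∑ j ∈ Finset.range (p ^ n),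
      ((-1 : ℤ) ^ j * ((p ^ n - 1).choose j : ℤ)) • c (j + 1) ∈ pSub p D n := by
    intro n
    set Q := p ^ n with hQ
    have hQ0 : Q ≠ 0 := pow_ne_zero _ hp.ne_zero
    obtain ⟨Q', hQ'⟩ : ∃ Q', Q = Q' + 1 := ⟨Q - 1, by omega⟩
    have e1 : x ^ Q = 1 + Q • ∑ j ∈ Finset.range Q,
        ((-1 : ℤ) ^ j * ((Q - 1).choose j : ℤ)) • c (j + 1) := by
      have hxz : x = (x - 1) + 1 := by abel
      conv_lhs => rw [hxz]
      rw [(Commute.one_right (x - 1)).add_pow, Finset.sum_range_succ', add_comm]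
      congr 1
      · simp
      · rw [Finset.smul_sum]
        refine Finset.sum_congr rfl fun j _ => ?_
        have h1 := hc (j + 1) (by omega)
        have h2 : (x - 1) ^ (j + 1) = ((-1 : ℤ) ^ j * (j + 1 : ℕ)) • c (j + 1) := by
          rw [mul_smul, natCast_zsmul, h1, smul_smul, ← pow_add]
          have : (-1 : ℤ) ^ (j + (j + 1 + 1)) = 1 := Even.neg_one_pow ⟨j + 1, by ring⟩
          rw [this, one_smul]
        rw [one_pow, mul_one, ← nsmul_eq_mul', h2, ← natCast_zsmul, ← natCast_zsmul,
          smul_smul, smul_smul]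
        congr 1
        have h3 := Nat.add_one_mul_choose_eq Q' j
        have h3' : ((Q' + 1 : ℕ) : ℤ) * (Q'.choose j) =
          ((Q' + 1).choose (j + 1) : ℤ) * ((j + 1 : ℕ) : ℤ) := by exact_mod_cast h3
        rw [hQ', Nat.add_sub_cancel]
        linear_combination -(-1 : ℤ) ^ j * h3'
    obtain ⟨B, hB⟩ := pow_lim hT a u hu x hx' hu0 Q (n + n)
    have h1 := hB (B + 1 + 1) (by omega)
    rw [Finset.sum_range_succ', Finset.sum_range_succ', hu00, zero_add, hu1, e1] at h1
    have h2 : ∑ i ∈ Finset.range B, Q ^ (i + 1 + 1) • u (i + 1 + 1) ∈ pSub p D (n + n) := by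
      refine sum_mem fun i _ => mem_pSub.2 ⟨Q ^ i • u (i + 1 + 1), ?_⟩
      rw [smul_smul, pow_add p n n, ← hQ]
      congr 1
      ring
    obtain ⟨w, hw⟩ := mem_pSub.1 (add_mem h1 h2)
    rw [mem_pSub]
    refine ⟨-w, hT Q hQ0 _ _ ?_⟩
    rw [← hQ, smul_neg, smul_neg, smul_smul, hQ, ← pow_add, ← hw, ← hQ, smul_sub]
    simp only [pow_one, pow_zero, one_smul]
    abel
  intro k
  set M := 2 * k + 1 with hM
  have hcM : ∀ j, M ≤ j → c (j + 1) ∈ pSub p D k := fun j hj =>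
    pSub_anti (by omega) (hci (j + 1) (by omega))
  refine ⟨M, fun m hm => mem_pSub.1 ?_⟩
  obtain ⟨n, hn⟩ : ∃ n, n = k + M + M.factorial := ⟨_, rfl⟩
  have hnQ : M ≤ p ^ n := by
    have := Nat.lt_pow_self (n := n) (a := p) (by omega)
    omega
  have h1 := pSub_anti (show k ≤ n by omega) (happ n)
  have hIcc : ∑ i ∈ Finset.Icc 1 m, c i = ∑ j ∈ Finset.range m, c (j + 1) := by
    rw [Finset.range_eq_Ico, Finset.sum_Ico_add' c 0 m 1]
    rfl
  have h2 : ∑ j ∈ Finset.Ico M m, c (j + 1) ∈ pSub p D k :=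
    sum_mem fun j hj => hcM j (Finset.mem_Ico.1 hj).1
  have h3 : ∑ j ∈ Finset.Ico M (p ^ n),
      ((-1 : ℤ) ^ j * ((p ^ n - 1).choose j : ℤ)) • c (j + 1) ∈ pSub p D k :=
    sum_mem fun j hj => zsmul_mem (hcM j (Finset.mem_Ico.1 hj).1) _
  have h4 : ∑ j ∈ Finset.range M, (((-1 : ℤ) ^ j * ((p ^ n - 1).choose j : ℤ)) • c (j + 1)
      - c (j + 1)) ∈ pSub p D k := by
    refine sum_mem fun j hj => ?_
    have hjM := Finset.mem_range.1 hj
    obtain ⟨q, hq⟩ := choose_cong (p ^ n - 1) j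
    rw [Nat.sub_add_cancel (by omega)] at hq
    refine pSub_key hT (Nat.factorial_ne_zero j) (t := n) ?_ ?_
    · rw [mem_pSub]
      refine ⟨((-1 : ℤ) ^ j * q) • c (j + 1), ?_⟩
      rw [← natCast_zsmul, ← natCast_zsmul, smul_sub, smul_smul, smul_smul, ← sub_smul]
      congr 1
      have h5 : (-1 : ℤ) ^ j * (-1) ^ j = 1 := by
        rw [← pow_add]
        exact Even.neg_one_pow ⟨j, rfl⟩
      linear_combination (-1 : ℤ) ^ j * hq + (j.factorial : ℤ) * h5
    · have h6 : p ^ padicValNat p j.factorial ≤ j.factorial :=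
        Nat.le_of_dvd (Nat.factorial_pos j) pow_padicValNat_dvd
      have h7 := Nat.lt_pow_self (n := padicValNat p j.factorial) (a := p) (by omega)
      have h8 := Nat.factorial_le hjM.le
      omega
  rw [← Finset.sum_range_add_sum_Ico _ hnQ] at h1
  rw [hIcc, ← Finset.sum_range_add_sum_Ico _ hm]
  rw [Finset.sum_sub_distrib] at h4
  have := add_mem (add_mem (sub_mem h1 h2) h3) h4
  convert this using 1
  abel
end

section
/- Let p be a prime and set 𝐩 = p if p is odd and 𝐩 = 4 if p = 2. Let D be a (possibly noncommutative) ring that is an algebra over the ring ℤ_p of p-adic integers, torsion-free as a ℤ_p-module, and Hausdorff and complete with respect to the p-adic filtration p^i D. Let φ be a ℤ_p-algebra automorphism of D such that φ(x) − x ∈ 𝐩D for every x ∈ D. Then there exists a map δ : D → D such that: (i) δ is additive and satisfies the Leibniz rule δ(x y) = δ(x) y + x δ(y) for all x, y ∈ D (δ is a derivation); (ii) δ(x) ∈ 𝐩D for every x; (iii) for every x ∈ D and every i ≥ 1 there exists c ∈ D with i · c = (−1)^{i+1} (φ − id)^{∘ i}(x), and for every x and every k there exists N such that for all n ≥ N and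 every finite sequence c₁, …, c_n ∈ D with i · c_i = (−1)^{i+1} (φ − id)^{∘ i}(x) for each 1 ≤ i ≤ n, one has δ(x) − (c₁ + ⋯ + c_n) ∈ p^k D. (In other words, log φ is well defined as a p-adic limit and is a derivation of D.) -/
theorem aux_unit (p : ℕ) [Fact p.Prime] (i : ℕ) (hi : 1 ≤ i) :
    ∃ v : ℕ, p ^ v ≤ i ∧ ∀ z : PadicInt p, ∃ r : PadicInt p,
      (p : PadicInt p) ^ v * z = i * (r * z) := by
  have hp : p.Prime := Fact.out
  obtain ⟨v, u, hu, h⟩ := Nat.exists_eq_pow_mul_and_not_dvd (n := i) (by omega) p hp.ne_one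
  refine ⟨v, ?_, fun z => ?_⟩
  · exact Nat.le_of_dvd (by omega) ⟨u, h⟩
  · have hU : IsUnit (u : PadicInt p) := by
      by_contra hc
      rw [PadicInt.not_isUnit_iff] at hc
      exact hu (by exact_mod_cast (PadicInt.norm_int_lt_one_iff_dvd (p := p) (u : ℤ)).1 (by exact_mod_cast hc))
    obtain ⟨w, hw⟩ := hU.exists_right_inv
    refine ⟨w, ?_⟩
    rw [h]; push_cast
    linear_combination (-(p : PadicInt p) ^ v * z) * hw

theorem aux_dvd_bound (p : ℕ) : p ∣ padicBound p ∧ padicBound p ∣ p ^ 2 := by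
  unfold padicBound
  split_ifs with h
  · subst h; decide
  · exact ⟨dvd_rfl, dvd_pow_self _ two_ne_zero⟩

theorem aux_A (p : ℕ) [Fact p.Prime] (i : ℕ) (hi : 1 ≤ i) :
    ∃ r : PadicInt p, (padicBound p : PadicInt p) ^ i = i * (padicBound p * r) := by
  have hp : p.Prime := Fact.out
  obtain ⟨v, hv, h⟩ := aux_unit p i hi
  have h1 : v < p ^ v := Nat.lt_pow_self hp.one_lt
  obtain ⟨j, rfl⟩ : ∃ j, i = j + 1 := ⟨i - 1, by omega⟩
  obtain ⟨t, ht⟩ : p ^ v ∣ padicBound p ^ j :=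
    (pow_dvd_pow p (by omega)).trans (pow_dvd_pow_of_dvd (aux_dvd_bound p).1 j)
  obtain ⟨r, hr⟩ := h (t * padicBound p)
  refine ⟨r * t, ?_⟩
  have ht' := congrArg (Nat.cast : ℕ → PadicInt p) ht
  push_cast at ht' hr ⊢
  rw [pow_succ, ht']
  linear_combination hr

theorem aux_B (p : ℕ) [Fact p.Prime] (k i : ℕ) (hi : 2 * k + 3 ≤ i) :
    ∃ r : PadicInt p, (padicBound p : PadicInt p) ^ i = i * (p ^ k * r) := by
  have hp : p.Prime := Fact.out
  obtain ⟨v, hv, h⟩ := aux_unit p i (by omega)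
  have h2 : v + k ≤ i := by
    by_contra hc
    obtain ⟨s, rfl⟩ : ∃ s, i = k + 3 + s := ⟨i - (k + 3), by omega⟩
    have h3 : 2 ^ (s + 3) ≤ p ^ v :=
      (Nat.pow_le_pow_right (by norm_num) (by omega)).trans (Nat.pow_le_pow_left hp.two_le v)
    have h4 : s < 2 ^ s := Nat.lt_two_pow_self
    rw [pow_add] at h3
    omega
  obtain ⟨t, ht⟩ : p ^ (v + k) ∣ padicBound p ^ i :=
    (pow_dvd_pow p h2).trans (pow_dvd_pow_of_dvd (aux_dvd_bound p).1 i)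
  obtain ⟨r, hr⟩ := h (p ^ k * t)
  refine ⟨r * t, ?_⟩
  have ht' := congrArg (Nat.cast : ℕ → PadicInt p) ht
  push_cast at ht' hr ⊢
  rw [ht', pow_add]
  linear_combination hr

theorem aux_choose (p : ℕ) [Fact p.Prime] (k n j : ℕ) (h : k + j ≤ n) :
    (p ^ k : ℤ) ∣ ((p ^ n - 1).choose j : ℤ) - (-1) ^ j := by
  have hp : p.Prime := Fact.out
  have hpos : 0 < p ^ n := pow_pos hp.pos n
  induction j with
  | zero => simp
  | succ j ih =>
    have ih := ih (by omega)
    have e1 : (p ^ n - 1 + 1).choose (j + 1) = (p ^ n - 1).choose j + (p ^ n - 1).choose (j + 1) :=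
      Nat.choose_succ_succ _ _
    have e2 := Nat.add_one_mul_choose_eq (p ^ n - 1) j
    rw [Nat.sub_add_cancel hpos] at e1 e2
    obtain ⟨v, u, hu, hv⟩ := Nat.exists_eq_pow_mul_and_not_dvd (n := j + 1) (by omega) p hp.ne_one
    have hvj : v < j + 1 :=
      (Nat.lt_pow_self hp.one_lt).trans_le (Nat.le_of_dvd (by omega) ⟨u, hv⟩)
    have hd : p ^ k ∣ (p ^ n).choose (j + 1) := by
      have : p ^ v * p ^ k ∣ p ^ v * (u * (p ^ n).choose (j + 1)) := by
        rw [← mul_assoc, ← hv, mul_comm (j + 1), ← e2, ← pow_add]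
        exact Dvd.dvd.mul_right (pow_dvd_pow p (by omega)) _
      have := Nat.dvd_of_mul_dvd_mul_left (pow_pos hp.pos v) this
      exact (Nat.Coprime.pow_left k ((Nat.Prime.coprime_iff_not_dvd hp).2 hu)).dvd_of_dvd_mul_left this
    have hd' : (p ^ k : ℤ) ∣ ((p ^ n).choose (j + 1) : ℤ) := by exact_mod_cast hd
    have := dvd_sub hd' ih
    rw [e1] at this
    obtain ⟨w, hw⟩ := this
    refine ⟨w, ?_⟩
    push_cast at hw
    rw [← hw, pow_succ]
    ring

theorem aux_mem (p : ℕ) [Fact p.Prime] (D : Type) [Ring D] [Algebra (PadicInt p) D]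
    (k : ℕ) (x : D) :
    x ∈ (Ideal.span {(p : PadicInt p)} ^ k • ⊤ : Submodule (PadicInt p) D) ↔
      ∃ y : D, x = p ^ k • y := by
  rw [Ideal.span_singleton_pow, Submodule.ideal_span_singleton_smul,
    Submodule.mem_smul_pointwise_iff_exists]
  constructor
  · rintro ⟨y, -, rfl⟩
    exact ⟨y, by rw [← Nat.cast_smul_eq_nsmul (PadicInt p)]; push_cast; rfl⟩
  · rintro ⟨y, rfl⟩
    exact ⟨y, trivial, by rw [← Nat.cast_smul_eq_nsmul (PadicInt p)]; push_cast; rfl⟩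

/-- `log φ` is a well-defined derivation. Let `D` be a torsion-free
`ℤ_p`-algebra, complete and Hausdorff for the `p`-adic filtration, and let `φ` be a
`ℤ_p`-algebra automorphism of `D` with `(φ − 1)(D) ⊆ 𝐩D`. Then there is a map
`δ : D → D` which is a derivation, has values in `𝐩D`, and is the `p`-adic limit of the
partial sums of `∑ (−1)^{i+1}(φ−1)^{∘i}/i`. -/
theorem log_of_automorphism_is_derivation (p : ℕ) [Fact p.Prime] (D : Type) [Ring D]
    [Algebra (PadicInt p) D]
    (hTF : ∀ c : PadicInt p, c ≠ 0 → Function.Injective fun x : D => c • x)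
    [IsAdicComplete (Ideal.span {(p : PadicInt p)}) D]
    (φ : D ≃ₐ[PadicInt p] D)
    (hφ : ∀ x : D, ∃ y : D, φ x - x = padicBound p • y) :
    ∃ δ : D → D,
      (∀ x y : D, δ (x + y) = δ x + δ y) ∧
      (∀ x y : D, δ (x * y) = δ x * y + x * δ y) ∧
      (∀ x : D, ∃ y : D, δ x = padicBound p • y) ∧
      (∀ x : D, ∀ i : ℕ, 1 ≤ i →
        ∃ c : D, i • c = (-1 : ℤ) ^ (i + 1) • (fun z : D => φ z - z)^[i] x) ∧
      (∀ x : D, ∀ k : ℕ, ∃ N : ℕ, ∀ n : ℕ, N ≤ n → ∀ c : ℕ → D,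
        (∀ i : ℕ, 1 ≤ i → i ≤ n →
          i • c i = (-1 : ℤ) ^ (i + 1) • (fun z : D => φ z - z)^[i] x) →
        ∃ y : D, δ x - (∑ i ∈ Finset.Icc 1 n, c i) = p ^ k • y) := by
  have hp : p.Prime := Fact.out
  have hinj : ∀ i : ℕ, 1 ≤ i → ∀ a b : D, i • a = i • b → a = b := by
    intro i hi a b h
    refine hTF (i : PadicInt p) (by exact_mod_cast (by omega : i ≠ 0)) ?_
    simpa only [Nat.cast_smul_eq_nsmul] using h
  set P : ℕ → Submodule (PadicInt p) D := fun k => Ideal.span {(p : PadicInt p)} ^ k • ⊤ with hP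
  have hmem : ∀ k x, x ∈ P k ↔ ∃ y : D, x = p ^ k • y := fun k x => aux_mem p D k x
  have hhaus : ∀ x : D, (∀ k, x ∈ P k) → x = 0 := by
    intro x hx
    refine IsHausdorff.haus (I := Ideal.span {(p : PadicInt p)}) inferInstance x fun n => ?_
    rw [SModEq.zero]
    exact hx n
  have hPmul : ∀ k (a b : D), a ∈ P k → a * b ∈ P k ∧ b * a ∈ P k := by
    intro k a b ha
    obtain ⟨y, rfl⟩ := (hmem _ _).1 ha
    exact ⟨(hmem _ _).2 ⟨y * b, by simp only [smul_mul_assoc]⟩,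
      (hmem _ _).2 ⟨b * y, by simp only [mul_smul_comm]⟩⟩
  set ψ : D →ₗ[PadicInt p] D := φ.toLinearMap - LinearMap.id with hψ
  have hiter : ∀ i x, (fun z : D => φ z - z)^[i] x = (ψ ^ i) x := by
    intro i x
    rw [Module.End.pow_apply]; rfl
  have hdiv : ∀ i x, ∃ y : D, (ψ ^ i) x = ((padicBound p : PadicInt p) ^ i) • y := by
    intro i
    induction i with
    | zero => intro x; exact ⟨x, by simp⟩
    | succ i ih =>
      intro x
      obtain ⟨y, hy⟩ := ih x
      obtain ⟨z, hz⟩ := hφ y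
      refine ⟨z, ?_⟩
      rw [pow_succ', Module.End.mul_apply, hy, map_smul, pow_succ, mul_smul, Nat.cast_smul_eq_nsmul, ← hz]
      rfl
  have hEex : ∀ i x, ∃ c : D, 1 ≤ i → (i • c = (ψ ^ i) x ∧ ∃ y, c = padicBound p • y) := by
    intro i x
    by_cases hi : 1 ≤ i
    · obtain ⟨y, hy⟩ := hdiv i x
      obtain ⟨r, hr⟩ := aux_A p i hi
      refine ⟨padicBound p • r • y, fun _ => ⟨?_, _, rfl⟩⟩
      rw [hy, hr, mul_smul, mul_smul, Nat.cast_smul_eq_nsmul, Nat.cast_smul_eq_nsmul]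
    · exact ⟨0, fun h => absurd h hi⟩
  choose E hE using hEex
  have hElim : ∀ k i x, 2 * k + 3 ≤ i → E i x ∈ P k := by
    intro k i x hi
    obtain ⟨y, hy⟩ := hdiv i x
    obtain ⟨r, hr⟩ := aux_B p k i hi
    refine (hmem _ _).2 ⟨r • y, hinj i (by omega) _ _ ?_⟩
    rw [(hE i x (by omega)).1, hy, hr, mul_smul, mul_smul, Nat.cast_smul_eq_nsmul, ← Nat.cast_pow,
      Nat.cast_smul_eq_nsmul]
  have hEadd : ∀ i x y, 1 ≤ i → E i (x + y) = E i x + E i y := by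
    intro i x y hi
    apply hinj i hi
    rw [smul_add, (hE i _ hi).1, (hE i _ hi).1, (hE i _ hi).1, map_add]
  set S : ℕ → D → D := fun n x => ∑ i ∈ Finset.Icc 1 n, (-1 : ℤ) ^ (i + 1) • E i x with hS
  have hSadd : ∀ n x y, S n (x + y) = S n x + S n y := by
    intro n x y
    simp only [hS]
    rw [← Finset.sum_add_distrib]
    refine Finset.sum_congr rfl fun i hi => ?_
    rw [hEadd i x y (Finset.mem_Icc.1 hi).1, smul_add]
  have hScau : ∀ k x n, 2 * k + 3 ≤ n → S n x - S (2 * k + 3) x ∈ P k := by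
    intro k x n hn
    induction n, hn using Nat.le_induction with
    | base => simp
    | succ n hn ih =>
      have : S (n + 1) x = S n x + (-1 : ℤ) ^ (n + 1 + 1) • E (n + 1) x := by
        simp only [hS]
        rw [Finset.sum_Icc_succ_top (by omega)]
      rw [this, add_sub_right_comm]
      exact add_mem ih (zsmul_mem (hElim k _ x (by omega)) _)
  have hδex : ∀ x, ∃ d : D, ∀ k, S (2 * k + 3) x - d ∈ P k := by
    intro x
    obtain ⟨L, hL⟩ := IsPrecomplete.prec (I := Ideal.span {(p : PadicInt p)}) (M := D) inferInstance
      (f := fun k => S (2 * k + 3) x) (by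
        intro m n hmn
        refine SModEq.symm ?_
        rw [SModEq.sub_mem]
        exact hScau m x _ (by omega))
    refine ⟨L, fun k => ?_⟩
    have := hL k
    rw [SModEq.sub_mem] at this
    exact this
  choose δ hδ using hδex
  have hδS : ∀ k x n, 2 * k + 3 ≤ n → δ x - S n x ∈ P k := by
    intro k x n hn
    have := neg_mem (add_mem (hScau k x n hn) (hδ x k))
    convert this using 1
    abel
  -- approximation by divided powers of the automorphism
  set q : ℕ → D → D := fun n x =>
    ∑ i ∈ Finset.Icc 1 (p ^ n), (((p ^ n - 1).choose (i - 1) : ℕ) : ℤ) • E i x with hq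
  have hqφ : ∀ n x, (φ.toLinearMap ^ (p ^ n)) x = x + p ^ n • q n x := by
    intro n x
    have h1 : φ.toLinearMap = ψ + 1 := by
      rw [hψ]; ext z; simp
    rw [h1, (Commute.one_right ψ).add_pow, LinearMap.sum_apply, Finset.sum_range_succ', add_comm]
    congr 1
    · simp
    · simp only [hq]
      rw [Finset.smul_sum, Finset.range_eq_Ico, Finset.sum_Ico_add'
        (fun i => (ψ ^ i * 1 ^ (p ^ n - i) * ((p ^ n).choose i : Module.End (PadicInt p) D)) x)]
      refine Finset.sum_congr (by ext; simp) fun i hi => ?_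
      have hi1 := (Finset.mem_Icc.1 hi).1
      obtain ⟨j, rfl⟩ : ∃ j, i = j + 1 := ⟨i - 1, by omega⟩
      have e2 := Nat.add_one_mul_choose_eq (p ^ n - 1) j
      rw [Nat.sub_add_cancel (pow_pos hp.pos n)] at e2
      rw [Nat.add_sub_cancel, natCast_zsmul, ← mul_smul, e2, mul_smul, (hE _ x hi1).1, one_pow, mul_one,
        ← nsmul_eq_mul', LinearMap.smul_apply]
  have hqδ : ∀ k x n, 3 * k + 3 ≤ n → q n x - δ x ∈ P k := by
    intro k x n hn
    have hpn : n < p ^ n := Nat.lt_pow_self hp.one_lt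
    have h1 : q n x - S (p ^ n) x ∈ P k := by
      simp only [hq, hS]
      rw [← Finset.sum_sub_distrib]
      refine sum_mem fun i hi => ?_
      rw [← sub_smul]
      by_cases hik : 2 * k + 3 ≤ i
      · exact zsmul_mem (hElim k i x hik) _
      · have hi1 := (Finset.mem_Icc.1 hi).1
        obtain ⟨j, rfl⟩ : ∃ j, i = j + 1 := ⟨i - 1, by omega⟩
        obtain ⟨w, hw⟩ := aux_choose p k n j (by omega)
        have e : ((((p ^ n - 1).choose (j + 1 - 1) : ℕ) : ℤ) - (-1) ^ (j + 1 + 1)) = (p ^ k : ℕ) * w := by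
          rw [Nat.add_sub_cancel]; push_cast; rw [← hw]; ring
        rw [e, mul_smul, natCast_zsmul]
        exact (hmem _ _).2 ⟨_, rfl⟩
    have h2 := hδS k x (p ^ n) (by omega)
    convert sub_mem h1 h2 using 1
    abel
  have hqmul : ∀ n x y, q n (x * y) = x * q n y + q n x * y + p ^ n • (q n x * q n y) := by
    intro n x y
    apply hinj (p ^ n) (pow_pos hp.pos n)
    have hm : ∀ m : ℕ, (φ.toLinearMap ^ m) (x * y) = (φ.toLinearMap ^ m) x * (φ.toLinearMap ^ m) y := by
      intro m
      induction m with
      | zero => simp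
      | succ m ih => rw [pow_succ', Module.End.mul_apply, ih]; simp
    have h := hm (p ^ n)
    rw [hqφ, hqφ, hqφ, add_mul, mul_add, mul_add, add_assoc] at h
    rw [add_left_cancel h]
    simp only [smul_add, smul_mul_assoc, mul_smul_comm]
    abel
  refine ⟨δ, ?_, ?_, ?_, ?_, ?_⟩
  · intro x y
    rw [← sub_eq_zero]
    refine hhaus _ fun k => ?_
    have h1 := hδ (x + y) k
    rw [hSadd] at h1
    convert sub_mem (add_mem (hδ x k) (hδ y k)) h1 using 1
    abel
  · intro x y
    rw [← sub_eq_zero]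
    refine hhaus _ fun k => ?_
    have h0 := hqδ k (x * y) (3 * k + 3) le_rfl
    have h1 := (hPmul k _ y (hqδ k x (3 * k + 3) le_rfl)).1
    have h2 := (hPmul k _ x (hqδ k y (3 * k + 3) le_rfl)).2
    have h3 : p ^ (3 * k + 3) • (q (3 * k + 3) x * q (3 * k + 3) y) ∈ P k := by
      refine (hmem _ _).2 ⟨p ^ (2 * k + 3) • (q (3 * k + 3) x * q (3 * k + 3) y), ?_⟩
      rw [← mul_smul, ← pow_add]
      congr 2
      omega
    rw [hqmul] at h0
    convert sub_mem (add_mem (add_mem h1 h2) h3) h0 using 1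
    rw [sub_mul, mul_sub]
    abel
  · intro x
    have hb : ∀ i, 1 ≤ i → ∃ y, E i x = padicBound p • y := fun i hi => (hE i x hi).2
    obtain ⟨y, hy⟩ := (hmem _ _).1 (hδS 2 x 7 (by norm_num))
    obtain ⟨t, ht⟩ := (aux_dvd_bound p).2
    choose! F hF using hb
    refine ⟨t • y + ∑ i ∈ Finset.Icc 1 7, (-1 : ℤ) ^ (i + 1) • F i, ?_⟩
    rw [sub_eq_iff_eq_add.1 hy, ht, smul_add, mul_smul, Finset.smul_sum]
    congr 1
    refine Finset.sum_congr rfl fun i hi => ?_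
    rw [hF i (Finset.mem_Icc.1 hi).1, smul_comm]
  · intro x i hi
    refine ⟨(-1 : ℤ) ^ (i + 1) • E i x, ?_⟩
    rw [hiter, smul_comm, (hE i x hi).1]
  · intro x k
    refine ⟨2 * k + 3, fun n hn c hc => ?_⟩
    have hcS : ∑ i ∈ Finset.Icc 1 n, c i = S n x := by
      simp only [hS]
      refine Finset.sum_congr rfl fun i hi => ?_
      obtain ⟨h1, h2⟩ := Finset.mem_Icc.1 hi
      apply hinj i h1
      rw [hc i h1 h2, hiter, smul_comm, (hE i x h1).1]
    rw [hcS]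
    exact (hmem _ _).1 (hδS k x n hn)
end

section
/- Let p be a prime and set 𝐩 = p if p is odd and 𝐩 = 4 if p = 2. Let D be a (possibly noncommutative) ring that is an algebra over the ring ℤ_p of p-adic integers, torsion-free as a ℤ_p-module, and Hausdorff and complete with respect to the p-adic filtration p^i D. Let φ : D → D be a ℤ_p-linear derivation (additive, ℤ_p-linear, and φ(x y) = φ(x) y + x φ(y)) such that φ(x) ∈ 𝐩D for every x ∈ D. Then there exists a ring automorphism ψ of D such that: (i) ψ(x) − x ∈ 𝐩D for every x; (ii) for every x ∈ D and every i ≥ 0 there exists u ∈ D with i! · u = φ^{∘ i}(x), and for every x and every k there exists N such that for all n ≥ N and every finite sequence u₀, …, u_n ∈ D with i! · u_i = φ^{∘ i}(x) for each 0 ≤ i ≤ n, one has ψ(x) − (u₀ + ⋯ + u_n) ∈ p^k D. (In other words, exp(φ) is well defined as a p-adic limit and is an automorphism of D.) -/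
lemma aux_dvd (p : ℕ) [hp : Fact p.Prime] (i : ℕ) (hi : i ≠ 0) :
    ((padicBound p : PadicInt p) * (p : PadicInt p) ^ ((i - 1) / 2)) * (i.factorial : PadicInt p) ∣
      (padicBound p : PadicInt p) ^ i := by
  have hu : IsUnit ((ordCompl[p] i.factorial : ℕ) : PadicInt p) := by
    rw [PadicInt.isUnit_iff, PadicInt.norm_natCast_eq_one_iff]
    exact Nat.coprime_ordCompl hp.out (Nat.factorial_ne_zero i)
  have hv := sub_one_mul_padicValNat_factorial_lt_of_ne_zero p hi
  have hfac : (i.factorial : PadicInt p) =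
      (p : PadicInt p) ^ (padicValNat p i.factorial) *
        ((ordCompl[p] i.factorial : ℕ) : PadicInt p) := by
    rw [← Nat.factorization_def _ hp.out]
    conv_lhs => rw [← Nat.ordProj_mul_ordCompl_eq_self i.factorial p]
    push_cast
    rfl
  rw [hfac, ← mul_assoc, hu.mul_right_dvd]
  generalize padicValNat p i.factorial = v at hv
  have h2 := hp.out.two_le
  unfold padicBound
  split_ifs with h
  · subst h
    have : ((4 : ℕ) : PadicInt 2) = ((2 : ℕ) : PadicInt 2) ^ 2 := by norm_num
    rw [this, ← pow_add, ← pow_add, ← pow_mul]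
    apply pow_dvd_pow
    omega
  · rw [← pow_succ', ← pow_add]
    apply pow_dvd_pow
    have : 2 * v ≤ (p - 1) * v := Nat.mul_le_mul_right _ (by omega)
    omega

lemma mem_filt (p : ℕ) [Fact p.Prime] {D : Type} [Ring D] [Algebra (PadicInt p) D] (k : ℕ) (x : D) :
    x ∈ (Ideal.span {(p : PadicInt p)} ^ k • ⊤ : Submodule (PadicInt p) D) ↔
      ∃ y, x = (p : PadicInt p) ^ k • y := by
  rw [Ideal.span_singleton_pow, Submodule.ideal_span_singleton_smul,
    Submodule.mem_smul_pointwise_iff_exists]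
  constructor
  · rintro ⟨y, -, h⟩; exact ⟨y, h.symm⟩
  · rintro ⟨y, h⟩; exact ⟨y, trivial, h.symm⟩

/-- the `p`-adic filtration -/
noncomputable def filt (p : ℕ) [Fact p.Prime] (D : Type) [Ring D] [Algebra (PadicInt p) D] (k : ℕ) :
    Submodule (PadicInt p) D := Ideal.span {(p : PadicInt p)} ^ k • ⊤

section
variable {p : ℕ} [Fact p.Prime] {D : Type} [Ring D] [Algebra (PadicInt p) D]

lemma mem_filt' {k : ℕ} {x : D} :
    x ∈ filt p D k ↔ ∃ y, x = (p : PadicInt p) ^ k • y := mem_filt p k x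

lemma filt_anti {k l : ℕ} (h : k ≤ l) {x : D} (hx : x ∈ filt p D l) : x ∈ filt p D k := by
  rw [mem_filt'] at *
  obtain ⟨y, rfl⟩ := hx
  exact ⟨(p : PadicInt p) ^ (l - k) • y, by rw [smul_smul, ← pow_add]; congr 2; omega⟩

lemma filt_mul {k l : ℕ} {x y : D} (hx : x ∈ filt p D k) (hy : y ∈ filt p D l) :
    x * y ∈ filt p D (k + l) := by
  rw [mem_filt'] at *
  obtain ⟨a, rfl⟩ := hx
  obtain ⟨b, rfl⟩ := hy
  exact ⟨a * b, by rw [smul_mul_smul_comm, pow_add]⟩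

lemma filt_zero (x : D) : x ∈ filt p D 0 := mem_filt'.2 ⟨x, by simp⟩

lemma filt_haus [IsAdicComplete (Ideal.span {(p : PadicInt p)}) D] {x : D}
    (h : ∀ k, x ∈ filt p D k) : x = 0 :=
  IsHausdorff.haus (I := Ideal.span {(p : PadicInt p)}) inferInstance x
    fun n => SModEq.zero.2 (h n)

lemma filt_tail {f : ℕ → D} (hf : ∀ i, f i ∈ filt p D (i / 2)) {m n : ℕ} (h : m ≤ n) :
    ∑ i ∈ Finset.range n, f i - ∑ i ∈ Finset.range m, f i ∈ filt p D (m / 2) := by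
  rw [← Finset.sum_Ico_eq_sub _ h]
  refine Submodule.sum_mem _ fun i hi => filt_anti ?_ (hf i)
  have := (Finset.mem_Ico.1 hi).1
  omega

lemma filt_lim [IsAdicComplete (Ideal.span {(p : PadicInt p)}) D] (f : ℕ → D)
    (hf : ∀ i, f i ∈ filt p D (i / 2)) :
    ∃ L : D, ∀ k m, 2 * k ≤ m → L - ∑ i ∈ Finset.range m, f i ∈ filt p D k := by
  obtain ⟨L, hL⟩ := IsPrecomplete.prec (I := Ideal.span {(p : PadicInt p)}) inferInstance
    (f := fun n => ∑ i ∈ Finset.range (2 * n), f i) (by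
      intro m n hmn
      refine SModEq.symm (SModEq.sub_mem.2 ?_)
      have := filt_tail hf (m := 2 * m) (n := 2 * n) (by omega)
      rwa [Nat.mul_div_cancel_left _ (by norm_num)] at this)
  refine ⟨L, fun k m hm => ?_⟩
  have h1 : L - ∑ i ∈ Finset.range (2 * k), f i ∈ filt p D k := SModEq.sub_mem.1 (hL k).symm
  have h2 := filt_tail hf hm
  rw [Nat.mul_div_cancel_left _ (by norm_num)] at h2
  have := Submodule.sub_mem _ h1 h2
  simpa using this

lemma filt_bij [IsAdicComplete (Ideal.span {(p : PadicInt p)}) D]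
    (hTF : ∀ c : PadicInt p, c ≠ 0 → Function.Injective fun x : D => c • x)
    (f : D →ₗ[PadicInt p] D) (hf : ∀ x, f x - x ∈ filt p D 1) : Function.Bijective f := by
  have hp0 : (p : PadicInt p) ≠ 0 := by
    exact_mod_cast (Fact.out : p.Prime).ne_zero
  constructor
  · rw [injective_iff_map_eq_zero]
    have key : ∀ k x, f x = 0 → x ∈ filt p D k := by
      intro k
      induction k with
      | zero => intro x _; exact filt_zero x
      | succ k ih =>
        intro x hx
        have h := hf x
        rw [hx, zero_sub, Submodule.neg_mem_iff, mem_filt'] at h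
        obtain ⟨y, rfl⟩ := h
        rw [map_smul] at hx
        have hy : f y = 0 := by
          apply hTF _ (pow_ne_zero 1 hp0)
          simpa using hx
        obtain ⟨z, rfl⟩ := mem_filt'.1 (ih y hy)
        exact mem_filt'.2 ⟨z, by rw [smul_smul, ← pow_add, add_comm]⟩
    exact fun x hx => filt_haus fun k => key k x hx
  · apply surjective_of_mkQ_comp_surjective (I := Ideal.span {(p : PadicInt p)})
    intro q
    obtain ⟨y, rfl⟩ := Submodule.mkQ_surjective _ q
    refine ⟨y, ?_⟩
    have := hf y
    rw [filt, pow_one] at this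
    exact (Submodule.Quotient.eq _).2 this

lemma nat_tf (hTF : ∀ c : PadicInt p, c ≠ 0 → Function.Injective fun x : D => c • x)
    {n : ℕ} (hn : n ≠ 0) {x y : D} (h : n • x = n • y) : x = y := by
  apply hTF (n : PadicInt p) (by exact_mod_cast hn)
  simpa only [Nat.cast_smul_eq_nsmul] using h

/-- Abstract exponential built from a system of divided powers. -/
lemma exp_aux [IsAdicComplete (Ideal.span {(p : PadicInt p)}) D]
    (hTF : ∀ c : PadicInt p, c ≠ 0 → Function.Injective fun x : D => c • x)
    (φ : D →ₗ[PadicInt p] D)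
    (hLeibniz : ∀ x y : D, φ (x * y) = φ x * y + x * φ y)
    (u : ℕ → D →ₗ[PadicInt p] D) (hu0 : ∀ x, u 0 x = x)
    (hu : ∀ i x, (i + 1) • u (i + 1) x = φ (u i x))
    (huf : ∀ i x, u i x ∈ filt p D (i / 2)) (huf1 : u 1 = φ ∧ ∀ x, φ x ∈ filt p D 1) :
    ∃ ψ : D ≃+* D, ∀ x k m, 2 * k ≤ m →
      ψ x - ∑ i ∈ Finset.range m, u i x ∈ filt p D k := by
  choose L hL using fun x => filt_lim (fun i => u i x) fun i => huf i x
  have uniq : ∀ x y, (∀ k, ∃ m, 2 * k ≤ m ∧ y - ∑ i ∈ Finset.range m, u i x ∈ filt p D k) →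
      L x = y := by
    intro x y h
    rw [← sub_eq_zero]
    refine filt_haus (p := p) fun k => ?_
    obtain ⟨m, hm, h⟩ := h k
    simpa using Submodule.sub_mem _ (hL x k m hm) h
  have hmulu : ∀ n x y, u n (x * y) = ∑ ij ∈ Finset.HasAntidiagonal.antidiagonal n, u ij.1 x * u ij.2 y := by
    intro n
    induction n with
    | zero => intro x y; simp [hu0]
    | succ n ih =>
      intro x y
      apply nat_tf hTF (n := n + 1) (by omega)
      rw [hu, ih, map_sum, Finset.smul_sum]
      have e : ∀ ij ∈ Finset.HasAntidiagonal.antidiagonal (n + 1), (n + 1) • (u ij.1 x * u ij.2 y) =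
          (ij.1 • u ij.1 x) * u ij.2 y + u ij.1 x * (ij.2 • u ij.2 y) := by
        intro ij h
        rw [← Finset.HasAntidiagonal.mem_antidiagonal.1 h, add_smul, smul_mul_assoc, mul_smul_comm]
      rw [Finset.sum_congr rfl e, Finset.sum_add_distrib]
      conv_rhs =>
        rw [Finset.Nat.sum_antidiagonal_succ]
        arg 2
        rw [Finset.Nat.sum_antidiagonal_succ']
      simp [hu, hLeibniz, Finset.sum_add_distrib]
  let Ll : D →ₗ[PadicInt p] D :=
    { toFun := L
      map_add' := fun x y => uniq _ _ fun k => ⟨2 * k, le_rfl, by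
        have := Submodule.add_mem _ (hL x k _ le_rfl) (hL y k _ le_rfl)
        simp only [map_add, Finset.sum_add_distrib]
        convert this using 1
        abel⟩
      map_smul' := fun c x => uniq _ _ fun k => ⟨2 * k, le_rfl, by
        have := Submodule.smul_mem _ c (hL x k _ le_rfl)
        simpa [smul_sub, Finset.smul_sum] using this⟩ }
  have hLl : ∀ x, Ll x = L x := fun _ => rfl
  have hmul : ∀ x y, L (x * y) = L x * L y := by
    intro x y
    refine uniq _ _ fun k => ⟨2 * k + 1, by omega, ?_⟩
    set n := 2 * k + 1 with hn
    have e1 : ∑ i ∈ Finset.range n, u i (x * y) =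
        ∑ i ∈ Finset.range n, ∑ j ∈ Finset.range (n - i), u i x * u j y := by
      rw [← Finset.sum_range_diag_flip n fun i j => u i x * u j y]
      refine Finset.sum_congr rfl fun m _ => ?_
      rw [hmulu, Finset.Nat.sum_antidiagonal_eq_sum_range_succ (fun i j => u i x * u j y)]
    have e2 : (∑ i ∈ Finset.range n, u i x) * (∑ i ∈ Finset.range n, u i y) -
        ∑ i ∈ Finset.range n, u i (x * y) ∈ filt p D k := by
      rw [e1, Finset.sum_mul, ← Finset.sum_sub_distrib]
      refine Submodule.sum_mem _ fun i hi => ?_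
      rw [← Finset.mul_sum, ← mul_sub]
      have hi' := Finset.mem_range.1 hi
      refine filt_anti ?_ (filt_mul (huf i x)
        (filt_tail (fun i => huf i y) (Nat.sub_le n i)))
      omega
    have h1 := filt_anti (by omega) (filt_mul (hL x k n (by omega)) (filt_zero (p := p) (L y)))
      (k := k)
    have h2 := filt_anti (by omega) (filt_mul (filt_zero (p := p) (∑ i ∈ Finset.range n, u i x))
      (hL y k n (by omega))) (k := k)
    convert Submodule.add_mem _ (Submodule.add_mem _ h1 h2) e2 using 1
    noncomm_ring
  have hbij : Function.Bijective Ll := by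
    apply filt_bij hTF
    intro x
    have h1 := hL x 1 2 le_rfl
    simp only [Finset.sum_range_succ, Finset.sum_range_zero, hu0, zero_add, huf1.1] at h1
    convert Submodule.add_mem _ h1 (huf1.2 x) using 1
    rw [hLl]
    abel
  let E : D ≃ D := Equiv.ofBijective Ll hbij
  exact ⟨{ E with
    map_mul' := hmul
    map_add' := Ll.map_add }, fun x k m h => hL x k m h⟩
end

/-- `exp φ` is a well-defined automorphism. Let `D` be a torsion-free
`ℤ_p`-algebra, complete and Hausdorff for the `p`-adic filtration, and let `φ` be a
`ℤ_p`-linear derivation of `D` with `φ(D) ⊆ 𝐩D`. Then there is a ring automorphism `ψ` of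
`D` with `(ψ − 1)(D) ⊆ 𝐩D` which is the `p`-adic limit of the partial sums of
`∑ φ^{∘i}/i!`. -/
theorem exp_of_derivation_is_automorphism (p : ℕ) [Fact p.Prime] (D : Type) [Ring D]
    [Algebra (PadicInt p) D]
    (hTF : ∀ c : PadicInt p, c ≠ 0 → Function.Injective fun x : D => c • x)
    [IsAdicComplete (Ideal.span {(p : PadicInt p)}) D]
    (φ : D →ₗ[PadicInt p] D)
    (hLeibniz : ∀ x y : D, φ (x * y) = φ x * y + x * φ y)
    (hφ : ∀ x : D, ∃ y : D, φ x = padicBound p • y) :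
    ∃ ψ : D ≃+* D,
      (∀ x : D, ∃ y : D, ψ x - x = padicBound p • y) ∧
      (∀ x : D, ∀ i : ℕ, ∃ u : D, i.factorial • u = (⇑φ)^[i] x) ∧
      (∀ x : D, ∀ k : ℕ, ∃ N : ℕ, ∀ n : ℕ, N ≤ n → ∀ u : ℕ → D,
        (∀ i : ℕ, i ≤ n → i.factorial • u i = (⇑φ)^[i] x) →
        ∃ y : D, ψ x - (∑ i ∈ Finset.range (n + 1), u i) = p ^ k • y) := by
  have hp : p.Prime := Fact.out
  have hP0 : padicBound p ≠ 0 := by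
    unfold padicBound; split_ifs
    · norm_num
    · exact hp.ne_zero
  have hpP : p ∣ padicBound p := by
    unfold padicBound; split_ifs with h
    · subst h; norm_num
    · exact dvd_rfl
  have hPp : padicBound p ∣ p ^ 2 := by
    unfold padicBound; split_ifs with h
    · subst h; norm_num
    · exact dvd_pow_self _ (by norm_num)
  choose t ht using hφ
  let θ : D →ₗ[PadicInt p] D :=
    { toFun := t
      map_add' := fun x y => nat_tf hTF hP0 (by rw [← ht, map_add, smul_add, ← ht, ← ht])
      map_smul' := fun c x => nat_tf hTF hP0 (by
        rw [← ht, map_smul, ht]; exact smul_comm _ _ _) }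
  have hθ : ∀ x, φ x = (padicBound p : PadicInt p) • θ x := fun x => by
    rw [Nat.cast_smul_eq_nsmul]; exact ht x
  have hφi : ∀ i x, (⇑φ)^[i] x = (padicBound p : PadicInt p) ^ i • (⇑θ)^[i] x := by
    intro i
    induction i with
    | zero => intro x; simp
    | succ i ih =>
      intro x
      rw [Function.iterate_succ_apply', ih, map_smul, hθ, smul_smul, ← pow_succ,
        ← Function.iterate_succ_apply' (⇑θ)]
  choose d hd using fun i : ℕ => fun hi : i ≠ 0 => aux_dvd p i hi
  let c : ℕ → PadicInt p := fun i => if hi : i = 0 then 1 else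
    ((padicBound p : PadicInt p) * (p : PadicInt p) ^ ((i - 1) / 2)) * d i hi
  have hc0 : c 0 = 1 := by simp [c]
  have hci : ∀ i (hi : i ≠ 0), c i =
    ((padicBound p : PadicInt p) * (p : PadicInt p) ^ ((i - 1) / 2)) * d i hi := by
    intro i hi; simp [c, hi]
  have hc : ∀ i, (i.factorial : PadicInt p) * c i = (padicBound p : PadicInt p) ^ i := by
    intro i
    by_cases hi : i = 0
    · subst hi; simp [hc0]
    · rw [hci i hi, hd i hi]; ring
  let u : ℕ → D →ₗ[PadicInt p] D := fun i => c i • θ ^ i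
  have huφ : ∀ i x, i.factorial • u i x = (⇑φ)^[i] x := by
    intro i x
    rw [hφi, ← hc, ← Nat.cast_smul_eq_nsmul (PadicInt p), mul_smul]
    simp [u, Module.End.pow_apply]
  have huP : ∀ i, i ≠ 0 → ∀ x, ∃ y, u i x =
      padicBound p • ((p : PadicInt p) ^ ((i - 1) / 2) • y) := by
    intro i hi x
    refine ⟨d i hi • (θ ^ i) x, ?_⟩
    rw [← Nat.cast_smul_eq_nsmul (PadicInt p), smul_smul, smul_smul, ← hci]
    rfl
  have hu0 : ∀ x, u 0 x = x := fun x => by simp [u, hc0]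
  have hu1 : u 1 = φ := by
    ext x
    simpa using huφ 1 x
  have hpmem : ∀ k (y : D), padicBound p • ((p : PadicInt p) ^ k • y) ∈ filt p D (k + 1) := by
    intro k y
    obtain ⟨q, hq⟩ := hpP
    refine mem_filt'.2 ⟨(q : PadicInt p) • y, ?_⟩
    rw [← Nat.cast_smul_eq_nsmul (PadicInt p), smul_smul, smul_smul, hq]
    congr 1
    push_cast
    ring
  obtain ⟨ψ, hψ⟩ := exp_aux hTF φ hLeibniz u hu0 (by
      intro i x
      apply nat_tf hTF (Nat.factorial_ne_zero i)
      rw [smul_smul, mul_comm, ← Nat.factorial_succ, huφ, ← map_nsmul, huφ,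
        Function.iterate_succ_apply'])
    (by
      intro i x
      by_cases hi : i = 0
      · subst hi; exact filt_zero _
      · obtain ⟨y, hy⟩ := huP i hi x
        rw [hy]
        exact filt_anti (by omega) (hpmem _ y))
    ⟨hu1, fun x => by
      have := hpmem 0 (θ x)
      rwa [pow_zero, one_smul, ← Nat.cast_smul_eq_nsmul (PadicInt p), ← hθ] at this⟩
  refine ⟨ψ, ?_, fun x i => ⟨u i x, huφ i x⟩, ?_⟩
  · intro x
    obtain ⟨y, hy⟩ := mem_filt'.1 (hψ x 2 4 le_rfl)
    obtain ⟨y1, h1⟩ := huP 1 (by norm_num) x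
    obtain ⟨y2, h2⟩ := huP 2 (by norm_num) x
    obtain ⟨y3, h3⟩ := huP 3 (by norm_num) x
    obtain ⟨q, hq⟩ := hPp
    have h4 : (p : PadicInt p) ^ 2 • y = padicBound p • (q • y) := by
      rw [smul_smul, ← hq, ← Nat.cast_smul_eq_nsmul (PadicInt p)]
      push_cast
      rfl
    rw [h4] at hy
    simp only [Finset.sum_range_succ, Finset.sum_range_zero, hu0, zero_add, h1, h2, h3] at hy
    refine ⟨_, (?_ : _ = padicBound p • (q • y + (p : PadicInt p) ^ ((1 - 1) / 2) • y1 +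
      (p : PadicInt p) ^ ((2 - 1) / 2) • y2 + (p : PadicInt p) ^ ((3 - 1) / 2) • y3))⟩
    rw [smul_add, smul_add, smul_add, ← hy]
    abel
  · intro x k
    refine ⟨2 * k, fun n hn v hv => ?_⟩
    have : ∑ i ∈ Finset.range (n + 1), v i = ∑ i ∈ Finset.range (n + 1), u i x := by
      refine Finset.sum_congr rfl fun i hi => nat_tf hTF (Nat.factorial_ne_zero i) ?_
      rw [huφ, hv i (by have := Finset.mem_range.1 hi; omega)]
    rw [this]
    obtain ⟨y, hy⟩ := mem_filt'.1 (hψ x k (n + 1) (by omega))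
    refine ⟨y, ?_⟩
    rw [hy, ← Nat.cast_smul_eq_nsmul (PadicInt p)]
    push_cast
    rfl
end
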